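/- arXiv:2406.13780 — 2 statements merged into one kernel-verified Lean document; each statement's English description precedes it below -/
import Mathlib

section
/- For every integer k ≥ 3 there exist constants C > 0 and N such that for every integer n > N, f_{C_{2k},K_3}(n) ≤ C · n^{k/(2k-1)} · (log n)^{3k/(2k-1)}. -/
/-!
A triangle-free graph on `n` vertices in which every set of `s = O(n^(k/(2k-1)) (log n)^(3k/(2k-1)))`
vertices spans a `C_{2k}` is found by the probabilistic method with alterations.

Take the union of two independent random graphs of density `1/M`, with `M` of order `k √n`: every
pair `e` gets a uniform colour `w e ∈ Fin M × Fin M`, and is an edge of the first (second) round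
when its first (second) coordinate is a fixed element `z`. From this graph delete all edges of a
maximal family of edge-disjoint triangles; what remains is triangle-free
(`exists_deletion`, `delGraph_triangleFree`). It is to be shown that, for every `s`-set `S`, some
`C_{2k}` inside `S` survives.

*Many cycles before the deletion.* With high probability the first round has more than `r` edges
between any two disjoint sets of sizes `a` and `b` (`bad1`). So, after removing any `r` edges, the
first round restricted to `S` is still an expander on most of `S` (`exists_expander`), and growing
layers of sizes `1, q, q², …` from each vertex of this part gives at least `s q^(2k-1) / 4` pairs in
`S` joined by a path of length `2k - 1` (`many_pairs`). If the second round contains one of these pairs, it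
closes a `C_{2k}`; failing this for some choice of the `r` removed edges is so unlikely that a
union bound over the choices is affordable (`bad2`). Hence a greedy choice gives `4t` edge-disjoint
copies of `C_{2k}` in `S` (`exists_packing`).

*Few of them are destroyed.* A deleted triangle meeting a copy in an edge has two or three vertices
in `S`. Fix a packing as a function of the edges inside `S`. The two edges leaving `S` of a triangle
of the first kind are independent of everything inside `S`, so with very high probability fewer than
`t` edge-disjoint triangles of this kind contain an edge of the packing (`bad3`), and each of them
destroys one copy. There are also fewer than `t` edge-disjoint triangles inside `S`
(`bad4`), each destroying at most three copies. In total fewer than `4t` copies die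
(`survive`, `good_copy`).

For a given `S` each of the three failure probabilities is at most `exp (-2 s L)`, where
`n ≤ exp L`, so a union bound over the at most `exp (s L)` sets `S` concludes
(`minFIndep_le_of_params`). The bound follows with `L = ⌈log n⌉`, `q` of order
`(k² M L²)^(1/(2k-1))`, `a` of order `k² M L`, `s = 4a(q+2)` and `t = 2sL` (`choice_of_params`).
-/

/-- `G` contains a copy of `F` as a (not necessarily induced) subgraph, i.e. there is an
injective graph homomorphism from `F` to `G`. -/
def ContainsCopy {α β : Type*} (F : SimpleGraph α) (G : SimpleGraph β) : Prop :=
  ∃ f : α → β, Function.Injective f ∧ ∀ ⦃a b : α⦄, F.Adj a b → G.Adj (f a) (f b)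

/-- The `F`-independence number of a finite graph `G`: the maximum size of a set `S` of
vertices such that the induced subgraph `G[S]` contains no copy of `F`. -/
noncomputable def fIndepNum {α β : Type*} [Fintype β] (F : SimpleGraph α) (G : SimpleGraph β) :
    ℕ :=
  sSup {k | ∃ S : Finset β, S.card = k ∧ ¬ ContainsCopy F (G.induce (S : Set β))}

/-- `f_{F,H}(n)`: the minimum of the `F`-independence number over all `H`-free graphs on
`n` vertices. -/
noncomputable def minFIndep {α γ : Type*} (F : SimpleGraph α) (H : SimpleGraph γ) (n : ℕ) : ℕ :=
  sInf {k | ∃ G : SimpleGraph (Fin n), ¬ ContainsCopy H G ∧ fIndepNum F G = k}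

/-- The Turán number `ex(n, F)`: the maximum number of edges of an `F`-free graph on `n`
vertices. -/
noncomputable def turanNum (n : ℕ) {α : Type*} (F : SimpleGraph α) : ℕ :=
  sSup {k | ∃ G : SimpleGraph (Fin n), ¬ ContainsCopy F G ∧ k = Nat.card G.edgeSet}


namespace Cycle

open Finset

/-! ### Counting colourings -/

/-- Independence: for a uniform colouring `w`, an event `Q` not depending on the colours in `A` is
independent of the event that all colours in `A` lie in `W`. -/
theorem indep {E α : Type*} [Fintype E] [DecidableEq E] [Fintype α] [DecidableEq α]
    (W : Finset α) (A : Finset E) (Q : (E → α) → Prop) [DecidablePred Q]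
    (hQ : ∀ w w' : E → α, (∀ e ∉ A, w e = w' e) → Q w → Q w') :
    #{w : E → α | Q w ∧ ∀ e ∈ A, w e ∈ W} * Fintype.card α ^ #A ≤
      #{w : E → α | Q w} * #W ^ #A := by
  classical
  have key := Fintype.card_le_of_injective
    (fun x : {w : E → α // Q w ∧ ∀ e ∈ A, w e ∈ W} × (A → α) =>
      ((⟨fun e => if h : e ∈ A then x.2 ⟨e, h⟩ else x.1.1 e,
          hQ x.1.1 _ (fun e he => by simp [he]) x.1.2.1⟩,
        fun e => ⟨x.1.1 e, x.1.2.2 e e.2⟩) : {w : E → α // Q w} × (A → W))) (by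
      rintro ⟨⟨w, hw⟩, g⟩ ⟨⟨w', hw'⟩, g'⟩ h
      simp only [Prod.mk.injEq, Subtype.mk.injEq] at h
      obtain ⟨h1, h2⟩ := h
      have hg : g = g' := by
        funext e
        have := congrFun h1 e
        simpa using this
      have hw : w = w' := by
        funext e
        by_cases he : e ∈ A
        · have := congrFun h2 ⟨e, he⟩
          simpa using this
        · have := congrFun h1 e
          simpa [he] using this
      subst hg hw
      rfl)
  simpa [Fintype.card_subtype] using key

/-- A union bound over a random family of configurations. Whether `i` belongs to `conf w` is
decided by the colours outside `A i`; thus, given that `i ∈ conf w`, the `m` colours in `A i` are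
still uniform, and the number of `w` for which some `i ∈ conf w` has all its colours in `W` is
governed by the maximum `K` of `#(conf w)` rather than by the number of all indices. -/
theorem union_conf {E α ι : Type*} [Fintype E] [DecidableEq E] [Fintype α] [DecidableEq α]
    [Fintype ι] [DecidableEq ι]
    (W : Finset α) (A : ι → Finset E) (conf : (E → α) → Finset ι) (m K : ℕ)
    (hA : ∀ w, ∀ i ∈ conf w, #(A i) = m) (hK : ∀ w, #(conf w) ≤ K)
    (hconf : ∀ i w w', (∀ e ∉ A i, w e = w' e) → i ∈ conf w → i ∈ conf w') :
    #{w : E → α | ∃ i ∈ conf w, ∀ e ∈ A i, w e ∈ W} * Fintype.card α ^ m ≤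
      K * #W ^ m * Fintype.card (E → α) := by
  classical
  have h1 : #{w : E → α | ∃ i ∈ conf w, ∀ e ∈ A i, w e ∈ W} ≤
      ∑ i, #{w : E → α | i ∈ conf w ∧ ∀ e ∈ A i, w e ∈ W} := by
    refine le_trans (card_le_card ?_) card_biUnion_le
    intro w
    simp
  have h2 : ∀ i : ι, #{w : E → α | i ∈ conf w ∧ ∀ e ∈ A i, w e ∈ W} * Fintype.card α ^ m ≤
      #{w : E → α | i ∈ conf w} * #W ^ m := by
    intro i
    by_cases h : ∃ w, i ∈ conf w
    · obtain ⟨w, hw⟩ := h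
      rw [← hA w i hw]
      exact indep W (A i) _ (hconf i)
    · push Not at h
      simp [h]
  have h3 : ∑ i, #{w : E → α | i ∈ conf w} = ∑ w, #(conf w) := by
    have := Finset.sum_card_bipartiteAbove_eq_sum_card_bipartiteBelow
      (s := (univ : Finset ι)) (t := (univ : Finset (E → α))) (fun i w => i ∈ conf w)
    simpa [bipartiteAbove, bipartiteBelow] using this
  calc _ ≤ (∑ i, #{w : E → α | i ∈ conf w ∧ ∀ e ∈ A i, w e ∈ W}) * Fintype.card α ^ m := by gcongr
    _ ≤ ∑ i, #{w : E → α | i ∈ conf w} * #W ^ m := by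
        rw [sum_mul]; exact sum_le_sum fun i _ => h2 i
    _ = (∑ w, #(conf w)) * #W ^ m := by rw [← sum_mul, h3]
    _ ≤ (∑ w : E → α, K) * #W ^ m := by gcongr; exact hK _
    _ = _ := by rw [sum_const, smul_eq_mul, card_univ]; ring

/-- The colour `z` is missed by the whole set `A` with probability
`(1 - 1/M)^#A ≤ exp (-#A / M)`, where `M` is the number of colours. -/
theorem avoid {E α : Type*} [Fintype E] [DecidableEq E] [Fintype α] [DecidableEq α] (z : α)
    (A : Finset E) :
    (#{w : E → α | ∀ e ∈ A, w e ≠ z} : ℝ) ≤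
      Real.exp (-(#A : ℝ) / Fintype.card α) * Fintype.card (E → α) := by
  have h := indep (univ.erase z) A (fun _ : E → α => True) (fun _ _ _ _ => trivial)
  have hM : 0 < Fintype.card α := Fintype.card_pos_iff.mpr ⟨z⟩
  have hM' : (0 : ℝ) < Fintype.card α := by exact_mod_cast hM
  have h' : (#{w : E → α | ∀ e ∈ A, w e ≠ z} : ℝ) * (Fintype.card α : ℝ) ^ #A ≤
      Fintype.card (E → α) * ((Fintype.card α : ℝ) - 1) ^ #A := by
    have : ((Fintype.card α - 1 : ℕ) : ℝ) = (Fintype.card α : ℝ) - 1 := by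
      rw [Nat.cast_sub hM]; simp
    rw [← this]
    have h2 : #{w : E → α | ∀ e ∈ A, w e ≠ z} * Fintype.card α ^ #A ≤
      Fintype.card (E → α) * (Fintype.card α - 1) ^ #A := by
      simpa [card_erase_of_mem] using h
    exact_mod_cast h2
  have h3 : ((Fintype.card α : ℝ) - 1) ^ #A ≤
      (Real.exp (-(#A : ℝ) / Fintype.card α)) * (Fintype.card α : ℝ) ^ #A := by
    have : (Fintype.card α : ℝ) - 1 ≤ Real.exp (-1 / Fintype.card α) * Fintype.card α := by
      have := Real.add_one_le_exp (-1 / (Fintype.card α : ℝ))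
      calc (Fintype.card α : ℝ) - 1 = (-1 / (Fintype.card α : ℝ) + 1) * Fintype.card α := by
            field_simp; ring
        _ ≤ _ := by gcongr
    calc ((Fintype.card α : ℝ) - 1) ^ #A ≤
        (Real.exp (-1 / Fintype.card α) * Fintype.card α) ^ #A := by
          apply pow_le_pow_left₀ _ this
          have : (1 : ℝ) ≤ Fintype.card α := by exact_mod_cast hM
          linarith
      _ = _ := by
          rw [mul_pow, ← Real.exp_nat_mul]
          congr 2
          ring
  have hp : (0 : ℝ) < (Fintype.card α : ℝ) ^ #A := by positivity
  refine le_of_mul_le_mul_right (h'.trans ?_) hp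
  calc _ ≤ (Fintype.card (E → α) : ℝ) * ((Real.exp (-(#A : ℝ) / Fintype.card α)) * (Fintype.card α : ℝ) ^ #A) := by gcongr
    _ = _ := by ring

/-- Lower tail of the binomial distribution: the colour `z` appears at most `r` times on `A` with
probability at most `exp (r - #A / (2M))`, where `M` is the number of colours. -/
theorem chernoff {E α : Type*} [Fintype E] [DecidableEq E] [Fintype α] [DecidableEq α] (z : α)
    (A : Finset E) (r : ℕ) :
    (#{w : E → α | #{e ∈ A | w e = z} ≤ r} : ℝ) ≤
      Real.exp (r - (#A : ℝ) / (2 * Fintype.card α)) * Fintype.card (E → α) := by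
  have hM : 0 < Fintype.card α := Fintype.card_pos_iff.mpr ⟨z⟩
  have hM' : (1 : ℝ) ≤ Fintype.card α := by exact_mod_cast hM
  -- exponential moment with base `1/2`
  have hsum : ∑ w : E → α, ((1 : ℝ) / 2) ^ #{e ∈ A | w e = z} =
      ((Fintype.card α : ℝ) - 1 / 2) ^ #A * (Fintype.card α : ℝ) ^ #Aᶜ := by
    have h := Finset.prod_univ_sum (fun _ : E => (univ : Finset α))
      (fun e c => if e ∈ A ∧ c = z then (1 : ℝ) / 2 else 1)
    rw [Fintype.piFinset_univ] at h
    have h2 : ∀ w : E → α, ∏ e, (if e ∈ A ∧ w e = z then (1 : ℝ) / 2 else 1) =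
        ((1 : ℝ) / 2) ^ #{e ∈ A | w e = z} := by
      intro w
      rw [prod_ite]
      simp only [prod_const, one_pow, mul_one]
      congr 2
      ext e; simp
    simp_rw [h2] at h
    rw [← h]
    have h3 : ∀ e : E, ∑ c : α, (if e ∈ A ∧ c = z then (1 : ℝ) / 2 else 1) =
        if e ∈ A then (Fintype.card α : ℝ) - 1 / 2 else Fintype.card α := by
      intro e
      by_cases he : e ∈ A
      · simp only [he, true_and, if_true]
        rw [← add_sum_erase _ _ (mem_univ z)]
        rw [sum_congr rfl (g := fun _ => (1 : ℝ)) (fun c hc => by simp [ne_of_mem_erase hc])]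
        simp [card_erase_of_mem, Nat.cast_sub hM]
        ring
      · simp [he]
    simp_rw [h3]
    rw [prod_ite]
    simp only [prod_const]
    congr 3
    · ext e; simp
    · ext e; simp
  have h1 : (#{w : E → α | #{e ∈ A | w e = z} ≤ r} : ℝ) * ((1 : ℝ) / 2) ^ r ≤
      ∑ w : E → α, ((1 : ℝ) / 2) ^ #{e ∈ A | w e = z} := by
    rw [← nsmul_eq_mul]
    refine (card_nsmul_le_sum _ (fun w : E → α => ((1 : ℝ) / 2) ^ #{e ∈ A | w e = z}) _ ?_).trans ?_
    · intro w hw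
      simp only [mem_filter, mem_univ, true_and] at hw
      exact pow_le_pow_of_le_one (by norm_num) (by norm_num) hw
    · exact sum_le_sum_of_subset_of_nonneg (subset_univ _) (fun _ _ _ => by positivity)
  have h4 : ((Fintype.card α : ℝ) - 1 / 2) ^ #A ≤
      Real.exp (-((#A : ℝ) / (2 * Fintype.card α))) * (Fintype.card α : ℝ) ^ #A := by
    have : (Fintype.card α : ℝ) - 1 / 2 ≤
        Real.exp (-(1 / (2 * Fintype.card α))) * Fintype.card α := by
      have := Real.add_one_le_exp (-(1 / (2 * (Fintype.card α : ℝ))))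
      calc (Fintype.card α : ℝ) - 1 / 2 =
            (-(1 / (2 * (Fintype.card α : ℝ))) + 1) * Fintype.card α := by
            field_simp; ring
        _ ≤ _ := by gcongr
    calc ((Fintype.card α : ℝ) - 1 / 2) ^ #A ≤
        (Real.exp (-(1 / (2 * Fintype.card α))) * Fintype.card α) ^ #A := by
          apply pow_le_pow_left₀ _ this
          linarith
      _ = _ := by
          rw [mul_pow, ← Real.exp_nat_mul]
          congr 2
          ring
  have h5 : Real.exp (-(r : ℝ)) ≤ ((1 : ℝ) / 2) ^ r := by
    have : Real.exp (-1) ≤ 1 / 2 := by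
      rw [Real.exp_neg, one_div]
      apply inv_anti₀ (by norm_num)
      have := Real.add_one_le_exp 1
      linarith
    calc Real.exp (-(r : ℝ)) = Real.exp (-1) ^ r := by rw [← Real.exp_nat_mul]; congr 1; ring
      _ ≤ _ := by gcongr
  have h6 : (Fintype.card α : ℝ) ^ #A * (Fintype.card α : ℝ) ^ #Aᶜ = Fintype.card (E → α) := by
    rw [← pow_add, card_add_card_compl, Fintype.card_fun]; push_cast; rfl
  have h7 : (#{w : E → α | #{e ∈ A | w e = z} ≤ r} : ℝ) * Real.exp (-(r : ℝ)) ≤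
      Real.exp (-((#A : ℝ) / (2 * Fintype.card α))) * Fintype.card (E → α) := by
    calc _ ≤ (#{w : E → α | #{e ∈ A | w e = z} ≤ r} : ℝ) * ((1 : ℝ) / 2) ^ r := by gcongr
      _ ≤ _ := h1
      _ = _ := hsum
      _ ≤ (Real.exp (-((#A : ℝ) / (2 * Fintype.card α))) * (Fintype.card α : ℝ) ^ #A) *
          (Fintype.card α : ℝ) ^ #Aᶜ := by gcongr
      _ = _ := by rw [mul_assoc, h6]
  refine le_of_mul_le_mul_right (h7.trans_eq ?_) (Real.exp_pos (-(r : ℝ)))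
  rw [mul_right_comm, ← Real.exp_add]
  congr 2; ring

/-! ### Expansion and paths -/

/-- If all disjoint `A`, `B ⊆ S` with `#A ≥ a` and `#B ≥ b` are joined by an edge, and `S` is large
enough, then deleting at most `a` vertices of `S` leaves a set in which every nonempty set of at
most `a` vertices expands by a factor larger than `d`. -/
theorem exists_expander {V : Type*} [Fintype V] [DecidableEq V] (H : SimpleGraph V)
    [DecidableRel H.Adj] (S : Finset V) (a b d : ℕ)
    (hs : 2 * a * (d + 1) + b ≤ #S)
    (hJ : ∀ A B : Finset V, A ⊆ S → B ⊆ S → Disjoint A B → a ≤ #A → b ≤ #B →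
      ∃ x ∈ A, ∃ y ∈ B, H.Adj x y) :
    ∃ S' ⊆ S, #S ≤ #S' + a ∧ ∀ A ⊆ S', A.Nonempty → #A ≤ a →
      d * #A < #{y ∈ S' \ A | ∃ x ∈ A, H.Adj x y} := by
  classical
  -- the set to delete is a largest non-expanding set of size at most `2 * a`
  let fam : Finset (Finset V) := {U ∈ S.powerset | #U ≤ 2 * a ∧
    #{y ∈ S \ U | ∃ x ∈ U, H.Adj x y} ≤ d * #U}
  obtain ⟨U, hU, hmax⟩ := fam.exists_max_image Finset.card ⟨∅, by simp [fam]⟩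
  simp only [fam, mem_filter, mem_powerset] at hU hmax
  obtain ⟨hUS, hU2, hUd⟩ := hU
  -- if `#U ≥ a`, then `U` would be joined to the many vertices that are neither in `U` nor adjacent to `U`
  have hUa : #U < a := by
    by_contra hcon
    push Not at hcon
    have hB : b ≤ #((S \ U) \ {y ∈ S \ U | ∃ x ∈ U, H.Adj x y}) := by
      have h1 := le_card_sdiff {y ∈ S \ U | ∃ x ∈ U, H.Adj x y} (S \ U)
      have h2 := le_card_sdiff U S
      have h3 : d * #U ≤ d * (2 * a) := by gcongr
      have h4 : 2 * a * (d + 1) = d * (2 * a) + 2 * a := by ring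
      omega
    obtain ⟨x, hx, y, hy, hxy⟩ := hJ U _ hUS (sdiff_subset.trans sdiff_subset)
      (by
        rw [disjoint_left]; intro x hx; simp [hx]) hcon hB
    simp only [mem_sdiff, mem_filter, not_and, not_exists] at hy
    exact hy.2 hy.1 x hx hxy
  refine ⟨S \ U, sdiff_subset, ?_, ?_⟩
  · have h2 := le_card_sdiff U S
    omega
  · intro A hA hne hAa
    by_contra hcon
    push Not at hcon
    have hdisj : Disjoint U A := by
      rw [disjoint_right]; intro x hx; exact (mem_sdiff.mp (hA hx)).2
    have hc : #(U ∪ A) = #U + #A := card_union_of_disjoint hdisj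
    -- a non-expanding set outside `U` could be added to `U`
    have := hmax (U ∪ A) ⟨union_subset hUS (hA.trans sdiff_subset), by omega, by
      rw [hc, mul_add]
      refine le_trans ?_ (add_le_add hUd hcon)
      refine le_trans (card_le_card ?_) (card_union_le _ _)
      intro y hy
      simp only [mem_filter, mem_sdiff, mem_union, not_or] at hy ⊢
      obtain ⟨⟨hyS, hyU, hyA⟩, x, hx, hxy⟩ := hy
      rcases hx with hx | hx
      · exact Or.inl ⟨⟨hyS, hyU⟩, x, hx, hxy⟩
      · exact Or.inr ⟨⟨⟨hyS, hyU⟩, hyA⟩, x, hx, hxy⟩⟩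
    have := hne.card_pos
    omega

/-- There is a path of length `j` from `x` to `y` in `H` with all its vertices in `U`. The path is
`c 0, …, c j`; the values of `c` beyond `j` are irrelevant. -/
def HasPath {V : Type*} (H : SimpleGraph V) (U : Finset V) (j : ℕ) (x y : V) : Prop :=
  ∃ c : ℕ → V, Set.InjOn c (Set.Iic j) ∧ c 0 = x ∧ c j = y ∧ (∀ i ≤ j, c i ∈ U) ∧
    ∀ i < j, H.Adj (c i) (c (i + 1))

/-- Growing disjoint layers from `x` in an expander: the `j`-th layer `N` has exactly `q ^ j`
vertices, each reached by a path of length `j`, and `U` is the union of the layers so far. The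
expansion factor exceeds `q + 1`, so that `q * #N` new vertices remain after discarding `U`. -/
theorem layers {V : Type*} [Fintype V] [DecidableEq V] (H : SimpleGraph V)
    [DecidableRel H.Adj] (S' : Finset V) (a q : ℕ) (hq : 2 ≤ q)
    (hexp : ∀ A ⊆ S', A.Nonempty → #A ≤ a →
      (q + 1) * #A < #{y ∈ S' \ A | ∃ x ∈ A, H.Adj x y}) (x : V) (hx : x ∈ S') (j : ℕ)
    (hj : ∀ i < j, q ^ i ≤ a) :
    ∃ N U : Finset V, N ⊆ U ∧ U ⊆ S' ∧ #N = q ^ j ∧ #U ≤ 2 * q ^ j ∧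
      ∀ y ∈ N, HasPath H U j x y := by
  induction j with
  | zero =>
    refine ⟨{x}, {x}, Subset.rfl, by simpa, by simp, by simp, ?_⟩
    intro y hy
    rw [mem_singleton] at hy
    subst hy
    refine ⟨fun _ => y, ?_, rfl, rfl, by simp, by simp⟩
    intro i hi j hj _
    simp at hi hj
    omega
  | succ j ih =>
    obtain ⟨N, U, hNU, hUS, hN, hU, hpath⟩ := ih (fun i hi => hj i (by omega))
    have hqpos : 0 < q ^ j := by positivity
    have h1 := hexp N (hNU.trans hUS) (card_pos.mp (by omega)) (by rw [hN]; exact hj j (by omega))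
    rw [hN] at h1
    have h2 : q ^ (j + 1) ≤ #({y ∈ S' \ N | ∃ x ∈ N, H.Adj x y} \ (U \ N)) := by
      have h3 := le_card_sdiff (U \ N) {y ∈ S' \ N | ∃ x ∈ N, H.Adj x y}
      have h4 := card_sdiff_add_card_eq_card hNU
      have h5 : (q + 1) * q ^ j = q ^ (j + 1) + q ^ j := by ring
      omega
    obtain ⟨N', hN', hN'c⟩ := exists_subset_card_eq h2
    have hN'' : ∀ y ∈ N', y ∈ S' ∧ y ∉ U ∧ ∃ x ∈ N, H.Adj x y := by
      intro y hy
      have := hN' hy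
      simp only [mem_sdiff, mem_filter, not_and, not_not] at this
      refine ⟨this.1.1.1, fun hyU => this.1.1.2 (this.2 hyU), this.1.2⟩
    refine ⟨N', U ∪ N', subset_union_right, union_subset hUS fun y hy => (hN'' y hy).1, hN'c, ?_, ?_⟩
    · have := card_union_le U N'
      have h6 : 2 * q ^ j ≤ q ^ (j + 1) := by
        rw [pow_succ, mul_comm]; gcongr
      omega
    · intro y hy
      obtain ⟨-, hyU, z, hz, hzy⟩ := hN'' y hy
      obtain ⟨c, hinj, h0, hcj, hcU, hadj⟩ := hpath z hz
      have hne : ∀ i ≤ j, c i ≠ y := fun i hi h => hyU (h ▸ hcU i hi)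
      refine ⟨fun i => if i ≤ j then c i else y, ?_, by simp [h0], by simp, ?_, ?_⟩
      · intro i hi l hl h
        simp only [Set.mem_Iic] at hi hl
        by_cases h1 : i ≤ j <;> by_cases h2 : l ≤ j <;> simp only [h1, h2, if_true, if_false] at h
        · exact hinj h1 h2 h
        · exact absurd h (hne i h1)
        · exact absurd h.symm (hne l h2)
        · omega
      · intro i hi
        by_cases h1 : i ≤ j
        · simp [h1, hcU i h1]
        · simp [h1, hy]
      · intro i hi
        by_cases h1 : i < j
        · have h3 : i + 1 ≤ j := h1
          simp only [h1.le, h3, if_true]; exact hadj i h1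
        · have : i = j := by omega
          subst this
          simp [hcj, hzy]

/-- A path of length `2k - 1` whose ends are adjacent is a copy of `C_{2k}`. -/
theorem closing {V : Type*} (k : ℕ) (hk : 2 ≤ k) (H : SimpleGraph V) (U : Finset V) (x y : V)
    (hp : HasPath H U (2 * k - 1) x y) (hxy : H.Adj x y) :
    ∃ f : Fin (2 * k) → V, Function.Injective f ∧ (∀ i, f i ∈ U) ∧
      ∀ i j, (SimpleGraph.cycleGraph (2 * k)).Adj i j → H.Adj (f i) (f j) := by
  obtain ⟨c, hinj, h0, hcj, hcU, hadj⟩ := hp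
  have key : ∀ i j : Fin (2 * k), (i - j).val = 1 → H.Adj (c i) (c j) := by
    intro i j h
    have hi := i.2
    have hj := j.2
    rw [Fin.val_sub] at h
    rcases Nat.lt_or_ge (2 * k - j.val + i.val) (2 * k) with h1 | h1
    · rw [Nat.mod_eq_of_lt h1] at h
      have h2 : j.val = 2 * k - 1 := by omega
      have h3 : i.val = 0 := by omega
      rw [h2, h3, h0, hcj]; exact hxy
    · rw [Nat.mod_eq_sub_mod h1, Nat.mod_eq_of_lt (by omega)] at h
      have h2 : i.val = j.val + 1 := by omega
      rw [h2]
      exact (hadj _ (by omega)).symm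
  refine ⟨fun i => c i, ?_, fun i => hcU _ (by have := i.2; omega), ?_⟩
  · intro i j h
    exact Fin.ext (hinj (by simp; have := i.2; omega) (by simp; have := j.2; omega) h)
  · intro i j h
    rw [SimpleGraph.cycleGraph_adj'] at h
    rcases h with h | h
    · exact key i j h
    · exact (key j i h).symm

/-- If any two disjoint subsets of `S` of sizes `a` and `#S / 2 = 2a(q+2)` are joined by an edge,
then at least `#S * q ^ j / 4` unordered pairs are joined by a path of length `j` in `S`. The factor
`1/4` is lost by dropping up to half of the starting vertices and by counting pairs twice. -/
theorem many_pairs {V : Type*} [Fintype V] [DecidableEq V] (H : SimpleGraph V)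
    (S : Finset V) (a q j : ℕ) (ha : 0 < a) (hq : 2 ≤ q) (hs : 4 * a * (q + 2) = #S)
    (hj : ∀ i < j, q ^ i ≤ a)
    (hJ : ∀ A B : Finset V, A ⊆ S → B ⊆ S → Disjoint A B → #A = a → #B = 2 * a * (q + 2) →
      ∃ x ∈ A, ∃ y ∈ B, H.Adj x y) (P : Finset (Sym2 V))
    (hP : ∀ x y, HasPath H S j x y → s(x, y) ∈ P) :
    #S * q ^ j ≤ 4 * #P := by
  classical
  obtain ⟨S', hS'S, hS'c, hexp⟩ := exists_expander H S a (2 * a * (q + 2)) (q + 1)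
    (by rw [← hs]; apply le_of_eq; ring) (by
      intro A B hA hB hd hAa hBb
      obtain ⟨A', hA', hA'c⟩ := exists_subset_card_eq hAa
      obtain ⟨B', hB', hB'c⟩ := exists_subset_card_eq hBb
      obtain ⟨x, hx, y, hy, h⟩ := hJ A' B' (hA'.trans hA) (hB'.trans hB)
        (disjoint_of_subset_left hA' (disjoint_of_subset_right hB' hd)) hA'c hB'c
      exact ⟨x, hA' hx, y, hB' hy, h⟩)
  have hN : ∀ x ∈ S', q ^ j ≤ #{y | HasPath H S j x y} := by
    intro x hx
    obtain ⟨N, U, hNU, hUS, hNc, -, hpath⟩ := layers H S' a q hq hexp x hx j hj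
    rw [← hNc]
    apply card_le_card
    intro y hy
    obtain ⟨c, h1, h2, h3, h4, h5⟩ := hpath y hy
    simp only [mem_filter, mem_univ, true_and]
    exact ⟨c, h1, h2, h3, fun i hi => hS'S (hUS (h4 i hi)), h5⟩
  have h1 : #S' * q ^ j ≤ #(S'.sigma fun x => ({y | HasPath H S j x y} : Finset V)) := by
    rw [card_sigma, ← smul_eq_mul]
    exact card_nsmul_le_sum _ _ _ hN
  have h2 : #(S'.sigma fun x => ({y | HasPath H S j x y} : Finset V)) ≤ 2 * #P := by
    refine card_le_mul_card_image_of_maps_to (f := fun p => s(p.1, p.2)) ?_ 2 ?_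
    · rintro ⟨x, y⟩ h
      simp only [mem_sigma, mem_filter, mem_univ, true_and] at h
      exact hP x y h.2
    · intro e _
      induction e with | _ x y =>
      refine (card_le_card (t := {⟨x, y⟩, ⟨y, x⟩}) ?_).trans card_le_two
      rintro ⟨u, v⟩ h
      simp only [mem_filter, Sym2.eq_iff] at h
      rcases h.2 with ⟨rfl, rfl⟩ | ⟨rfl, rfl⟩ <;> simp
  have h3 : #S ≤ 2 * #S' := by
    have : 2 * a ≤ #S := by rw [← hs]; nlinarith
    omega
  calc #S * q ^ j ≤ 2 * #S' * q ^ j := by gcongr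
    _ = 2 * (#S' * q ^ j) := by ring
    _ ≤ _ := by omega

/-! ### Deleting triangles -/

/-- The edges of the complete graph on `T`, as unordered pairs of distinct vertices. -/
def edges {V : Type*} [DecidableEq V] (T : Finset V) : Finset (Sym2 V) :=
  T.offDiag.image (Function.uncurry Sym2.mk)

theorem mem_edges {V : Type*} [DecidableEq V] {T : Finset V} {x y : V} :
    s(x, y) ∈ edges T ↔ x ∈ T ∧ y ∈ T ∧ x ≠ y := by
  simp only [edges, mem_image, mem_offDiag, Prod.exists, Function.uncurry_apply_pair, Sym2.eq_iff]
  constructor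
  · rintro ⟨u, v, ⟨h1, h2, h3⟩, ⟨rfl, rfl⟩ | ⟨rfl, rfl⟩⟩
    · exact ⟨h1, h2, h3⟩
    · exact ⟨h2, h1, h3.symm⟩
  · rintro ⟨h1, h2, h3⟩
    exact ⟨x, y, ⟨h1, h2, h3⟩, Or.inl ⟨rfl, rfl⟩⟩

theorem card_edges {V : Type*} [DecidableEq V] (T : Finset V) : #(edges T) = (#T).choose 2 :=
  Sym2.card_image_offDiag T

theorem edges_inter {V : Type*} [DecidableEq V] (S T : Finset V) :
    edges (S ∩ T) = edges S ∩ edges T := by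
  ext e
  induction e with | _ x y =>
  simp only [mem_edges, mem_inter]
  tauto

theorem card_edges_sdiff {V : Type*} [DecidableEq V] {S T : Finset V} (hT : #T = 3)
    (hTS : #(T ∩ S) = 2) : #(edges T \ edges S) = 2 := by
  have h := card_sdiff_add_card_inter (edges T) (edges S)
  rw [← edges_inter, card_edges, card_edges, hT, hTS] at h
  simpa [Nat.choose] using h

/-- A maximal family `TT` of edge-disjoint triangles of the graph with edge set `P`; by maximality
every triangle shares an edge with a member of `TT`. Triangles are encoded as vertex sets. -/
theorem exists_deletion {V : Type*} [Fintype V] [DecidableEq V] (P : Finset (Sym2 V)) :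
    ∃ TT : Finset (Finset V), (∀ T ∈ TT, #T = 3 ∧ edges T ⊆ P) ∧
      (TT : Set (Finset V)).PairwiseDisjoint edges ∧
      ∀ T : Finset V, #T = 3 → edges T ⊆ P → ∃ T' ∈ TT, ¬ Disjoint (edges T) (edges T') := by
  classical
  let fam : Finset (Finset (Finset V)) := {TT | (∀ T ∈ TT, #T = 3 ∧ edges T ⊆ P) ∧
      (TT : Set (Finset V)).PairwiseDisjoint edges}
  obtain ⟨TT, hTT, hmax⟩ := fam.exists_max_image Finset.card ⟨∅, by simp [fam]⟩
  simp only [fam, mem_filter, mem_univ, true_and] at hTT hmax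
  refine ⟨TT, hTT.1, hTT.2, ?_⟩
  intro T hT hTP
  by_contra hcon
  push Not at hcon
  have hnot : T ∉ TT := by
    intro h
    have := hcon T h
    rw [disjoint_self_iff_empty] at this
    have h2 := card_edges T
    rw [this, hT] at h2
    simp [Nat.choose] at h2
  have := hmax (insert T TT) ⟨by
    intro T' hT'
    rcases mem_insert.mp hT' with rfl | h
    · exact ⟨hT, hTP⟩
    · exact hTT.1 T' h, by
    rw [coe_insert]
    exact hTT.2.insert fun T' hT' _ => hcon T' hT'⟩
  rw [card_insert_of_notMem hnot] at this
  omega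

/-- The graph with edge set `P`, from which all edges of the triangles in `TT` are deleted. -/
def delGraph {V : Type*} [DecidableEq V] (P : Finset (Sym2 V)) (TT : Finset (Finset V)) :
    SimpleGraph V :=
  SimpleGraph.fromEdgeSet {e | e ∈ P ∧ ∀ T ∈ TT, e ∉ edges T}

theorem delGraph_triangleFree {V : Type*} [DecidableEq V] (P : Finset (Sym2 V))
    (TT : Finset (Finset V))
    (h : ∀ T : Finset V, #T = 3 → edges T ⊆ P → ∃ T' ∈ TT, ¬ Disjoint (edges T) (edges T')) :
    ¬ ContainsCopy (⊤ : SimpleGraph (Fin 3)) (delGraph P TT) := by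
  rintro ⟨f, hf, hadj⟩
  have hT : #(univ.image f) = 3 := by rw [card_image_of_injective _ hf]; simp
  have hmem : ∀ e ∈ edges (univ.image f), e ∈ P ∧ ∀ T ∈ TT, e ∉ edges T := by
    intro e he
    induction e with | _ x y =>
    rw [mem_edges] at he
    obtain ⟨hx, hy, hxy⟩ := he
    obtain ⟨i, -, rfl⟩ := mem_image.mp hx
    obtain ⟨j, -, rfl⟩ := mem_image.mp hy
    have hij : i ≠ j := fun h => hxy (by rw [h])
    have := hadj (a := i) (b := j) (by simpa using hij)
    rw [delGraph, SimpleGraph.fromEdgeSet_adj] at this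
    exact this.1
  obtain ⟨T', hT', hd⟩ := h _ hT fun e he => (hmem e he).1
  exact hd (disjoint_left.mpr fun e he => (hmem e he).2 T' hT')

/-! ### Edge-disjoint copies and their survival -/

/-- The map `c` embeds `F` as a subgraph into the graph with edge set `D`. -/
def IsCopy {ι V : Type*} (F : SimpleGraph ι) (D : Finset (Sym2 V)) (c : ι → V) : Prop :=
  Function.Injective c ∧ ∀ i j, F.Adj i j → s(c i, c j) ∈ D

open Classical in
/-- The edges of the image of `F` under `c`. -/
noncomputable def cEdges {ι V : Type*} [Fintype ι] (F : SimpleGraph ι) (c : ι → V) :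
    Finset (Sym2 V) :=
  F.edgeFinset.image (Sym2.map c)

theorem mem_cEdges {ι V : Type*} [Fintype ι] (F : SimpleGraph ι) (c : ι → V) (e : Sym2 V) :
    e ∈ cEdges F c ↔ ∃ i j, F.Adj i j ∧ e = s(c i, c j) := by
  classical
  simp only [cEdges, mem_image, SimpleGraph.mem_edgeFinset]
  constructor
  · rintro ⟨e', h, rfl⟩
    induction e' with | _ i j =>
    exact ⟨i, j, h, rfl⟩
  · rintro ⟨i, j, h, rfl⟩
    exact ⟨s(i, j), h, rfl⟩

/-- A crude bound by the number of all unordered pairs of vertices of `F`, loops included. -/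
theorem card_cEdges {ι V : Type*} [Fintype ι] (F : SimpleGraph ι) (c : ι → V) :
    #(cEdges F c) ≤ (Fintype.card ι + 1).choose 2 := by
  classical
  refine card_image_le.trans ((card_le_univ _).trans ?_)
  rw [Sym2.card]

theorem IsCopy.cEdges_subset {ι V : Type*} [Fintype ι] {F : SimpleGraph ι} {D : Finset (Sym2 V)}
    {c : ι → V} (h : IsCopy F D c) : cEdges F c ⊆ D := by
  intro e he
  obtain ⟨i, j, hij, rfl⟩ := (mem_cEdges F c e).mp he
  exact h.2 i j hij

/-- The maps `cs i` are edge-disjoint copies of `F` in the graph with edge set `D`. -/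
def IsPacking {ι V : Type*} [Fintype ι] (F : SimpleGraph ι) (D : Finset (Sym2 V)) {X : ℕ}
    (cs : Fin X → ι → V) : Prop :=
  (∀ i, IsCopy F D (cs i)) ∧ ∀ i j, i ≠ j → Disjoint (cEdges F (cs i)) (cEdges F (cs j))

/-- Greedy choice: if no `h * X` edges of `D` meet all copies of `F`, and a copy has at most `h`
edges, then there are `X` edge-disjoint copies. -/
theorem exists_packing {ι V : Type*} [Fintype ι] [DecidableEq V] (F : SimpleGraph ι)
    (D : Finset (Sym2 V)) (h X : ℕ) (hF : (Fintype.card ι + 1).choose 2 ≤ h)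
    (hD : ∀ R : Finset (Sym2 V), #R ≤ h * X → ∃ c, IsCopy F (D \ R) c) :
    ∃ cs : Fin X → ι → V, IsPacking F D cs := by
  induction X with
  | zero => exact ⟨fun i => i.elim0, fun i => i.elim0, fun i => i.elim0⟩
  | succ X ih =>
    obtain ⟨cs, hcs, hdis⟩ := ih fun R hR => hD R (hR.trans (by gcongr; omega))
    have hR : #(univ.biUnion fun i => cEdges F (cs i)) ≤ h * (X + 1) := by
      refine card_biUnion_le.trans ?_
      calc ∑ i : Fin X, #(cEdges F (cs i)) ≤ ∑ i : Fin X, h :=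
            sum_le_sum fun i _ => (card_cEdges F _).trans hF
        _ = X * h := by simp
        _ ≤ _ := by nlinarith
    obtain ⟨c, hc⟩ := hD _ hR
    have hcd : ∀ i, Disjoint (cEdges F c) (cEdges F (cs i)) := by
      intro i
      rw [disjoint_left]
      intro e he he'
      have := (mem_sdiff.mp (hc.cEdges_subset he)).2
      exact this (mem_biUnion.mpr ⟨i, mem_univ _, he'⟩)
    refine ⟨Fin.cons c cs, ?_, ?_⟩
    · intro i
      refine Fin.cases ?_ ?_ i
      · exact ⟨hc.1, fun i j hij => (mem_sdiff.mp (hc.2 i j hij)).1⟩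
      · intro i; simpa using hcs i
    · intro i j
      refine Fin.cases ?_ ?_ i
      · refine Fin.cases ?_ ?_ j
        · simp
        · intro j _; simpa using hcd j
      · intro i
        refine Fin.cases ?_ ?_ j
        · intro _; simpa using (hcd i).symm
        · intro j hij
          simpa using hdis i j (fun h => hij (by rw [h]))

/-- Among `4t` edge-disjoint copies inside `S`, one loses no edge to the triangles of `TT`, provided
fewer than `t` of these triangles have exactly two vertices in `S` and share an edge with a copy,
and fewer than `t` lie inside `S`: the former destroy at most one copy each and the latter at most
three, which makes at most `(t - 1) + 3 * (t - 1) < 4 * t` copies. -/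
theorem survive {ι V : Type*} [Fintype ι] [DecidableEq V] (F : SimpleGraph ι)
    (P : Finset (Sym2 V)) (TT : Finset (Finset V)) (hTT : ∀ T ∈ TT, #T = 3)
    (S : Finset V) (t : ℕ)
    (cs : Fin (4 * t) → ι → V) (hcs : IsPacking F (P ∩ edges S) cs)
    (hout : #{T ∈ TT | #(T ∩ S) = 2 ∧ ∃ i, ∃ e ∈ cEdges F (cs i), e ∈ edges T} < t)
    (hin : #{T ∈ TT | T ⊆ S} < t) :
    ∃ i, ∀ e ∈ cEdges F (cs i), ∀ T ∈ TT, e ∉ edges T := by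
  classical
  by_contra hcon
  push Not at hcon
  -- the destroyed edges `e i` are distinct, since the copies are edge-disjoint
  choose e he T hT heT using hcon
  have heS : ∀ i, e i ∈ edges S := fun i => (mem_inter.mp ((hcs.1 i).cEdges_subset (he i))).2
  have heinj : Function.Injective e := by
    intro i j hij
    by_contra hne
    exact disjoint_left.mp (hcs.2 i j hne) (he i) (hij ▸ he j)
  have hin' : ∀ i, e i ∈ edges (T i ∩ S) := fun i => by
    rw [edges_inter]; exact mem_inter.mpr ⟨heT i, heS i⟩
  have hdich : ∀ i, #(T i ∩ S) = 2 ∨ T i ⊆ S := by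
    intro i
    have h1 : 0 < #(edges (T i ∩ S)) := card_pos.mpr ⟨_, hin' i⟩
    rw [card_edges] at h1
    have h2 : 2 ≤ #(T i ∩ S) := by
      by_contra h; push Not at h; rw [Nat.choose_eq_zero_of_lt h] at h1; omega
    have h3 : #(T i ∩ S) ≤ 3 := (card_le_card inter_subset_left).trans (hTT _ (hT i)).le
    rcases Nat.lt_or_ge 2 #(T i ∩ S) with h | h
    · right
      have : T i ∩ S = T i := eq_of_subset_of_card_le inter_subset_left (by rw [hTT _ (hT i)]; omega)
      exact inter_eq_left.mp this
    · left; omega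
  have hA : #{i | #(T i ∩ S) = 2} < t := by
    refine lt_of_le_of_lt ?_ hout
    refine card_le_card_of_injOn T ?_ ?_
    · intro i hi
      simp only [coe_filter, mem_univ, true_and, Set.mem_ofPred_eq] at hi
      simp only [coe_filter, Set.mem_ofPred_eq]
      exact ⟨hT i, hi, i, e i, he i, heT i⟩
    · intro i hi j hj hij
      simp only [coe_filter, mem_univ, true_and, Set.mem_ofPred_eq] at hi hj
      apply heinj
      have h1 : #(edges (T i ∩ S)) ≤ 1 := by rw [card_edges, hi]; rfl
      exact card_le_one.mp h1 _ (hin' i) _ (by rw [hij]; exact hin' j)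
  have hB : #{i | T i ⊆ S} ≤ 3 * #{T ∈ TT | T ⊆ S} := by
    refine card_le_mul_card_image_of_maps_to (f := T) ?_ 3 ?_
    · intro i hi
      simp only [mem_filter, mem_univ, true_and] at hi ⊢
      exact ⟨hT i, hi⟩
    · intro T' hT'
      have h3 : #(edges T') = 3 := by
        rw [card_edges, hTT _ (mem_filter.mp hT').1]; rfl
      rw [← h3]
      refine card_le_card_of_injOn e ?_ heinj.injOn
      intro i hi
      simp only [coe_filter, Set.mem_ofPred_eq] at hi
      rw [← hi.2]; exact heT i
  have hC : (univ : Finset (Fin (4 * t))) ⊆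
      ({i | #(T i ∩ S) = 2} : Finset _) ∪ ({i | T i ⊆ S} : Finset _) := by
    intro i _
    simpa using hdich i
  have := (card_le_card hC).trans (card_union_le _ _)
  simp only [card_univ, Fintype.card_fin] at this
  omega

/-! ### Probabilities in the uniform model -/

theorem choose_bound (N t : ℕ) (ht : 0 < t) :
    (N.choose t : ℝ) ≤ (Real.exp 1 * N / t) ^ t := by
  have h1 : (N.choose t : ℝ) ≤ (N : ℝ) ^ t / t.factorial := Nat.choose_le_pow_div t N
  have h2 := Real.pow_div_factorial_le_exp (t : ℝ) (by positivity) t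
  have h3 : Real.exp (t : ℝ) = Real.exp 1 ^ t := by rw [← Real.exp_nat_mul, mul_one]
  rw [h3] at h2
  have htp : (0 : ℝ) < (t : ℝ) ^ t := by positivity
  calc (N.choose t : ℝ) ≤ (N : ℝ) ^ t / t.factorial := h1
    _ = (N : ℝ) ^ t / (t : ℝ) ^ t * ((t : ℝ) ^ t / t.factorial) := by field_simp
    _ ≤ (N : ℝ) ^ t / (t : ℝ) ^ t * Real.exp 1 ^ t := by gcongr
    _ = _ := by rw [div_pow, mul_pow]; ring

/-- The probability of the event `B` under the uniform distribution on `Ω`. -/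
noncomputable def pr {Ω : Type*} (B : Ω → Prop) : ℝ := (Set.ncard {w | B w} : ℝ) / Nat.card Ω

theorem pr_eq {Ω : Type*} [Fintype Ω] (B : Ω → Prop) [DecidablePred B] :
    pr B = (#{w | B w} : ℝ) / Fintype.card Ω := by
  rw [pr, Nat.card_eq_fintype_card, ← Set.ncard_coe_finset]
  simp

theorem pr_nonneg {Ω : Type*} (B : Ω → Prop) : 0 ≤ pr B := by unfold pr; positivity

theorem pr_mono {Ω : Type*} [Finite Ω] {B B' : Ω → Prop} (h : ∀ w, B w → B' w) : pr B ≤ pr B' := by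
  unfold pr
  gcongr
  · exact Set.toFinite _
  · exact h _

theorem pr_false {Ω : Type*} {B : Ω → Prop} (h : ∀ w, ¬ B w) : pr B = 0 := by
  simp [pr, h]

theorem pr_or {Ω : Type*} [Finite Ω] (B B' : Ω → Prop) :
    pr (fun w => B w ∨ B' w) ≤ pr B + pr B' := by
  unfold pr
  rw [← add_div]
  gcongr
  exact_mod_cast Set.ncard_union_le {w | B w} {w | B' w}

theorem pr_union {Ω ι : Type*} [Finite Ω] (I : Finset ι) (B : ι → Ω → Prop) (c : ℝ)
    (h : ∀ i ∈ I, pr (B i) ≤ c) : pr (fun w => ∃ i ∈ I, B i w) ≤ #I * c := by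
  classical
  induction I using Finset.induction_on with
  | empty => simp [pr]
  | insert i I hi ih =>
    have h1 := pr_or (B i) (fun w => ∃ i ∈ I, B i w)
    have h2 := ih fun j hj => h j (mem_insert_of_mem hj)
    have h3 := h i (mem_insert_self i I)
    rw [card_insert_of_notMem hi]
    push_cast
    simp only [exists_mem_insert]
    linarith

/-- An event of probability less than one fails somewhere. -/
theorem exists_not_of_pr {Ω : Type*} [Finite Ω] [Nonempty Ω] {B : Ω → Prop} (h : pr B < 1) :
    ∃ w, ¬ B w := by
  by_contra! hcon
  have : {w | B w} = Set.univ := Set.eq_univ_of_forall hcon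
  have hpos : (0 : ℝ) < Nat.card Ω := by exact_mod_cast Nat.card_pos
  rw [pr, this, Set.ncard_univ, div_self hpos.ne'] at h
  exact lt_irrefl _ h

/-- Fubini: if an event has probability at most `c` conditionally on every outcome of the first
round, then it has probability at most `c`. -/
theorem pr_cond {E α : Type*} [Finite E] [Finite α] [Nonempty α]
    (B : (E → α) → (E → α) → Prop) (c : ℝ) (h : ∀ f, pr (B f) ≤ c) :
    pr (fun w : E → α × α => B (fun e => (w e).1) (fun e => (w e).2)) ≤ c := by
  classical
  have := Fintype.ofFinite E
  have := Fintype.ofFinite α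
  have hpos : (0 : ℝ) < Fintype.card (E → α) := by exact_mod_cast Fintype.card_pos
  have h1 : #{w : E → α × α | B (fun e => (w e).1) (fun e => (w e).2)} =
      ∑ f, #{g | B f g} := by
    rw [← card_sigma]
    refine card_bij' (fun w _ => ⟨fun e => (w e).1, fun e => (w e).2⟩)
      (fun p _ => fun e => (p.1 e, p.2 e)) ?_ ?_ ?_ ?_ <;> simp
  have h2 : (Fintype.card (E → α × α) : ℝ) = Fintype.card (E → α) * Fintype.card (E → α) := by
    simp [mul_pow]
  rw [pr_eq, h1, h2, div_le_iff₀ (by positivity)]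
  push_cast
  calc ∑ f, (#{g | B f g} : ℝ) ≤ ∑ f : E → α, c * (Fintype.card (E → α) : ℝ) :=
        sum_le_sum fun f _ => by
          have := h f
          rwa [pr_eq, div_le_iff₀ hpos] at this
    _ = _ := by rw [sum_const, card_univ, nsmul_eq_mul]; ring

theorem pr_fst {E α : Type*} [Finite E] [Finite α] [Nonempty α] (Q : (E → α) → Prop) :
    pr (fun w : E → α × α => Q (fun e => (w e).1)) ≤ pr Q := by
  classical
  have := Fintype.ofFinite E
  have := Fintype.ofFinite α
  have hpos : (0 : ℝ) < Fintype.card (E → α) := by exact_mod_cast Fintype.card_pos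
  have h1 : #{w : E → α × α | Q (fun e => (w e).1)} = #{f : E → α | Q f} * Fintype.card (E → α) := by
    rw [← card_univ, ← card_product]
    refine card_bij' (fun w _ => ⟨fun e => (w e).1, fun e => (w e).2⟩)
      (fun p _ => fun e => (p.1 e, p.2 e)) ?_ ?_ ?_ ?_ <;> simp
  have h2 : (Fintype.card (E → α × α) : ℝ) = Fintype.card (E → α) * Fintype.card (E → α) := by
    simp [mul_pow]
  rw [pr_eq, pr_eq, h1, h2]
  push_cast
  rw [mul_div_mul_right _ _ hpos.ne']

theorem pr_chernoff {E α : Type*} [Finite E] [Fintype α] [DecidableEq α] (z : α)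
    (A : Finset E) (r : ℕ) :
    pr (fun w : E → α => #{e ∈ A | w e = z} ≤ r) ≤
      Real.exp (r - (#A : ℝ) / (2 * Fintype.card α)) := by
  classical
  have := Fintype.ofFinite E
  have : Nonempty α := ⟨z⟩
  have hpos : (0 : ℝ) < Fintype.card (E → α) := by exact_mod_cast Fintype.card_pos
  rw [pr_eq, div_le_iff₀ hpos]
  exact chernoff z A r

theorem pr_avoid {E α : Type*} [Finite E] [Fintype α] [DecidableEq α] (z : α) (A : Finset E) :
    pr (fun w : E → α => ∀ e ∈ A, w e ≠ z) ≤ Real.exp (-(#A : ℝ) / Fintype.card α) := by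
  classical
  have := Fintype.ofFinite E
  have : Nonempty α := ⟨z⟩
  have hpos : (0 : ℝ) < Fintype.card (E → α) := by exact_mod_cast Fintype.card_pos
  rw [pr_eq, div_le_iff₀ hpos]
  exact avoid z A

/-! ### Two-round exposure -/

/-- The unordered pairs with one end in `A` and the other in `B`. -/
def cross {V : Type*} [DecidableEq V] (A B : Finset V) : Finset (Sym2 V) :=
  (A ×ˢ B).image (Function.uncurry Sym2.mk)

theorem card_cross {V : Type*} [DecidableEq V] {A B : Finset V} (h : Disjoint A B) :
    #(cross A B) = #A * #B := by
  rw [cross, card_image_of_injOn, card_product]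
  rintro ⟨x, y⟩ h1 ⟨u, v⟩ h2 h3
  simp only [coe_product, Set.mem_prod, mem_coe] at h1 h2
  simp only [Function.uncurry_apply_pair, Sym2.eq_iff] at h3
  rcases h3 with ⟨rfl, rfl⟩ | ⟨rfl, rfl⟩
  · rfl
  · exact absurd h2.2 (disjoint_left.mp h h1.1)

/-- In the first round `f`, where `e` is an edge if `f e = z`, any two disjoint sets of sizes `a` and
`b` have more than `r` edges between them. -/
def CrossRich {V α : Type*} [DecidableEq V] [DecidableEq α] (z : α) (a b r : ℕ) (f : Sym2 V → α) :
    Prop :=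
  ∀ A B : Finset V, Disjoint A B → #A = a → #B = b → r < #{e ∈ cross A B | f e = z}

theorem pow_le_exp {x l : ℝ} (hx0 : 0 ≤ x) (h : x ≤ Real.exp l) (m : ℕ) :
    x ^ m ≤ Real.exp (m * l) := by
  rw [Real.exp_nat_mul]; gcongr

/-- The first round is richly joined except with probability `exp (-μ)`: a union bound over the pairs
of sets, at most `exp ((a + b) * l)` in number. -/
theorem bad1 {V α : Type*} [Fintype V] [DecidableEq V] [Fintype α] [DecidableEq α] (z : α)
    (a b r : ℕ) (l μ : ℝ) (hl : (Fintype.card V : ℝ) ≤ Real.exp l)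
    (h : (a + b) * l + r + μ ≤ (a * b : ℝ) / (2 * Fintype.card α)) :
    pr (fun w : Sym2 V → α × α => ¬ CrossRich z a b r (fun e => (w e).1)) ≤ Real.exp (-μ) := by
  have : Nonempty α := ⟨z⟩
  refine (pr_fst (fun f => ¬ CrossRich z a b r f)).trans ?_
  have h1 := pr_union (Ω := Sym2 V → α) (powersetCard a univ ×ˢ powersetCard b univ)
    (fun (p : Finset V × Finset V) f => Disjoint p.1 p.2 ∧ #{e ∈ cross p.1 p.2 | f e = z} ≤ r)
    (Real.exp (r - (a * b : ℝ) / (2 * Fintype.card α))) (by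
      rintro ⟨A, B⟩ hAB
      simp only [mem_product, mem_powersetCard, subset_univ, true_and] at hAB
      obtain ⟨hA, hB⟩ := hAB
      by_cases hd : Disjoint A B
      · have := pr_chernoff z (cross A B) r
        rw [card_cross hd, hA, hB] at this
        push_cast at this
        exact (pr_mono fun f hf => hf.2).trans this
      · rw [pr_false fun f hf => hd hf.1]
        positivity)
  refine le_trans (pr_mono fun f hcon => ?_) (h1.trans ?_)
  · simp only [CrossRich, not_forall, not_lt] at hcon
    obtain ⟨A, B, hd, hA, hB, hle⟩ := hcon
    exact ⟨(A, B), by simp [hA, hB], hd, hle⟩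
  have h3 : (#(powersetCard a (univ : Finset V) ×ˢ powersetCard b (univ : Finset V)) : ℝ) ≤
      Real.exp (a * l) * Real.exp (b * l) := by
    rw [card_product, card_powersetCard, card_powersetCard, card_univ]
    push_cast
    have hc : ∀ m : ℕ, ((Fintype.card V).choose m : ℝ) ≤ Real.exp (m * l) := fun m =>
      (by exact_mod_cast Nat.choose_le_pow _ m :
        ((Fintype.card V).choose m : ℝ) ≤ (Fintype.card V : ℝ) ^ m).trans
          (pow_le_exp (by positivity) hl m)
    gcongr
    · exact hc a
    · exact hc b
  calc _ ≤ (Real.exp (a * l) * Real.exp (b * l)) *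
        Real.exp (r - (a * b : ℝ) / (2 * Fintype.card α)) := by gcongr
    _ = Real.exp (a * l + b * l + (r - (a * b : ℝ) / (2 * Fintype.card α))) := by
        rw [Real.exp_add, Real.exp_add]
    _ ≤ _ := by
      gcongr
      linarith

/-- The edge set of the random graph: the pairs coloured `z` in the first or in the second round. -/
def present {V α : Type*} [Fintype V] [DecidableEq V] [DecidableEq α] (z : α)
    (w : Sym2 V → α × α) : Finset (Sym2 V) := {e | (w e).1 = z ∨ (w e).2 = z}

/-- For a fixed set `R` of at most `r` removed edges: given a richly joined first round, there is no
`C_{2k}` in `S` avoiding `R` only if the second round misses all pairs outside `R` that are joined by a path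
of length `2k - 1` in the first round, of which there are at least `#S * q ^ (2k - 1) / 4 - r`. -/
theorem bad2_aux {V α : Type*} [Fintype V] [DecidableEq V] [Fintype α] [DecidableEq α] (z : α)
    (k : ℕ) (hk : 2 ≤ k) (a q r : ℕ) (ha : 0 < a) (hq : 2 ≤ q)
    (hqa : ∀ i < 2 * k - 1, q ^ i ≤ a)
    (S : Finset V) (hS : 4 * a * (q + 2) = #S) (R : Finset (Sym2 V)) (hR : #R ≤ r) :
    pr (fun w : Sym2 V → α × α => CrossRich z a (2 * a * (q + 2)) r (fun e => (w e).1) ∧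
      ¬ ∃ c, IsCopy (SimpleGraph.cycleGraph (2 * k)) ((present z w ∩ edges S) \ R) c) ≤
      Real.exp (-((#S * q ^ (2 * k - 1) / 4 - r : ℝ) / Fintype.card α)) := by
  classical
  have : Nonempty α := ⟨z⟩
  have key := pr_cond (E := Sym2 V) (α := α) (fun f g => CrossRich z a (2 * a * (q + 2)) r f ∧
      ¬ ∃ c, IsCopy (SimpleGraph.cycleGraph (2 * k))
        ((present z (fun e => (f e, g e)) ∩ edges S) \ R) c)
      (Real.exp (-((#S * q ^ (2 * k - 1) / 4 - r : ℝ) / Fintype.card α))) (by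
    intro f
    by_cases hf : CrossRich z a (2 * a * (q + 2)) r f
    swap
    · rw [pr_false fun g hg => hf hg.1]; positivity
    -- `H` is the first round without `R`, and `P` the set of pairs joined by a path in it
    let H : SimpleGraph V := SimpleGraph.fromEdgeSet {e | f e = z ∧ e ∉ R}
    let P : Finset (Sym2 V) := {e | ∃ x y, e = s(x, y) ∧ HasPath H S (2 * k - 1) x y}
    have hP : #S * q ^ (2 * k - 1) ≤ 4 * #P := by
      refine many_pairs H S a q (2 * k - 1) ha hq hS hqa ?_ P ?_
      · intro A B _ _ hd hA hB
        have h1 := hf A B hd hA hB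
        have h2 : ¬ {e ∈ cross A B | f e = z} ⊆ R := fun h => by
          have := card_le_card h
          omega
        obtain ⟨e, he, heR⟩ := not_subset.mp h2
        obtain ⟨he1, he2⟩ := mem_filter.mp he
        obtain ⟨⟨x, y⟩, hxy, rfl⟩ := mem_image.mp he1
        obtain ⟨hx, hy⟩ := mem_product.mp hxy
        refine ⟨x, hx, y, hy, ?_⟩
        rw [SimpleGraph.fromEdgeSet_adj]
        refine ⟨⟨he2, heR⟩, ?_⟩
        rintro rfl
        exact disjoint_left.mp hd hx hy
      · intro x y h
        simp only [P, mem_filter, mem_univ, true_and]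
        exact ⟨x, y, rfl, h⟩
    have hPR : #P ≤ #(P \ R) + r := by
      have := le_card_sdiff R P
      omega
    have h1 := pr_avoid z (P \ R)
    refine (pr_mono fun g hg => ?_).trans (h1.trans ?_)
    · obtain ⟨-, hno⟩ := hg
      intro e he hge
      apply hno
      obtain ⟨heP, heR⟩ := mem_sdiff.mp he
      simp only [P, mem_filter, mem_univ, true_and] at heP
      obtain ⟨x, y, rfl, hp⟩ := heP
      have hxy : x ≠ y := by
        obtain ⟨c, hinj, h0, hj, -, -⟩ := hp
        rintro rfl
        have := hinj (by simp) (by simp) (h0.trans hj.symm)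
        omega
      let H' : SimpleGraph V := SimpleGraph.fromEdgeSet {e | (f e = z ∨ g e = z) ∧ e ∉ R}
      have hp' : HasPath H' S (2 * k - 1) x y := by
        obtain ⟨c, hinj, h0, hj, hS, hadj⟩ := hp
        refine ⟨c, hinj, h0, hj, hS, fun i hi => ?_⟩
        have := hadj i hi
        simp only [H, H', SimpleGraph.fromEdgeSet_adj, Set.mem_ofPred_eq] at this ⊢
        exact ⟨⟨Or.inl this.1.1, this.1.2⟩, this.2⟩
      obtain ⟨c, hc, hcS, hadj⟩ := closing k hk H' S x y hp' (by
        simp only [H', SimpleGraph.fromEdgeSet_adj, Set.mem_ofPred_eq]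
        exact ⟨⟨Or.inr hge, heR⟩, hxy⟩)
      refine ⟨c, hc, fun i j hij => ?_⟩
      have := hadj i j hij
      simp only [H', SimpleGraph.fromEdgeSet_adj, Set.mem_ofPred_eq] at this
      simp only [present, mem_sdiff, mem_inter, mem_filter, mem_univ, true_and, mem_edges]
      exact ⟨⟨this.1.1, hcS i, hcS j, this.2⟩, this.1.2⟩
    rw [neg_div]
    gcongr
    have h3 : (#S * q ^ (2 * k - 1) : ℝ) ≤ 4 * #P := by exact_mod_cast hP
    have h4 : (#P : ℝ) ≤ #(P \ R) + r := by exact_mod_cast hPR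
    linarith)
  exact key

/-- A set of at most `r` elements is covered by the image of a function on `Fin r`; this makes the
sets of at most `r` pairs easy to count. -/
theorem exists_fun_image {β : Type*} [DecidableEq β] [Nonempty β] (R : Finset β) (r : ℕ)
    (hR : #R ≤ r) : ∃ g : Fin r → β, R ⊆ univ.image g := by
  classical
  obtain ⟨b⟩ := ‹Nonempty β›
  refine ⟨fun i => R.toList.getD i b, ?_⟩
  intro x hx
  rw [← mem_toList, List.mem_iff_getElem] at hx
  obtain ⟨i, hi, rfl⟩ := hx
  have : i < r := by have hi' := hi; rw [length_toList] at hi'; omega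
  exact mem_image.mpr ⟨⟨i, this⟩, mem_univ _, by
    simp only [List.getD, List.getElem?_eq_getElem hi, Option.getD_some]⟩

/-- Given a richly joined first round, no `r` edges meet every `C_{2k}` in `S`, except with
probability `exp (-μ)`: a union bound over the at most `exp (2 * r * l)` sets of `r` pairs. -/
theorem bad2 {V α : Type*} [Fintype V] [DecidableEq V] [Nonempty V] [Fintype α] [DecidableEq α]
    (z : α)
    (k : ℕ) (hk : 2 ≤ k) (a q r : ℕ) (ha : 0 < a) (hq : 2 ≤ q)
    (hqa : ∀ i < 2 * k - 1, q ^ i ≤ a)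
    (S : Finset V) (hS : 4 * a * (q + 2) = #S) (l μ : ℝ) (hl : (Fintype.card V : ℝ) ≤ Real.exp l)
    (h : 2 * r * l + μ ≤ (#S * q ^ (2 * k - 1) / 4 - r : ℝ) / Fintype.card α) :
    pr (fun w : Sym2 V → α × α => CrossRich z a (2 * a * (q + 2)) r (fun e => (w e).1) ∧
      ∃ R : Finset (Sym2 V), #R ≤ r ∧
      ¬ ∃ c, IsCopy (SimpleGraph.cycleGraph (2 * k)) ((present z w ∩ edges S) \ R) c) ≤
      Real.exp (-μ) := by
  have h1 := pr_union (Ω := Sym2 V → α × α) (univ : Finset (Fin r → Sym2 V))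
    (fun g w => CrossRich z a (2 * a * (q + 2)) r (fun e => (w e).1) ∧
      ¬ ∃ c, IsCopy (SimpleGraph.cycleGraph (2 * k))
        ((present z w ∩ edges S) \ univ.image g) c) _
    (fun g _ => bad2_aux z k hk a q r ha hq hqa S hS (univ.image g)
      (card_image_le.trans (by simp)))
  refine le_trans (pr_mono fun w hw => ?_) (h1.trans ?_)
  · obtain ⟨hJ, R, hR, hno⟩ := hw
    have : Nonempty (Sym2 V) := ⟨s(Classical.arbitrary V, Classical.arbitrary V)⟩
    obtain ⟨g, hg⟩ := exists_fun_image R r hR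
    refine ⟨g, mem_univ _, hJ, ?_⟩
    rintro ⟨c, hc1, hc2⟩
    refine hno ⟨c, hc1, fun i j hij => ?_⟩
    exact sdiff_subset_sdiff Subset.rfl hg (hc2 i j hij)
  · have h2 : (#(univ : Finset (Fin r → Sym2 V)) : ℝ) ≤ Real.exp (2 * r * l) := by
      rw [card_univ, Fintype.card_fun, Fintype.card_fin, Sym2.card]
      push_cast
      have h3 : ((Fintype.card V + 1).choose 2 : ℝ) ≤ Real.exp (2 * l) := by
        have h4 : (Fintype.card V + 1).choose 2 ≤ Fintype.card V ^ 2 := by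
          rw [Nat.choose_two_right]
          have : 0 < Fintype.card V := Fintype.card_pos
          apply Nat.div_le_of_le_mul
          simp only [Nat.add_sub_cancel]
          nlinarith
        calc ((Fintype.card V + 1).choose 2 : ℝ) ≤ (Fintype.card V : ℝ) ^ 2 := by exact_mod_cast h4
          _ ≤ _ := pow_le_exp (by positivity) hl 2
      refine (pow_le_exp (by positivity) h3 r).trans_eq ?_
      congr 1; ring
    calc _ ≤ Real.exp (2 * r * l) *
          Real.exp (-((#S * q ^ (2 * k - 1) / 4 - r : ℝ) / Fintype.card α)) := by gcongr
      _ = Real.exp (2 * r * l + -((#S * q ^ (2 * k - 1) / 4 - r : ℝ) / Fintype.card α)) := by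
        rw [Real.exp_add]
      _ ≤ _ := by gcongr; linarith

/-! ### Few edge-disjoint triangles meeting a given set -/

theorem pr_conf {E α ι : Type*} [Finite E] [DecidableEq E] [Fintype α] [Nonempty α]
    [Finite ι] (W : Finset α) (A : ι → Finset E) (conf : (E → α) → Finset ι) (m K : ℕ)
    (hA : ∀ w, ∀ i ∈ conf w, #(A i) = m) (hK : ∀ w, #(conf w) ≤ K)
    (hconf : ∀ i w w', (∀ e ∉ A i, w e = w' e) → i ∈ conf w → i ∈ conf w') :
    pr (fun w : E → α => ∃ i ∈ conf w, ∀ e ∈ A i, w e ∈ W) ≤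
      K * ((#W : ℝ) / Fintype.card α) ^ m := by
  classical
  have := Fintype.ofFinite E
  have := Fintype.ofFinite ι
  have hpos : (0 : ℝ) < Fintype.card (E → α) := by exact_mod_cast Fintype.card_pos
  have hpos' : (0 : ℝ) < Fintype.card α := by exact_mod_cast Fintype.card_pos
  rw [pr_eq, div_le_iff₀ hpos, div_pow, mul_div_assoc', div_mul_eq_mul_div,
    le_div_iff₀ (by positivity)]
  have := union_conf W A conf m K hA hK hconf
  exact_mod_cast this

theorem card_white_le {α : Type*} [Fintype α] [DecidableEq α] (z : α) :
    #{c : α × α | c.1 = z ∨ c.2 = z} ≤ 2 * Fintype.card α := by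
  have h1 : ({c : α × α | c.1 = z ∨ c.2 = z} : Finset (α × α)) ⊆
      univ.image (fun x => (z, x)) ∪ univ.image (fun x => (x, z)) := by
    rintro ⟨x, y⟩
    simp only [mem_filter, mem_univ, true_and, mem_union, mem_image, Prod.mk.injEq]
    rintro (rfl | rfl)
    · exact Or.inl ⟨y, rfl, rfl⟩
    · exact Or.inr ⟨x, rfl, rfl⟩
  have h2 := (card_le_card h1).trans (card_union_le _ _)
  have h3 : #(univ.image (fun x : α => (z, x))) ≤ Fintype.card α := card_image_le
  have h4 : #(univ.image (fun x : α => (x, z))) ≤ Fintype.card α := card_image_le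
  omega

/-- A given pair is present with probability at most `2 / M`. -/
theorem white_ratio {α : Type*} [Fintype α] [DecidableEq α] (z : α) :
    (#{c : α × α | c.1 = z ∨ c.2 = z} : ℝ) / Fintype.card (α × α) ≤ 2 / Fintype.card α := by
  have hM : 0 < Fintype.card α := Fintype.card_pos_iff.mpr ⟨z⟩
  have hM' : (0 : ℝ) < Fintype.card α := by exact_mod_cast hM
  have h : (#{c : α × α | c.1 = z ∨ c.2 = z} : ℝ) ≤ 2 * Fintype.card α := by
    exact_mod_cast card_white_le z
  rw [Fintype.card_prod, div_le_div_iff₀ (by positivity) hM']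
  push_cast
  nlinarith

/-- The probability that some `t` edge-disjoint triangles, all from a random list `cand w` of at most
`N` candidates, are present. Each triangle `T` contributes a set `A T` of `d` edges, and whether a
family of triangles is on the list does not depend on the colours in their sets `A T`; so the
probability is at most that of the fixed-list case, `(N choose t) (2/M)^(td)`. -/
theorem pr_triangles {V α : Type*} [Fintype V] [DecidableEq V] [Fintype α] [DecidableEq α]
    (z : α) (A : Finset V → Finset (Sym2 V)) (cand : (Sym2 V → α × α) → Finset (Finset V))
    (d N t : ℕ) (hAe : ∀ T, A T ⊆ edges T)
    (hA : ∀ w, ∀ T ∈ cand w, #(A T) = d) (hN : ∀ w, #(cand w) ≤ N)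
    (hcand : ∀ (𝒯 : Finset (Finset V)) (w w' : Sym2 V → α × α),
      (∀ e, (∀ T ∈ 𝒯, e ∉ A T) → w e = w' e) → 𝒯 ⊆ cand w → 𝒯 ⊆ cand w') :
    pr (fun w : Sym2 V → α × α => ∃ 𝒯 : Finset (Finset V), #𝒯 = t ∧
      (𝒯 : Set (Finset V)).PairwiseDisjoint edges ∧ 𝒯 ⊆ cand w ∧
      ∀ T ∈ 𝒯, edges T ⊆ present z w) ≤
      N.choose t * (2 / Fintype.card α : ℝ) ^ (t * d) := by
  classical
  have : Nonempty α := ⟨z⟩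
  have key := pr_conf ({c : α × α | c.1 = z ∨ c.2 = z} : Finset (α × α))
    (fun 𝒯 : Finset (Finset V) => 𝒯.biUnion A)
    (fun w => {𝒯 ∈ (cand w).powersetCard t | (𝒯 : Set (Finset V)).PairwiseDisjoint edges})
    (t * d) (N.choose t) ?_ ?_ ?_
  · refine (pr_mono fun w => ?_).trans (key.trans ?_)
    · rintro ⟨𝒯, h1, h2, h3, h4⟩
      refine ⟨𝒯, by simp [h1, h2, h3], fun e he => ?_⟩
      obtain ⟨T, hT, heT⟩ := mem_biUnion.mp he
      have := h4 T hT (hAe T heT)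
      simpa [present] using this
    · exact mul_le_mul_of_nonneg_left (pow_le_pow_left₀ (by positivity) (white_ratio z) _)
        (by positivity)
  · intro w 𝒯 h
    simp only [mem_filter, mem_powersetCard] at h
    obtain ⟨⟨h1, h2⟩, h3⟩ := h
    rw [card_biUnion fun T hT T' hT' hne =>
      disjoint_of_subset_left (hAe T) (disjoint_of_subset_right (hAe T') (h3 hT hT' hne))]
    rw [sum_congr rfl fun T hT => hA w T (h1 hT), sum_const, h2, smul_eq_mul]
  · intro w
    refine (card_filter_le _ _).trans ?_
    rw [card_powersetCard]
    exact Nat.choose_le_choose t (hN w)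
  · intro 𝒯 w w' hww h
    simp only [mem_filter, mem_powersetCard] at h ⊢
    refine ⟨⟨hcand 𝒯 w w' (fun e he => hww e ?_) h.1.1, h.1.2⟩, h.2⟩
    simpa using he

/-- Each of the triangles counted is given by an edge in `R` and its third vertex. -/
theorem card_triangles_through {V : Type*} [Fintype V] [DecidableEq V] (R : Finset (Sym2 V)) :
    #{T : Finset V | #T = 3 ∧ ∃ e ∈ R, e ∈ edges T} ≤ #R * Fintype.card V := by
  rw [← card_univ, ← card_product]
  refine (card_le_card ?_).trans (card_image_le (f := fun p : Sym2 V × V => insert p.2 p.1.toFinset))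
  intro T hT
  simp only [mem_filter, mem_univ, true_and] at hT
  obtain ⟨hT, e, he, heT⟩ := hT
  induction e with | _ x y =>
  obtain ⟨hx, hy, hxy⟩ := mem_edges.mp heT
  have h1 : 0 < #(T \ {x, y}) := by
    have := le_card_sdiff {x, y} T
    rw [card_pair hxy, hT] at this
    omega
  obtain ⟨v, hv⟩ := card_pos.mp h1
  simp only [mem_sdiff, mem_insert, mem_singleton, not_or] at hv
  refine mem_image.mpr ⟨(s(x, y), v), by simp [he], ?_⟩
  refine eq_of_subset_of_card_le ?_ ?_
  · intro u
    simp only [mem_insert, Sym2.mem_toFinset, Sym2.mem_iff]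
    rintro (rfl | rfl | rfl) <;> simp [*]
  · rw [hT, Sym2.toFinset_mk_eq, card_insert_of_notMem (by simp [hv.2.1, hv.2.2]), card_pair hxy]

/-- Triangles with exactly two vertices in `S` that contain an edge of `Φ D`, where `D` is the set of
edges present inside `S`. The candidates depend only on `D`, hence are independent of the two
edges that leave `S`; the latter are the sets `A T` of `pr_triangles`. -/
theorem bad3 {V α : Type*} [Fintype V] [DecidableEq V] [Fintype α] [DecidableEq α]
    (z : α) (S : Finset V) (Φ : Finset (Sym2 V) → Finset (Sym2 V)) (m t : ℕ)
    (hΦ : ∀ D, #(Φ D) ≤ m) :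
    pr (fun w : Sym2 V → α × α => ∃ 𝒯 : Finset (Finset V), #𝒯 = t ∧
      (𝒯 : Set (Finset V)).PairwiseDisjoint edges ∧
      (∀ T ∈ 𝒯, #T = 3 ∧ #(T ∩ S) = 2 ∧ ∃ e ∈ Φ (present z w ∩ edges S), e ∈ edges T) ∧
      ∀ T ∈ 𝒯, edges T ⊆ present z w) ≤
      (m * Fintype.card V).choose t * (2 / Fintype.card α : ℝ) ^ (t * 2) := by
  classical
  refine le_trans (pr_mono fun w => ?_) (pr_triangles z (fun T => edges T \ edges S)
    (fun w => {T | #T = 3 ∧ #(T ∩ S) = 2 ∧ ∃ e ∈ Φ (present z w ∩ edges S), e ∈ edges T})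
    2 _ t (fun T => sdiff_subset) ?_ ?_ ?_)
  · rintro ⟨𝒯, h1, h2, h3, h4⟩
    exact ⟨𝒯, h1, h2, fun T hT => by simpa using h3 T hT, h4⟩
  · intro w T hT
    simp only [mem_filter, mem_univ, true_and] at hT
    exact card_edges_sdiff hT.1 hT.2.1
  · intro w
    refine le_trans (card_le_card ?_) ((card_triangles_through (Φ (present z w ∩ edges S))).trans
      (Nat.mul_le_mul_right _ (hΦ _)))
    exact monotone_filter_right _ fun T _ hT => ⟨hT.1, hT.2.2⟩
  · intro 𝒯 w w' hww
    have : present z w ∩ edges S = present z w' ∩ edges S := by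
      ext e
      simp only [present, mem_inter, mem_filter, mem_univ, true_and]
      refine and_congr_left fun he => ?_
      rw [hww e fun T _ h => (mem_sdiff.mp h).2 he]
    rw [this]
    exact id

/-- Edge-disjoint triangles inside `S`: here the list of candidates is not random. -/
theorem bad4 {V α : Type*} [Fintype V] [DecidableEq V] [Fintype α] [DecidableEq α]
    (z : α) (S : Finset V) (t : ℕ) :
    pr (fun w : Sym2 V → α × α => ∃ 𝒯 : Finset (Finset V), #𝒯 = t ∧
      (𝒯 : Set (Finset V)).PairwiseDisjoint edges ∧ (∀ T ∈ 𝒯, #T = 3 ∧ T ⊆ S) ∧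
      ∀ T ∈ 𝒯, edges T ⊆ present z w) ≤
      (#S ^ 3).choose t * (2 / Fintype.card α : ℝ) ^ (t * 3) := by
  classical
  refine le_trans (pr_mono fun w => ?_) (pr_triangles z edges
    (fun _ => powersetCard 3 S) 3 _ t (fun T => Subset.rfl) ?_ ?_ ?_)
  · rintro ⟨𝒯, h1, h2, h3, h4⟩
    exact ⟨𝒯, h1, h2, fun T hT => mem_powersetCard.mpr (h3 T hT).symm, h4⟩
  · intro w T hT
    rw [card_edges, (mem_powersetCard.mp hT).2]
    rfl
  · intro w
    rw [card_powersetCard]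
    exact Nat.choose_le_pow _ _
  · intro 𝒯 w w' _
    exact id

/-! ### A surviving copy -/

/-- The edges of a packing of `X` copies of `F` in `D`, chosen once and for all for each `D`;
empty if there is no such packing. -/
noncomputable def packEdges {ι V : Type*} [Fintype ι] (F : SimpleGraph ι) (X : ℕ)
    (D : Finset (Sym2 V)) : Finset (Sym2 V) := by
  classical
  exact if h : ∃ cs : Fin X → ι → V, IsPacking F D cs then
    univ.biUnion fun i => cEdges F (h.choose i) else ∅

theorem card_packEdges {ι V : Type*} [Fintype ι] (F : SimpleGraph ι) (X h : ℕ)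
    (hF : (Fintype.card ι + 1).choose 2 ≤ h) (D : Finset (Sym2 V)) :
    #(packEdges F X D) ≤ h * X := by
  classical
  unfold packEdges
  split_ifs with hp
  · refine card_biUnion_le.trans ?_
    calc ∑ i : Fin X, #(cEdges F (hp.choose i)) ≤ ∑ i : Fin X, h :=
          sum_le_sum fun i _ => (card_cEdges F _).trans hF
      _ = h * X := by simp [mul_comm]
  · simp

theorem packEdges_spec {ι V : Type*} [Fintype ι] (F : SimpleGraph ι) (X : ℕ)
    (D : Finset (Sym2 V)) (h : ∃ cs : Fin X → ι → V, IsPacking F D cs) :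
    ∃ cs : Fin X → ι → V, IsPacking F D cs ∧
      ∀ i, ∀ e ∈ cEdges F (cs i), e ∈ packEdges F X D := by
  classical
  refine ⟨h.choose, h.choose_spec, fun i e he => ?_⟩
  unfold packEdges
  rw [dif_pos h]
  exact mem_biUnion.mpr ⟨i, mem_univ _, he⟩

/-- If no `4 * h * t` edges meet all copies of `F` in `S` (`h2`), and there are no `t` edge-disjoint
triangles that share an edge with the chosen packing and have exactly two vertices in `S` (`h3`),
nor `t` inside `S` (`h4`), then a copy of `F` in `S` survives the deletion. -/
theorem good_copy {V : Type*} [Fintype V] [DecidableEq V] {ι : Type*} [Fintype ι]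
    (F : SimpleGraph ι) (P : Finset (Sym2 V)) (TT : Finset (Finset V))
    (hTT : ∀ T ∈ TT, #T = 3 ∧ edges T ⊆ P)
    (hdis : (TT : Set (Finset V)).PairwiseDisjoint edges) (S : Finset V) (h t : ℕ)
    (hF : (Fintype.card ι + 1).choose 2 ≤ h)
    (h2 : ∀ R : Finset (Sym2 V), #R ≤ h * (4 * t) → ∃ c, IsCopy F ((P ∩ edges S) \ R) c)
    (h3 : ¬ ∃ 𝒯 : Finset (Finset V), #𝒯 = t ∧ (𝒯 : Set (Finset V)).PairwiseDisjoint edges ∧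
      (∀ T ∈ 𝒯, #T = 3 ∧ #(T ∩ S) = 2 ∧
        ∃ e ∈ packEdges F (4 * t) (P ∩ edges S), e ∈ edges T) ∧ ∀ T ∈ 𝒯, edges T ⊆ P)
    (h4 : ¬ ∃ 𝒯 : Finset (Finset V), #𝒯 = t ∧ (𝒯 : Set (Finset V)).PairwiseDisjoint edges ∧
      (∀ T ∈ 𝒯, #T = 3 ∧ T ⊆ S) ∧ ∀ T ∈ 𝒯, edges T ⊆ P) :
    ∃ c : ι → V, Function.Injective c ∧ ∀ i j, F.Adj i j →
      c i ∈ S ∧ c j ∈ S ∧ (delGraph P TT).Adj (c i) (c j) := by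
  classical
  obtain ⟨cs, hcs, hcsP⟩ := packEdges_spec F (4 * t) (P ∩ edges S)
    (exists_packing F (P ∩ edges S) h (4 * t) hF h2)
  obtain ⟨i, hi⟩ := survive F P TT (fun T hT => (hTT T hT).1) S t cs hcs (by
      by_contra hcon
      obtain ⟨𝒯, hs, hc⟩ := exists_subset_card_eq (not_lt.mp hcon)
      refine h3 ⟨𝒯, hc, fun T hT T' hT' => hdis (mem_filter.mp (hs hT)).1 (mem_filter.mp (hs hT')).1,
        fun T hT => ?_, fun T hT => (hTT T (mem_filter.mp (hs hT)).1).2⟩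
      obtain ⟨hT1, hT2, i, e, he, heT⟩ := mem_filter.mp (hs hT)
      exact ⟨(hTT T hT1).1, hT2, e, hcsP i e he, heT⟩) (by
      by_contra hcon
      obtain ⟨𝒯, hs, hc⟩ := exists_subset_card_eq (not_lt.mp hcon)
      refine h4 ⟨𝒯, hc, fun T hT T' hT' => hdis (mem_filter.mp (hs hT)).1 (mem_filter.mp (hs hT')).1,
        fun T hT => ?_, fun T hT => (hTT T (mem_filter.mp (hs hT)).1).2⟩
      obtain ⟨hT1, hT2⟩ := mem_filter.mp (hs hT)
      exact ⟨(hTT T hT1).1, hT2⟩)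
  refine ⟨cs i, (hcs.1 i).1, fun x y hxy => ?_⟩
  have h1 := (hcs.1 i).2 x y hxy
  obtain ⟨hP, hS⟩ := mem_inter.mp h1
  obtain ⟨hx, hy, hne⟩ := mem_edges.mp hS
  refine ⟨hx, hy, ?_⟩
  rw [delGraph, SimpleGraph.fromEdgeSet_adj]
  exact ⟨⟨hP, hi _ ((mem_cEdges F _ _).mpr ⟨x, y, hxy, rfl⟩)⟩, hne⟩

/-- As `F` has no isolated vertex, a copy of `F` all of whose edges lie in `S` has its vertices in
`S`. -/
theorem fIndepNum_le {n m : ℕ} (F : SimpleGraph (Fin m)) (hF : ∀ i, ∃ j, F.Adj i j)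
    (G : SimpleGraph (Fin n)) (s : ℕ)
    (h : ∀ S : Finset (Fin n), #S = s → ∃ c : Fin m → Fin n, Function.Injective c ∧
      ∀ i j, F.Adj i j → c i ∈ S ∧ c j ∈ S ∧ G.Adj (c i) (c j)) :
    fIndepNum F G ≤ s := by
  refine csSup_le' ?_
  rintro _ ⟨S, rfl, hS⟩
  by_contra! hlt
  obtain ⟨S', hS', hcard⟩ := exists_subset_card_eq hlt.le
  obtain ⟨c, hc, hadj⟩ := h S' hcard
  have hm : ∀ i, c i ∈ S := fun i => by
    obtain ⟨j, hj⟩ := hF i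
    exact hS' (hadj i j hj).1
  refine hS ⟨fun i => ⟨c i, hm i⟩, fun i j hij => hc (by simpa using hij), fun i j hij => ?_⟩
  exact (hadj i j hij).2.2

/-! ### The union bound over all vertex sets -/

theorem cycle_exists_adj (m : ℕ) (hm : 2 ≤ m) (i : Fin m) :
    ∃ j, (SimpleGraph.cycleGraph m).Adj i j := by
  obtain ⟨m, rfl⟩ := Nat.exists_eq_add_of_le' hm
  exact ⟨i + 1, by rw [SimpleGraph.cycleGraph_adj]; right; simp⟩

theorem exp_two_le : Real.exp 1 * Real.exp 1 ≤ 8 := by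
  have h := Real.exp_one_lt_d9
  have h0 := Real.exp_pos 1
  nlinarith

/-- The estimate of `bad3` with `h * (4 * t)` edges in the packing, by `(N choose t) ≤ (e N / t) ^ t`
and `e ^ 2 ≤ 8`. -/
theorem bound_out (n h t M : ℕ) (ht : 0 < t) (hM : 0 < M) (hE : 128 * h * n ≤ M ^ 2) :
    ((h * (4 * t) * n).choose t : ℝ) * (2 / M : ℝ) ^ (t * 2) ≤ Real.exp (-t) := by
  have h1 := choose_bound (h * (4 * t) * n) t ht
  have hM' : (0 : ℝ) < M := by exact_mod_cast hM
  have ht' : (0 : ℝ) < t := by exact_mod_cast ht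
  have hE' : (128 * h * n : ℝ) ≤ M ^ 2 := by exact_mod_cast hE
  have h2 : Real.exp 1 * ((h * (4 * t) * n : ℕ) : ℝ) / t * (2 / M) ^ 2 ≤ (Real.exp 1)⁻¹ := by
    rw [inv_eq_one_div, le_div_iff₀ (Real.exp_pos 1)]
    have : Real.exp 1 * ((h * (4 * t) * n : ℕ) : ℝ) / t * (2 / M) ^ 2 * Real.exp 1 =
        (Real.exp 1 * Real.exp 1) * (16 * h * n) / M ^ 2 := by
      push_cast; field_simp; ring
    rw [this, div_le_one (by positivity)]
    calc (Real.exp 1 * Real.exp 1) * (16 * h * n : ℝ) ≤ 8 * (16 * h * n) := by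
          gcongr; exact exp_two_le
      _ ≤ _ := by linarith
  calc _ ≤ (Real.exp 1 * ((h * (4 * t) * n : ℕ) : ℝ) / t) ^ t * (2 / M : ℝ) ^ (t * 2) := by gcongr
    _ = (Real.exp 1 * ((h * (4 * t) * n : ℕ) : ℝ) / t * (2 / M) ^ 2) ^ t := by
      rw [mul_pow, ← pow_mul, mul_comm t 2]
    _ ≤ ((Real.exp 1)⁻¹) ^ t := by gcongr
    _ = _ := by rw [← Real.exp_neg, ← Real.exp_nat_mul]; ring_nf

/-- The estimate of `bad4` for `#S = s`, by the same inequalities. -/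
theorem bound_in (s t M : ℕ) (ht : 0 < t) (hM : 0 < M) (hE : 64 * s ^ 3 ≤ t * M ^ 3) :
    ((s ^ 3).choose t : ℝ) * (2 / M : ℝ) ^ (t * 3) ≤ Real.exp (-t) := by
  have h1 := choose_bound (s ^ 3) t ht
  have hM' : (0 : ℝ) < M := by exact_mod_cast hM
  have ht' : (0 : ℝ) < t := by exact_mod_cast ht
  have hE' : (64 * s ^ 3 : ℝ) ≤ t * M ^ 3 := by exact_mod_cast hE
  have h2 : Real.exp 1 * ((s ^ 3 : ℕ) : ℝ) / t * (2 / M) ^ 3 ≤ (Real.exp 1)⁻¹ := by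
    rw [inv_eq_one_div, le_div_iff₀ (Real.exp_pos 1)]
    have : Real.exp 1 * ((s ^ 3 : ℕ) : ℝ) / t * (2 / M) ^ 3 * Real.exp 1 =
        (Real.exp 1 * Real.exp 1) * (8 * s ^ 3) / (t * M ^ 3) := by
      push_cast; field_simp; ring
    rw [this, div_le_one (by positivity)]
    calc (Real.exp 1 * Real.exp 1) * (8 * s ^ 3 : ℝ) ≤ 8 * (8 * s ^ 3) := by
          gcongr; exact exp_two_le
      _ ≤ _ := by linarith
  calc _ ≤ (Real.exp 1 * ((s ^ 3 : ℕ) : ℝ) / t) ^ t * (2 / M : ℝ) ^ (t * 3) := by gcongr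
    _ = (Real.exp 1 * ((s ^ 3 : ℕ) : ℝ) / t * (2 / M) ^ 3) ^ t := by
      rw [mul_pow, ← pow_mul, mul_comm t 3]
    _ ≤ ((Real.exp 1)⁻¹) ^ t := by gcongr
    _ = _ := by rw [← Real.exp_neg, ← Real.exp_nat_mul]; ring_nf

/-- The probabilistic argument for unspecified parameters. The integer inequality `E1` makes `bad1`
applicable, `E2` makes `bad2` applicable with `r = h * (4 * t)`, and `E3` and `E4` turn the bounds
of `bad3` and `bad4` into `exp (-t)`, where `t = 2 * s * L`. -/
theorem minFIndep_le_of_params (n k : ℕ) (hk : 2 ≤ k) (hn : 0 < n) (M L a q s t h : ℕ)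
    (hM : 0 < M) (hL : 1 ≤ L) (hnL : (n : ℝ) ≤ Real.exp L) (hs : s = 4 * a * (q + 2))
    (ht : t = 2 * s * L) (hh : (2 * k + 1).choose 2 ≤ h) (ha : 0 < a) (hq : 2 ≤ q)
    (hqa : ∀ i < 2 * k - 1, q ^ i ≤ a)
    (E1 : 2 * M * ((a + 2 * a * (q + 2)) * L + h * (4 * t) + s * L) ≤ a * (2 * a * (q + 2)))
    (E2 : 4 * (M * (2 * (h * (4 * t)) * L + 2 * s * L) + h * (4 * t)) ≤ s * q ^ (2 * k - 1))
    (E3 : 128 * h * n ≤ M ^ 2) (E4 : 32 * s ^ 2 ≤ M ^ 3) :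
    minFIndep (SimpleGraph.cycleGraph (2 * k)) (⊤ : SimpleGraph (Fin 3)) n ≤ s := by
  classical
  let z : Fin M := ⟨0, hM⟩
  have : Nonempty (Fin M) := ⟨z⟩
  have : Nonempty (Fin n) := ⟨⟨0, hn⟩⟩
  have hM' : (0 : ℝ) < M := by exact_mod_cast hM
  have hs16 : 16 ≤ s * L := by rw [hs]; nlinarith [Nat.mul_le_mul ha hq, Nat.zero_le a]
  have ht0 : 0 < t := by rw [ht]; nlinarith
  have hcard : (Fintype.card (Fin n) : ℝ) ≤ Real.exp L := by simpa using hnL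
  have h1 := bad1 (V := Fin n) z a (2 * a * (q + 2)) (h * (4 * t)) L (s * L) hcard (by
    rw [Fintype.card_fin, le_div_iff₀ (by positivity)]
    have : ((2 * M * ((a + 2 * a * (q + 2)) * L + h * (4 * t) + s * L) : ℕ) : ℝ) ≤
      (a * (2 * a * (q + 2)) : ℕ) := by exact_mod_cast E1
    push_cast at this ⊢
    linarith)
  have hS : ∀ S ∈ powersetCard s (univ : Finset (Fin n)),
      pr (fun w : Sym2 (Fin n) → Fin M × Fin M =>
        (CrossRich z a (2 * a * (q + 2)) (h * (4 * t)) (fun e => (w e).1) ∧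
          ∃ R : Finset (Sym2 (Fin n)), #R ≤ h * (4 * t) ∧
          ¬ ∃ c, IsCopy (SimpleGraph.cycleGraph (2 * k)) ((present z w ∩ edges S) \ R) c) ∨
        (∃ 𝒯 : Finset (Finset (Fin n)), #𝒯 = t ∧
          (𝒯 : Set (Finset (Fin n))).PairwiseDisjoint edges ∧
          (∀ T ∈ 𝒯, #T = 3 ∧ #(T ∩ S) = 2 ∧
            ∃ e ∈ packEdges (SimpleGraph.cycleGraph (2 * k)) (4 * t) (present z w ∩ edges S),
              e ∈ edges T) ∧
          ∀ T ∈ 𝒯, edges T ⊆ present z w) ∨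
        (∃ 𝒯 : Finset (Finset (Fin n)), #𝒯 = t ∧
          (𝒯 : Set (Finset (Fin n))).PairwiseDisjoint edges ∧ (∀ T ∈ 𝒯, #T = 3 ∧ T ⊆ S) ∧
          ∀ T ∈ 𝒯, edges T ⊆ present z w)) ≤ 3 * Real.exp (-(2 * s * L)) := by
    intro S hS
    have hSs : #S = s := (mem_powersetCard.mp hS).2
    have h2 := bad2 z k hk a q (h * (4 * t)) ha hq hqa S (by rw [hSs, hs]) L (2 * s * L) hcard (by
      rw [Fintype.card_fin, le_div_iff₀ (by positivity), hSs]
      have : ((4 * (M * (2 * (h * (4 * t)) * L + 2 * s * L) + h * (4 * t)) : ℕ) : ℝ) ≤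
        (s * q ^ (2 * k - 1) : ℕ) := by exact_mod_cast E2
      push_cast at this ⊢
      linarith)
    have h3 := bad3 z S (packEdges (SimpleGraph.cycleGraph (2 * k)) (4 * t)) (h * (4 * t)) t
      (fun D => card_packEdges _ _ h (by simpa using hh) D)
    have h4 := bad4 z S t
    simp only [Fintype.card_fin] at h3 h4
    have h3' := h3.trans (bound_out n h t M ht0 hM E3)
    have h4' := h4.trans (bound_in (#S) t M ht0 hM (by rw [hSs, ht]; nlinarith [Nat.mul_le_mul_left (2 * s * L) E4, Nat.mul_le_mul_left (64 * s ^ 3) hL]))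
    have htc : (t : ℝ) = 2 * s * L := by rw [ht]; push_cast; ring
    rw [htc] at h3' h4'
    refine (pr_or _ _).trans ?_
    refine (add_le_add h2 ((pr_or _ _).trans (add_le_add h3' h4'))).trans_eq ?_
    ring
  -- at most `exp (s * L)` sets, each bad with probability at most `3 * exp (-(2 * s * L))`
  have hU := pr_union (powersetCard s (univ : Finset (Fin n))) _ _ hS
  have hchoose : (#(powersetCard s (univ : Finset (Fin n))) : ℝ) ≤ Real.exp (s * L) := by
    rw [card_powersetCard, card_univ]
    calc ((Fintype.card (Fin n)).choose s : ℝ) ≤ (Fintype.card (Fin n) : ℝ) ^ s := by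
          exact_mod_cast Nat.choose_le_pow _ s
      _ ≤ _ := pow_le_exp (by positivity) hcard s
  have hsmall : 4 * Real.exp (-(s * L : ℝ)) < 1 := by
    have h5 : (16 : ℝ) ≤ s * L := by exact_mod_cast hs16
    have h6 := Real.add_one_le_exp (s * L : ℝ)
    rw [Real.exp_neg, ← div_eq_mul_inv, div_lt_one (Real.exp_pos _)]
    linarith
  have hU' : (#(powersetCard s (univ : Finset (Fin n))) : ℝ) * (3 * Real.exp (-(2 * s * L))) ≤
      3 * Real.exp (-(s * L : ℝ)) := by
    calc _ ≤ Real.exp (s * L) * (3 * Real.exp (-(2 * s * L))) := by gcongr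
      _ = 3 * Real.exp (s * L + -(2 * s * L)) := by rw [Real.exp_add]; ring
      _ = _ := by ring_nf
  obtain ⟨w, hw⟩ := exists_not_of_pr (lt_of_le_of_lt
    ((pr_or _ _).trans (add_le_add h1 (hU.trans hU'))) (by linarith))
  simp only [not_or, not_not, not_exists, not_and] at hw
  obtain ⟨TT, hTT, hdis, hmax⟩ := exists_deletion (present z w)
  have hfree := delGraph_triangleFree (present z w) TT hmax
  have hmin : minFIndep (SimpleGraph.cycleGraph (2 * k)) (⊤ : SimpleGraph (Fin 3)) n ≤
      fIndepNum (SimpleGraph.cycleGraph (2 * k)) (delGraph (present z w) TT) :=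
    Nat.sInf_le ⟨_, hfree, rfl⟩
  refine hmin.trans ?_
  refine fIndepNum_le _ (cycle_exists_adj _ (by omega)) _ s fun S hSs => ?_
  have hwS := hw.2 S (mem_powersetCard.mpr ⟨subset_univ _, hSs⟩)
  refine good_copy (SimpleGraph.cycleGraph (2 * k)) (present z w) TT hTT hdis S h t
    (by simpa using hh) ?_ ?_ ?_
  · intro R hR
    by_contra hcon
    exact hwS.1 hw.1 R hR (fun c hc => hcon ⟨c, hc⟩)
  · rintro ⟨𝒯, h5, h6, h7, h8⟩
    exact hwS.2.1 𝒯 h5 h6 h7 h8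
  · rintro ⟨𝒯, h5, h6, h7, h8⟩
    exact hwS.2.2 𝒯 h5 h6 h7 h8

/-! ### Choice of parameters -/

theorem eventually_log_le (c m : ℕ) :
    ∀ᶠ n : ℕ in Filter.atTop, c * ⌈Real.log n⌉₊ ^ m ≤ Nat.sqrt n := by
  have h1 : ∀ᶠ x : ℝ in Filter.atTop, ‖Real.log x ^ (2 * m)‖ ≤
      ((c : ℝ) ^ 2 * 2 ^ (2 * m) + 1)⁻¹ * ‖x‖ :=
    (Real.isLittleO_pow_log_id_atTop (n := 2 * m)).def (by positivity)
  filter_upwards [tendsto_natCast_atTop_atTop.eventually h1, Filter.eventually_ge_atTop 3]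
    with n hn hn3
  have hlog : 1 ≤ Real.log n := by
    rw [Real.le_log_iff_exp_le (by positivity)]
    have := Real.exp_one_lt_d9
    have h3 : (3 : ℝ) ≤ n := by exact_mod_cast hn3
    linarith
  have hL : (⌈Real.log n⌉₊ : ℝ) ≤ 2 * Real.log n := by
    have := Nat.ceil_lt_add_one (a := Real.log n) (by linarith)
    linarith
  rw [Nat.le_sqrt']
  have h2 : (((c * ⌈Real.log n⌉₊ ^ m) ^ 2 : ℕ) : ℝ) ≤ n := by
    rw [Real.norm_of_nonneg (by positivity), Real.norm_of_nonneg (by positivity),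
      inv_mul_eq_div, le_div_iff₀ (by positivity)] at hn
    have h3 : (⌈Real.log n⌉₊ : ℝ) ^ (2 * m) ≤ (2 * Real.log n) ^ (2 * m) := by gcongr
    have h4 : 0 ≤ Real.log n ^ (2 * m) := by positivity
    push_cast
    calc ((c : ℝ) * (⌈Real.log n⌉₊ : ℝ) ^ m) ^ 2 = c ^ 2 * (⌈Real.log n⌉₊ : ℝ) ^ (2 * m) := by ring
      _ ≤ c ^ 2 * (2 * Real.log n) ^ (2 * m) := by gcongr
      _ = Real.log n ^ (2 * m) * (c ^ 2 * 2 ^ (2 * m)) := by rw [mul_pow]; ring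
      _ ≤ n := by linarith
  exact_mod_cast h2

/-- Condition `E1` of `minFIndep_le_of_params`, for `h = 3 * k ^ 2` and `t = 2 * s * L`. -/
theorem param_dense (k M L a q s : ℕ) (hk : 3 ≤ k) (ha : a = 104 * k ^ 2 * M * L)
    (hs : s = 4 * a * (q + 2)) :
    2 * M * ((a + 2 * a * (q + 2)) * L + 3 * k ^ 2 * (4 * (2 * s * L)) + s * L) ≤
      a * (2 * a * (q + 2)) := by
  have h1 : a + 2 * a * (q + 2) ≤ s := by
    rw [hs]
    nlinarith [Nat.zero_le (a * q)]
  have h2 : 24 * k ^ 2 + 2 ≤ 26 * k ^ 2 := by nlinarith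
  calc 2 * M * ((a + 2 * a * (q + 2)) * L + 3 * k ^ 2 * (4 * (2 * s * L)) + s * L)
      ≤ 2 * M * (s * L + 3 * k ^ 2 * (4 * (2 * s * L)) + s * L) := by gcongr
    _ = 2 * M * (s * L) * (24 * k ^ 2 + 2) := by ring
    _ ≤ 2 * M * (s * L) * (26 * k ^ 2) := Nat.mul_le_mul_left _ h2
    _ = 104 * k ^ 2 * M * L * (2 * a * (q + 2)) := by rw [hs]; ring
    _ = a * (2 * a * (q + 2)) := by rw [← ha]

/-- Condition `E2` of `minFIndep_le_of_params`, provided `q ^ (2 * k - 1)` is at least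
`300 * k ^ 2 * M * L ^ 2`. -/
theorem param_pairs (k M L s : ℕ) (hk : 3 ≤ k) (hM : 0 < M) (hL : 1 ≤ L) :
    4 * (M * (2 * (3 * k ^ 2 * (4 * (2 * s * L))) * L + 2 * s * L) +
      3 * k ^ 2 * (4 * (2 * s * L))) ≤ s * (300 * k ^ 2 * M * L ^ 2) := by
  have h2 : 72 * k ^ 2 + 2 ≤ 75 * k ^ 2 := by nlinarith
  have h3 : M * L ≤ M * L ^ 2 := Nat.mul_le_mul_left _ (by nlinarith)
  have h4 : L ≤ M * L ^ 2 := (Nat.le_mul_of_pos_left L hM).trans h3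
  calc 4 * (M * (2 * (3 * k ^ 2 * (4 * (2 * s * L))) * L + 2 * s * L) +
      3 * k ^ 2 * (4 * (2 * s * L)))
      = 4 * s * (48 * k ^ 2 * (M * L ^ 2) + 2 * (M * L) + 24 * k ^ 2 * L) := by ring
    _ ≤ 4 * s * (48 * k ^ 2 * (M * L ^ 2) + 2 * (M * L ^ 2) + 24 * k ^ 2 * (M * L ^ 2)) := by
      gcongr
    _ = 4 * s * (M * L ^ 2) * (72 * k ^ 2 + 2) := by ring
    _ ≤ 4 * s * (M * L ^ 2) * (75 * k ^ 2) := Nat.mul_le_mul_left _ h2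
    _ = s * (300 * k ^ 2 * M * L ^ 2) := by ring

/-- Condition `E3` of `minFIndep_le_of_params`. -/
theorem param_outer (n k M : ℕ) (hM : M = 20 * k * (Nat.sqrt n + 1)) :
    128 * (3 * k ^ 2) * n ≤ M ^ 2 := by
  have h1 : n ≤ (Nat.sqrt n + 1) * (Nat.sqrt n + 1) := (Nat.lt_succ_sqrt n).le
  calc 128 * (3 * k ^ 2) * n ≤ 128 * (3 * k ^ 2) * ((Nat.sqrt n + 1) * (Nat.sqrt n + 1)) :=
        Nat.mul_le_mul_left _ h1
    _ = 384 * (k ^ 2 * ((Nat.sqrt n + 1) * (Nat.sqrt n + 1))) := by ring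
    _ ≤ 400 * (k ^ 2 * ((Nat.sqrt n + 1) * (Nat.sqrt n + 1))) := Nat.mul_le_mul_right _ (by norm_num)
    _ = M ^ 2 := by rw [hM]; ring

/-- The parameters `M = 20 * k * (⌊√n⌋ + 1)`, `a = 104 * k ^ 2 * M * L`, `q = ⌈Y ^ (1 / (2k - 1))⌉`
with `Y = 300 * k ^ 2 * M * L ^ 2`, and `s = 4 * a * (q + 2)` are admissible as soon as `√n`
dominates the powers of `L` in `H1` and `H2`. The first is needed for `q ^ (2k - 2) ≤ a`, the second
for `32 * s ^ 2 ≤ M ^ 3`. The bound on `s` is stated for its `(2k - 1)`-th power, which avoids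
fractional exponents. -/
theorem choice_of_params (n k L : ℕ) (hk : 3 ≤ k) (hL : 1 ≤ L) (hn : 0 < n)
    (hnL : (n : ℝ) ≤ Real.exp L)
    (H1 : (3 * 2 ^ (2 * k - 2)) ^ (2 * k - 1) * L ^ (2 * k - 1) ≤ Nat.sqrt n)
    (H2 : ((32 * 1664 ^ 2) ^ 5 * 300 ^ 2 * k ^ 24) * L ^ 14 ≤ Nat.sqrt n) :
    ∃ s : ℕ, minFIndep (SimpleGraph.cycleGraph (2 * k)) (⊤ : SimpleGraph (Fin 3)) n ≤ s ∧
      (s : ℝ) ^ (2 * k - 1) ≤ (66560 * k ^ 3) ^ (2 * k - 1) * (12000 * k ^ 3) * n ^ k *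
        L ^ (2 * k + 1) := by
  obtain ⟨p, hp⟩ : ∃ p, 2 * k - 1 = p := ⟨_, rfl⟩
  have hp5 : 5 ≤ p := by omega
  have hp1 : 2 * k - 2 = p - 1 := by omega
  have hp2 : 2 * k + 1 = p + 2 := by omega
  rw [hp, hp1] at H1
  rw [hp, hp2]
  obtain ⟨M, hMdef⟩ : ∃ M, M = 20 * k * (Nat.sqrt n + 1) := ⟨_, rfl⟩
  have hsM : Nat.sqrt n + 1 ≤ M := by rw [hMdef]; exact Nat.le_mul_of_pos_left _ (by omega)
  have hM : 0 < M := by omega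
  have hk' : (3 : ℝ) ≤ k := by exact_mod_cast hk
  have hL' : (1 : ℝ) ≤ L := by exact_mod_cast hL
  have hM' : (1 : ℝ) ≤ M := by exact_mod_cast hM
  have hn' : (1 : ℝ) ≤ n := by exact_mod_cast hn
  obtain ⟨Y, hY⟩ : ∃ Y, Y = 300 * k ^ 2 * M * L ^ 2 := ⟨_, rfl⟩
  have hYM : M ≤ Y := by
    rw [hY, show 300 * k ^ 2 * M * L ^ 2 = 300 * k ^ 2 * L ^ 2 * M by ring]
    exact Nat.le_mul_of_pos_left _ (by positivity)
  have hY2 : 2 ≤ Y := by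
    rw [hY, show 300 * k ^ 2 * M * L ^ 2 = 300 * (k ^ 2 * M * L ^ 2) by ring]
    have : 0 < k ^ 2 * M * L ^ 2 := by positivity
    omega
  -- `y` is the real `p`-th root of `Y`
  obtain ⟨y, hy0, hyp⟩ : ∃ y : ℝ, 0 ≤ y ∧ y ^ p = Y :=
    ⟨(Y : ℝ) ^ ((p : ℝ)⁻¹), by positivity, Real.rpow_inv_natCast_pow (by positivity) (by omega)⟩
  have hy1 : 1 < y := by
    by_contra! h
    have h1 : y ^ p ≤ 1 := pow_le_one₀ hy0 h
    rw [hyp] at h1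
    have : (2 : ℝ) ≤ Y := by exact_mod_cast hY2
    linarith
  obtain ⟨q, hq⟩ : ∃ q, q = ⌈y⌉₊ := ⟨_, rfl⟩
  have hyq : y ≤ q := by rw [hq]; exact Nat.le_ceil y
  have hqy : (q : ℝ) ≤ 2 * y := by
    have := Nat.ceil_lt_add_one hy0
    rw [← hq] at this
    linarith
  have hq2 : 2 ≤ q := by
    have : (1 : ℝ) < q := hy1.trans_le hyq
    exact_mod_cast this
  have hqY : Y ≤ q ^ p := by
    have : (Y : ℝ) ≤ (q : ℝ) ^ p := by rw [← hyp]; gcongr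
    exact_mod_cast this
  obtain ⟨a, ha⟩ : ∃ a, a = 104 * k ^ 2 * M * L := ⟨_, rfl⟩
  have ha0 : 0 < a := by rw [ha]; positivity
  have hYr : (Y : ℝ) = 300 * k ^ 2 * M * L ^ 2 := by rw [hY]; push_cast; ring
  have har : (a : ℝ) = 104 * k ^ 2 * M * L := by rw [ha]; push_cast; ring
  -- by `H1`, as `√n ≤ Y = y ^ p`
  have hLy : 3 * 2 ^ (p - 1) * (L : ℝ) ≤ y := by
    refine le_of_pow_le_pow_left₀ (n := p) (by omega) hy0 ?_
    rw [hyp, mul_pow]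
    have : (3 * 2 ^ (p - 1)) ^ p * L ^ p ≤ Y := by omega
    exact_mod_cast this
  have hqa : ∀ i < p, q ^ i ≤ a := by
    intro i hi
    refine (Nat.pow_le_pow_right (by omega) (show i ≤ p - 1 by omega)).trans ?_
    have h1 : (q : ℝ) ^ (p - 1) ≤ a := by
      have h2 : (q : ℝ) ^ (p - 1) ≤ 2 ^ (p - 1) * y ^ (p - 1) := by
        rw [← mul_pow]; gcongr
      have h3 : y ^ (p - 1) * y = Y := by rw [← pow_succ, ← hyp]; congr 1; omega
      refine h2.trans (le_of_mul_le_mul_right ?_ (zero_lt_one.trans hy1))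
      rw [mul_assoc, h3, hYr, har]
      have h4 : (104 * k ^ 2 * M * L : ℝ) * (3 * 2 ^ (p - 1) * L) ≤ 104 * k ^ 2 * M * L * y := by
        gcongr
      have h5 : (0 : ℝ) ≤ 2 ^ (p - 1) * (k ^ 2 * M * L ^ 2) := by positivity
      nlinarith
    exact_mod_cast h1
  obtain ⟨s, hs⟩ : ∃ s, s = 4 * a * (q + 2) := ⟨_, rfl⟩
  have hsr : (s : ℝ) ≤ 1664 * k ^ 2 * M * L * y := by
    have hq2' : (2 : ℝ) ≤ q := by exact_mod_cast hq2
    rw [hs]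
    push_cast
    calc (4 * a * (q + 2) : ℝ) ≤ 4 * a * (4 * y) := by gcongr; linarith
      _ = _ := by rw [har]; ring
  have hMn : (M : ℝ) ≤ 40 * k * √n := by
    have h1 : ((Nat.sqrt n : ℕ) : ℝ) ≤ √n := Real.nat_sqrt_le_real_sqrt
    have h2 : 1 ≤ √(n : ℝ) := Real.one_le_sqrt.mpr hn'
    rw [hMdef]
    push_cast
    calc (20 * k * (Nat.sqrt n + 1) : ℝ) ≤ 20 * k * (2 * √n) := by gcongr; linarith
      _ = _ := by ring
  refine ⟨s, minFIndep_le_of_params n k (by omega) hn M L a q s (2 * s * L) (3 * k ^ 2) hM hL hnL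
    hs rfl ?_ ha0 hq2 (by rw [hp]; exact hqa) ?_ ?_ ?_ ?_, ?_⟩
  · rw [Nat.choose_two_right, Nat.add_sub_cancel]
    apply Nat.div_le_of_le_mul
    nlinarith
  · exact param_dense k M L a q s hk ha hs
  · rw [hp]
    refine (param_pairs k M L s hk hM hL).trans (Nat.mul_le_mul_left s ?_)
    rwa [← hY]
  · exact param_outer n k M hMdef
  -- as `5 ≤ p`, the fifth power of `y ^ 2` is at most `Y ^ 2`, which is of order `M ^ 2`
  · have h1 : (32 * 1664 ^ 2 * k ^ 4 * L ^ 2 * y ^ 2 : ℝ) ≤ M := by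
      refine le_of_pow_le_pow_left₀ (n := 5) (by omega) (by positivity) ?_
      have h2 : y ^ 5 ≤ Y := by rw [← hyp]; exact pow_le_pow_right₀ hy1.le hp5
      have h3 : ((32 * 1664 ^ 2) ^ 5 * 300 ^ 2 * k ^ 24 * L ^ 14 : ℝ) ≤ M := by
        have : (32 * 1664 ^ 2) ^ 5 * 300 ^ 2 * k ^ 24 * L ^ 14 ≤ M := by omega
        exact_mod_cast this
      calc (32 * 1664 ^ 2 * k ^ 4 * L ^ 2 * y ^ 2 : ℝ) ^ 5
          = (32 * 1664 ^ 2 * k ^ 4 * L ^ 2 : ℝ) ^ 5 * (y ^ 5) ^ 2 := by ring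
        _ ≤ (32 * 1664 ^ 2 * k ^ 4 * L ^ 2 : ℝ) ^ 5 * (Y : ℝ) ^ 2 := by gcongr
        _ = ((32 * 1664 ^ 2) ^ 5 * 300 ^ 2 * k ^ 24 * L ^ 14 : ℝ) * M ^ 2 := by rw [hYr]; ring
        _ ≤ M * M ^ 2 := by gcongr
        _ = (M : ℝ) ^ 3 := by ring
        _ ≤ (M : ℝ) ^ 5 := pow_le_pow_right₀ hM' (by norm_num)
    have h2 : (32 * (s : ℝ) ^ 2) ≤ (M : ℝ) ^ 3 := by
      calc (32 * (s : ℝ) ^ 2) ≤ 32 * (1664 * k ^ 2 * M * L * y) ^ 2 := by gcongr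
        _ = (32 * 1664 ^ 2 * k ^ 4 * L ^ 2 * y ^ 2 : ℝ) * M ^ 2 := by ring
        _ ≤ M * M ^ 2 := by gcongr
        _ = _ := by ring
    exact_mod_cast h2
  · have h1 : (s : ℝ) ≤ 66560 * k ^ 3 * √n * L * y := by
      refine hsr.trans ?_
      calc (1664 * k ^ 2 * M * L * y : ℝ) ≤ 1664 * k ^ 2 * (40 * k * √n) * L * y := by gcongr
        _ = _ := by ring
    have h2 : (Y : ℝ) ≤ 12000 * k ^ 3 * √n * L ^ 2 := by
      rw [hYr]
      calc (300 * k ^ 2 * M * L ^ 2 : ℝ) ≤ 300 * k ^ 2 * (40 * k * √n) * L ^ 2 := by gcongr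
        _ = _ := by ring
    have h3 : √(n : ℝ) ^ p * √n = n ^ k := by
      rw [← pow_succ, show p + 1 = 2 * k by omega, pow_mul, Real.sq_sqrt (by positivity)]
    calc (s : ℝ) ^ p ≤ (66560 * k ^ 3 * √n * L * y) ^ p := by gcongr
      _ = (66560 * k ^ 3) ^ p * √n ^ p * L ^ p * Y := by rw [← hyp]; ring
      _ ≤ (66560 * k ^ 3) ^ p * √n ^ p * L ^ p * (12000 * k ^ 3 * √n * L ^ 2) := by gcongr
      _ = (66560 * k ^ 3) ^ p * (12000 * k ^ 3) * (√n ^ p * √n) * L ^ (p + 2) := by ring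
      _ = _ := by rw [h3]

end Cycle

theorem stmt2 (k : ℕ) (hk : 3 ≤ k) :
    ∃ (C : ℝ) (N : ℕ), 0 < C ∧ ∀ n : ℕ, n > N →
      (minFIndep (SimpleGraph.cycleGraph (2 * k)) (⊤ : SimpleGraph (Fin 3)) n : ℝ) ≤
        C * (n : ℝ) ^ ((k : ℝ) / (2 * k - 1)) * Real.log n ^ ((3 * k : ℝ) / (2 * k - 1)) := by
  obtain ⟨N, hN⟩ := Filter.eventually_atTop.mp
    (((Cycle.eventually_log_le ((3 * 2 ^ (2 * k - 2)) ^ (2 * k - 1)) (2 * k - 1)).and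
      (Cycle.eventually_log_le ((32 * 1664 ^ 2) ^ 5 * 300 ^ 2 * k ^ 24) 14)).and
      (Filter.eventually_ge_atTop 3))
  refine ⟨66560 * k ^ 3 * (12000 * k ^ 3 * 2 ^ (2 * k + 1)), N, by positivity, fun n hn => ?_⟩
  obtain ⟨⟨H1, H2⟩, hn3⟩ := hN n hn.le
  have h3 : (3 : ℝ) ≤ n := by exact_mod_cast hn3
  have hk' : (3 : ℝ) ≤ k := by exact_mod_cast hk
  have hlog : 1 ≤ Real.log n := by
    rw [Real.le_log_iff_exp_le (by positivity)]
    have := Real.exp_one_lt_d9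
    linarith
  obtain ⟨L, hL⟩ : ∃ L, L = ⌈Real.log n⌉₊ := ⟨_, rfl⟩
  have hL1 : Real.log n ≤ L := by rw [hL]; exact Nat.le_ceil _
  have hL2 : (L : ℝ) ≤ 2 * Real.log n := by
    have := Nat.ceil_lt_add_one (a := Real.log n) (by linarith)
    rw [← hL] at this
    linarith
  rw [← hL] at H1 H2
  obtain ⟨s, hs, hsp⟩ := Cycle.choice_of_params n k L hk
    (by have : (1 : ℝ) ≤ L := hlog.trans hL1
        exact_mod_cast this) (by omega)
    (by rw [← Real.log_le_iff_le_exp (by positivity)]; exact hL1) H1 H2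
  refine (Nat.cast_le.mpr hs).trans ?_
  have hexp : ((2 * k - 1 : ℕ) : ℝ) = 2 * k - 1 := by
    rw [Nat.cast_sub (by omega)]; push_cast; ring
  have hpos : (0 : ℝ) < 2 * k - 1 := by linarith
  -- compare the `(2k - 1)`-th powers of both sides
  refine le_of_pow_le_pow_left₀ (n := 2 * k - 1) (by omega) (by positivity) (hsp.trans ?_)
  have hn1 : ((n : ℝ) ^ ((k : ℝ) / (2 * k - 1))) ^ (2 * k - 1) = (n : ℝ) ^ k := by
    rw [← Real.rpow_natCast, ← Real.rpow_mul (by positivity), hexp, div_mul_cancel₀ _ hpos.ne',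
      Real.rpow_natCast]
  have hl1 : (Real.log n ^ ((3 * k : ℝ) / (2 * k - 1))) ^ (2 * k - 1) = Real.log n ^ (3 * k) := by
    rw [← Real.rpow_natCast, ← Real.rpow_mul (by positivity), hexp, div_mul_cancel₀ _ hpos.ne',
      ← Real.rpow_natCast]
    push_cast
    rfl
  rw [mul_pow _ (Real.log n ^ _), mul_pow _ ((n : ℝ) ^ _), mul_pow (66560 * (k : ℝ) ^ 3), hn1, hl1]
  -- the exponent `2 * k + 1` of the logarithm is at most `3 * k`
  have hL3 : (L : ℝ) ^ (2 * k + 1) ≤ 2 ^ (2 * k + 1) * Real.log n ^ (3 * k) := by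
    calc (L : ℝ) ^ (2 * k + 1) ≤ (2 * Real.log n) ^ (2 * k + 1) := by gcongr
      _ = 2 ^ (2 * k + 1) * Real.log n ^ (2 * k + 1) := by rw [mul_pow]
      _ ≤ _ := by gcongr; omega
  have hone : (1 : ℝ) ≤ 12000 * k ^ 3 * 2 ^ (2 * k + 1) := by
    have h4 : (1 : ℝ) ≤ k ^ 3 := one_le_pow₀ (by linarith)
    have h5 : (1 : ℝ) ≤ 2 ^ (2 * k + 1) := one_le_pow₀ (by norm_num)
    nlinarith
  have hc : (12000 * k ^ 3 * 2 ^ (2 * k + 1) : ℝ) ≤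
      (12000 * k ^ 3 * 2 ^ (2 * k + 1)) ^ (2 * k - 1) := le_self_pow₀ hone (by omega)
  calc _ ≤ (66560 * k ^ 3) ^ (2 * k - 1) * (12000 * k ^ 3) * n ^ k *
        (2 ^ (2 * k + 1) * Real.log n ^ (3 * k)) := by gcongr
    _ = (66560 * k ^ 3) ^ (2 * k - 1) * (12000 * k ^ 3 * 2 ^ (2 * k + 1)) * n ^ k *
        Real.log n ^ (3 * k) := by
      generalize (66560 * (k : ℝ) ^ 3) ^ (2 * k - 1) = u
      ring
    _ ≤ _ := by gcongr
end

section
/- There exist constants C > 0 and N such that for every integer n > N, f_{C_4,K_4}(n) ≤ C · n^{5/11} · (log n)^{3}. -/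
/-! ### The Hermitian unital -/

section geom
open scoped Classical
open Polynomial

/-- The features of the affine Hermitian unital of order `q` used below: `I v p` says that the
line `v` passes through the point `p`. There are at most `q ^ 3` points
and between `q ^ 4 / 2` and `q ^ 4` lines, a line carries `q` or `q + 1` points, two lines meet at most once, and no line crosses the three
sides of a triangle away from its vertices (so four lines never meet in six distinct points). -/
structure UnitalLike (q : ℕ) {V P : Type} [Fintype V] [Fintype P] (I : V → P → Prop) : Prop where
  card_points : Fintype.card P ≤ q ^ 3
  card_lines_le : Fintype.card V ≤ q ^ 4
  card_lines_ge : q ^ 4 ≤ 2 * Fintype.card V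
  deg_ge : ∀ v, q ≤ (Finset.univ.filter fun p => I v p).card
  deg_le : ∀ v, (Finset.univ.filter fun p => I v p).card ≤ q + 1
  linear : ∀ ⦃v w p p'⦄, v ≠ w → I v p → I w p → I v p' → I w p' → p = p'
  onan : ∀ ⦃l₁ l₂ l₃ l₄ P Q S R₁ R₂ R₃⦄, I l₁ P → I l₂ P → I l₁ Q → I l₃ Q → I l₂ S → I l₃ S →
    I l₁ R₁ → I l₄ R₁ → I l₂ R₂ → I l₄ R₂ → I l₃ R₃ → I l₄ R₃ →
    ¬ I l₄ P → ¬ I l₄ Q → ¬ I l₄ S → ¬ I l₁ S → P ≠ Q → False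

/-- The trace map `y ↦ y ^ q + y` takes every value at most `q` times. -/
theorem card_trace_le {F : Type*} [Field F] [Fintype F] {q : ℕ} (hq : 2 ≤ q) (c : F) :
    (Finset.univ.filter fun y : F => y ^ q + y = c).card ≤ q := by
  set p : F[X] := X ^ q + (X - C c) with hp
  have hd : p.natDegree = q := by
    rw [hp, natDegree_add_eq_left_of_natDegree_lt] <;> simp
    omega
  have hp0 : p ≠ 0 := fun h => by rw [h] at hd; simp at hd; omega
  calc _ ≤ p.roots.toFinset.card := by
        apply Finset.card_le_card
        intro y hy
        simp only [Finset.mem_filter, Finset.mem_univ, true_and] at hy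
        rw [Multiset.mem_toFinset, mem_roots hp0, IsRoot.def, hp]
        simp [← hy]
    _ ≤ _ := (Multiset.toFinset_card_le _).trans ((card_roots' p).trans hd.le)

theorem card_pow_eq_le {F : Type*} [Field F] [Fintype F] {k : ℕ} (hk : 0 < k) (c : F) :
    (Finset.univ.filter fun y : F => y ^ k = c).card ≤ k := by
  calc _ ≤ (nthRoots k c).toFinset.card := by
        apply Finset.card_le_card
        intro y hy
        simpa [mem_nthRoots hk] using hy
    _ ≤ _ := (Multiset.toFinset_card_le _).trans (card_nthRoots k c)

/-- The norm map `y ↦ y ^ (q + 1)` of the quadratic extension takes every nonzero value of the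
ground field at least `q + 1` times, since its fibres have size at most `q + 1` and the `q - 1`
fibres over nonzero values exhaust the `q ^ 2 - 1` units. -/
theorem card_norm_ge {F : Type*} [Field F] [Fintype F] {q : ℕ} (hq : 2 ≤ q)
    (hF : Fintype.card F = q ^ 2) {s : F} (hs : s ≠ 0) (hsq : s ^ q = s) :
    q + 1 ≤ (Finset.univ.filter fun y : F => y ^ (q + 1) = s).card := by
  set N : F → ℕ := fun s => (Finset.univ.filter fun y : F => y ^ (q + 1) = s).card with hN
  set Z : Finset F := Finset.univ.filter fun y : F => y ^ (q - 1) = 1 with hZ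
  have hZc : Z.card ≤ q - 1 := card_pow_eq_le (by omega) 1
  have hsZ : s ∈ Z := by
    simp only [hZ, Finset.mem_filter, Finset.mem_univ, true_and]
    have : s ^ (q - 1) * s = 1 * s := by
      rw [← pow_succ, Nat.sub_add_cancel (by omega), hsq, one_mul]
    exact mul_right_cancel₀ hs this
  have hsum : q ^ 2 - 1 = ∑ t ∈ Z, N t := by
    have h1 : (Finset.univ.erase (0 : F)).card = q ^ 2 - 1 := by
      rw [Finset.card_erase_of_mem (Finset.mem_univ _), Finset.card_univ, hF]
    rw [← h1, Finset.card_eq_sum_card_fiberwise (f := fun y => y ^ (q + 1)) (t := Z)]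
    · refine Finset.sum_congr rfl fun t ht => ?_
      congr 1
      ext y
      simp only [Finset.mem_filter, Finset.mem_erase, Finset.mem_univ, and_true, true_and,
        and_iff_right_iff_imp]
      rintro rfl rfl
      simp only [hZ, Finset.mem_filter] at ht
      rw [zero_pow (by omega), zero_pow (by omega)] at ht
      simp at ht
    · intro y hy
      simp only [Finset.coe_erase, Finset.coe_univ, Set.mem_sdiff, Set.mem_singleton_iff] at hy
      simp only [hZ, Finset.coe_filter, Finset.mem_univ, true_and, Set.mem_ofPred_eq]
      rw [← pow_mul, show (q + 1) * (q - 1) = q ^ 2 - 1 from by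
        obtain ⟨k, rfl⟩ : ∃ k, q = k + 1 := ⟨q - 1, by omega⟩
        simp; ring_nf; omega, ← hF]
      exact FiniteField.pow_card_sub_one_eq_one y hy.2
  rw [← Finset.add_sum_erase Z N hsZ] at hsum
  have hb : ∑ t ∈ Z.erase s, N t ≤ (q - 2) * (q + 1) := by
    refine (Finset.sum_le_card_nsmul _ _ (q + 1) fun t _ => card_pow_eq_le (by omega) t).trans ?_
    rw [smul_eq_mul, Finset.card_erase_of_mem hsZ]
    exact Nat.mul_le_mul_right _ (by omega)
  change q + 1 ≤ N s
  obtain ⟨k, rfl⟩ : ∃ k, q = k + 2 := ⟨q - 2, by omega⟩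
  simp only [Nat.add_sub_cancel] at hb
  have : (k+2)^2 = k * (k + 2 + 1) + k + 4 := by ring
  omega

/-- O'Nan's lemma for the Hermitian curve `σ y + y = x * σ x`: a line `4` cannot meet the three
sides of a triangle inscribed in the curve in further points of the curve, unless it passes through
a vertex. With `u`, `v`, `w` the values of `y - a₄ x - b₄` at the vertices and `⟨·,·⟩` the
Hermitian form, isotropy of the third point on the side joining the first two
vertices says that `v * σ u * ⟨P, Q⟩` is anti-invariant under `σ`. Multiplying the three relations,
the product `⟨P, Q⟩⟨Q, S⟩⟨S, P⟩` becomes anti-invariant. But its sum with its conjugate is the Gram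
determinant, up to sign the norm of the determinant of the triangle, which does not vanish. -/
theorem onan_alg {F : Type*} [Field F] (σ : F →+* F) (hσ : ∀ x, σ (σ x) = x)
    {a₁ b₁ a₂ b₂ a₃ b₃ a₄ b₄ x₁ y₁ x₂ y₂ x₃ y₃ r₁ s₁ r₂ s₂ r₃ s₃ : F}
    (hP : σ y₁ + y₁ = x₁ * σ x₁) (hQ : σ y₂ + y₂ = x₂ * σ x₂) (hS : σ y₃ + y₃ = x₃ * σ x₃)
    (hR₁ : σ s₁ + s₁ = r₁ * σ r₁) (hR₂ : σ s₂ + s₂ = r₂ * σ r₂) (hR₃ : σ s₃ + s₃ = r₃ * σ r₃)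
    (h1P : y₁ = a₁ * x₁ + b₁) (h2P : y₁ = a₂ * x₁ + b₂)
    (h1Q : y₂ = a₁ * x₂ + b₁) (h3Q : y₂ = a₃ * x₂ + b₃)
    (h2S : y₃ = a₂ * x₃ + b₂) (h3S : y₃ = a₃ * x₃ + b₃)
    (h1R : s₁ = a₁ * r₁ + b₁) (h4R₁ : s₁ = a₄ * r₁ + b₄)
    (h2R : s₂ = a₂ * r₂ + b₂) (h4R₂ : s₂ = a₄ * r₂ + b₄)
    (h3R : s₃ = a₃ * r₃ + b₃) (h4R₃ : s₃ = a₄ * r₃ + b₄)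
    (n4P : y₁ ≠ a₄ * x₁ + b₄) (n4Q : y₂ ≠ a₄ * x₂ + b₄) (n4S : y₃ ≠ a₄ * x₃ + b₄)
    (n1S : y₃ ≠ a₁ * x₃ + b₁) (hne : x₁ ≠ x₂) : False := by
  -- orthogonality relation on one side of the triangle
  have key : ∀ {a b x y x' y' r s : F}, σ y + y = x * σ x → σ y' + y' = x' * σ x' →
      σ s + s = r * σ r → y = a * x + b → y' = a * x' + b → s = a * r + b → s = a₄ * r + b₄ →
      (y' - a₄ * x' - b₄) * σ (y - a₄ * x - b₄) * (y + σ y' - x * σ x') =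
      - σ ((y' - a₄ * x' - b₄) * σ (y - a₄ * x - b₄) * (y + σ y' - x * σ x')) := by
    intro a b x y x' y' r s h h' hr l l' lr m
    have e1 : (y' - a₄ * x' - b₄) * x - (y - a₄ * x - b₄) * x' =
        ((y' - a₄ * x' - b₄) - (y - a₄ * x - b₄)) * r := by
      subst l l'
      linear_combination (x - x') * (m - lr)
    have e2 : (y' - a₄ * x' - b₄) * y - (y - a₄ * x - b₄) * y' =
        ((y' - a₄ * x' - b₄) - (y - a₄ * x - b₄)) * s := by
      rw [l, l', lr] at *
      linear_combination a * e1
    generalize hu : y - a₄ * x - b₄ = u at *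
    generalize hv : y' - a₄ * x' - b₄ = v at *
    have f1 := congrArg σ e1
    have f2 := congrArg σ e2
    simp only [map_sub, map_mul, map_add, hσ] at f1 f2 ⊢
    linear_combination (v * σ v) * h + (u * σ u) * h' - ((v - u) * (σ v - σ u)) * hr
      - (σ v - σ u) * e2 - (v - u) * f2
      + e1 * (σ v * σ x - σ u * σ x') + f1 * ((v - u) * r)
  have k1 := key hP hQ hR₁ h1P h1Q h1R h4R₁
  have k2 := key hQ hS hR₃ h3Q h3S h3R h4R₃
  have k3 := key hS hP hR₂ h2S h2P h2R h4R₂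
  have u1 : y₁ - a₄ * x₁ - b₄ ≠ 0 := fun h => n4P (by linear_combination h)
  have u2 : y₂ - a₄ * x₂ - b₄ ≠ 0 := fun h => n4Q (by linear_combination h)
  have u3 : y₃ - a₄ * x₃ - b₄ ≠ 0 := fun h => n4S (by linear_combination h)
  generalize y₁ - a₄ * x₁ - b₄ = u at *
  generalize y₂ - a₄ * x₂ - b₄ = v at *
  generalize y₃ - a₄ * x₃ - b₄ = w at *
  have hD : (x₁ - x₂) * (y₃ - a₁ * x₃ - b₁) ≠ 0 :=
    mul_ne_zero (sub_ne_zero.2 hne) (fun h => n1S (by linear_combination h))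
  have hD' : σ ((x₁ - x₂) * (y₃ - a₁ * x₃ - b₁)) ≠ 0 := (map_ne_zero σ).2 hD
  have dd : (x₁ - x₂) * (y₃ - a₁ * x₃ - b₁) =
      x₁ * (y₃ - y₂) + x₂ * (y₁ - y₃) + x₃ * (y₂ - y₁) := by
    rw [h1P, h1Q]; ring
  have uσ : u * σ u * (v * σ v) * (w * σ w) ≠ 0 := by simp [u1, u2, u3]
  have e1 : σ y₁ = x₁ * σ x₁ - y₁ := by linear_combination hP
  have e2 : σ y₂ = x₂ * σ x₂ - y₂ := by linear_combination hQ
  have e3 : σ y₃ = x₃ * σ x₃ - y₃ := by linear_combination hS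
  have prod : ∀ {A B C A' B' C' : F}, A = -A' → B = -B' → C = -C' → A * B * C + A' * B' * C' = 0 := by
    rintro A B C A' B' C' rfl rfl rfl; ring
  have p := prod k1 k2 k3
  apply mul_ne_zero uσ (mul_ne_zero hD hD')
  rw [dd, ← p]
  simp only [map_sub, map_mul, map_add, hσ, e1, e2, e3]
  ring

theorem card_filter_prod_le {F : Type*} [Fintype F] (R : F → F → Prop) {q : ℕ}
    (h : ∀ x, (Finset.univ.filter fun y => R x y).card ≤ q) :
    (Finset.univ.filter fun z : F × F => R z.1 z.2).card ≤ Fintype.card F * q := by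
  rw [Finset.card_filter, Fintype.sum_prod_type]
  simp_rw [← Finset.card_filter]
  exact (Finset.sum_le_card_nsmul _ _ q fun t _ => h t).trans (by simp)

/-- The points of the Hermitian curve `σ y + y = x * σ x` over the field with `q ^ 2` elements
(`σ` the Frobenius `x ↦ x ^ q`) and the non-tangent lines `y = a x + b` form such a geometry. -/
theorem exists_unitalLike {q : ℕ} (hq : q.Prime) :
    ∃ (V P : Type) (_ : Fintype V) (_ : Fintype P) (I : V → P → Prop), UnitalLike q I := by
  have : Fact q.Prime := ⟨hq⟩
  have hq2 := hq.two_le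
  let F := GaloisField q 2
  let : Fintype F := Fintype.ofFinite F
  have hF : Fintype.card F = q ^ 2 := by
    rw [← Nat.card_eq_fintype_card]; exact GaloisField.card q 2 two_ne_zero
  let σ : F →+* F := frobenius F q
  have σd : ∀ x, σ x = x ^ q := fun x => frobenius_def q x
  have hσ : ∀ x, σ (σ x) = x := fun x => by
    rw [σd, σd, ← pow_mul, ← sq, ← hF, FiniteField.pow_card]
  let P := {z : F × F // σ z.2 + z.2 = z.1 * σ z.1}
  -- A line is tangent exactly when `σ b + b + a * σ a = 0`, and these lines are left out.
  let V := {z : F × F // σ z.2 + z.2 + z.1 * σ z.1 ≠ 0}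
  let I : V → P → Prop := fun v p => p.1.2 = v.1.1 * p.1.1 + v.1.2
  have hFF : Fintype.card (F × F) = q ^ 4 := by rw [Fintype.card_prod, hF]; ring
  have hx : ∀ {v : V} {p p' : P}, I v p → I v p' → p.1.1 = p'.1.1 → p = p' := by
    intro v p p' h h' e
    apply Subtype.ext
    apply Prod.ext e
    rw [h, h', e]
  -- the abscissae of the points on a line
  have hdeg : ∀ v : V, (Finset.univ.filter fun p => I v p).card =
      (Finset.univ.filter fun y : F =>
        y ^ (q + 1) = σ v.1.2 + v.1.2 + v.1.1 * σ v.1.1).card := by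
    intro v
    refine Finset.card_bij (fun p _ => p.1.1 - σ v.1.1) ?_ ?_ ?_
    · intro p hp
      have hp : I v p := by simpa using hp
      have h2 := p.2
      simp only [Finset.mem_filter, Finset.mem_univ, true_and]
      rw [pow_succ, ← σd, map_sub, hσ]
      rw [hp, map_add, map_mul] at h2
      linear_combination -h2
    · intro p hp p' hp' h
      exact hx (by simpa using hp) (by simpa using hp') (by simpa using h)
    · intro w hw
      simp only [Finset.mem_filter, Finset.mem_univ, true_and] at hw
      rw [pow_succ, ← σd] at hw
      refine ⟨⟨(w + σ v.1.1, v.1.1 * (w + σ v.1.1) + v.1.2), ?_⟩, ?_, ?_⟩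
      · simp only [map_add, map_mul, hσ]
        linear_combination -hw
      · simp [I]
      · simp
  refine ⟨V, P, inferInstance, inferInstance, I, ?_⟩
  have htr : ∀ c : F, (Finset.univ.filter fun y : F => σ y + y = c).card ≤ q := fun c => by
    simp_rw [σd]; exact card_trace_le hq2 c
  constructor
  · rw [Fintype.card_subtype]
    refine (card_filter_prod_le (fun x y => σ y + y = x * σ x) fun x => htr _).trans ?_
    rw [hF]; exact le_of_eq (by ring)
  · rw [← hFF]; exact Fintype.card_subtype_le _
  · have h1 : Fintype.card V + (Finset.univ.filter fun z : F × F =>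
        σ z.2 + z.2 = - (z.1 * σ z.1)).card = q ^ 4 := by
      rw [Fintype.card_subtype, ← hFF, ← Finset.card_univ, add_comm,
        ← Finset.card_filter_add_card_filter_not (s := Finset.univ) (fun z : F × F =>
        σ z.2 + z.2 = - (z.1 * σ z.1))]
      simp only [eq_neg_iff_add_eq_zero, ne_eq]
    have h2 := card_filter_prod_le (fun x y => σ y + y = -(x * σ x)) fun x => htr _
    rw [hF] at h2
    have h3 : 2 * (q ^ 2 * q) ≤ q ^ 4 := by
      calc 2 * (q ^ 2 * q) ≤ q * (q ^ 2 * q) := Nat.mul_le_mul_right _ hq2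
        _ = _ := by ring
    omega
  · intro v
    rw [hdeg]
    refine (Nat.le_succ q).trans (card_norm_ge hq2 hF v.2 ?_)
    rw [← σd]
    simp only [map_add, map_mul, hσ]; ring
  · intro v
    rw [hdeg]
    exact card_pow_eq_le (by omega) _
  · intro v w p p' hvw h1 h2 h3 h4
    apply hx h1 h3
    by_contra hne
    apply hvw
    have ha : v.1.1 = w.1.1 := by
      have h : (v.1.1 - w.1.1) * (p.1.1 - p'.1.1) = 0 := by
        simp only [I] at h1 h2 h3 h4
        linear_combination h2 - h1 + h3 - h4
      rcases mul_eq_zero.1 h with h | h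
      · exact sub_eq_zero.1 h
      · exact absurd (sub_eq_zero.1 h) hne
    apply Subtype.ext
    apply Prod.ext ha
    simp only [I] at h1 h2
    rw [ha] at h1
    linear_combination h2 - h1
  · intro l₁ l₂ l₃ l₄ P Q S R₁ R₂ R₃ h1 h2 h3 h4 h5 h6 h7 h8 h9 h10 h11 h12 n1 n2 n3 n4 hne
    exact onan_alg σ hσ P.2 Q.2 S.2 R₁.2 R₂.2 R₃.2 h1 h2 h3 h4 h5 h6 h7 h8 h9 h10 h11 h12 n1 n2 n3
      n4 (fun h => hne (hx h1 h3 h))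

end geom

/-! ### Containers for tuples of blocks -/

section containers
open scoped Classical

/-- The sets with property `𝒮` are covered by at most `N` subsets of `U`, each of which has at most
`(1 - 1 / k) * |U|` elements; the latter bound is written without division or subtraction. -/
def Covered {V : Type} (U : Finset V) (k N : ℕ) (𝒮 : Finset V → Prop) : Prop :=
  ∃ 𝒞 : Finset (Finset V), 𝒞.card ≤ N ∧ (∀ C ∈ 𝒞, C ⊆ U ∧ U.card + k * C.card ≤ k * U.card) ∧
    ∀ S, 𝒮 S → ∃ C ∈ 𝒞, S ⊆ C

/-- A system of `r`-tuples of disjoint `y`-subsets `Q i 0, …, Q i (r - 1)` of `U`, one for each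
`i ∈ J`. No vertex lies in the union of more than `D` of the tuples, two of these unions share at
most one vertex, and `J` is large: up to the factor `c` the tuples could fill `U` to degree `D`. -/
structure BlockSys {V ι : Type} (U : Finset V) (r D y c : ℕ) (J : Finset ι)
    (Q : ι → Fin r → Finset V) : Prop where
  sub : ∀ i ∈ J, ∀ j, Q i j ⊆ U
  card : ∀ i ∈ J, ∀ j, (Q i j).card = y
  disj : ∀ i ∈ J, ∀ j j', j ≠ j' → Disjoint (Q i j) (Q i j')
  deg : ∀ u, (J.filter fun i => ∃ j, u ∈ Q i j).card ≤ D
  lin : ∀ i ∈ J, ∀ i' ∈ J, ∀ u v, u ≠ v → (∃ j, u ∈ Q i j) → (∃ j, u ∈ Q i' j) →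
    (∃ j, v ∈ Q i j) → (∃ j, v ∈ Q i' j) → i = i'
  big : U.card * D ≤ c * J.card * y

/-- `S` is a subset of `U` that misses at least one of the blocks in each tuple. Choosing one vertex
from each block of each tuple gives an `r`-uniform hypergraph, of which `S` is an independent set. -/
def Misses {V ι : Type} {r : ℕ} (U : Finset V) (J : Finset ι) (Q : ι → Fin r → Finset V)
    (S : Finset V) : Prop :=
  S ⊆ U ∧ ∀ i ∈ J, ∃ j, Disjoint S (Q i j)

variable {V ι : Type}

theorem double_count (A : Finset V) (J : Finset ι) (R : ι → V → Prop)
    [∀ i u, Decidable (R i u)] :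
    ∑ i ∈ J, (A.filter fun u => R i u).card = ∑ u ∈ A, (J.filter fun i => R i u).card :=
  Finset.sum_card_bipartiteAbove_eq_sum_card_bipartiteBelow R

/-- For `1`-tuples with disjoint blocks, `S` avoids the union of all blocks. -/
theorem covered_base {U : Finset V} {y c k : ℕ} {J : Finset ι} {Q : ι → Fin 1 → Finset V}
    (h : BlockSys U 1 1 y c J Q) (hk : c ≤ k) : Covered U k 1 (Misses U J Q) := by
  set W := U.filter fun u => ∃ i ∈ J, u ∈ Q i 0 with hW
  have hcard : J.card * y ≤ W.card := by
    have h1 := double_count W J (fun i u => u ∈ Q i 0)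
    have h2 : ∑ i ∈ J, (W.filter fun u => u ∈ Q i 0).card = J.card * y := by
      rw [Finset.sum_congr rfl (g := fun _ => y), Finset.sum_const, smul_eq_mul]
      intro i hi
      rw [← h.card i hi 0]
      congr 1
      ext u
      simp only [hW, Finset.mem_filter]
      exact ⟨fun h => h.2, fun hu => ⟨⟨h.sub i hi 0 hu, i, hi, hu⟩, hu⟩⟩
    rw [← h2, h1]
    refine (Finset.sum_le_card_nsmul _ _ 1 fun u _ => ?_).trans (by simp)
    refine le_trans (Finset.card_le_card ?_) (h.deg u)
    intro i
    simp only [Finset.mem_filter]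
    exact fun ⟨a, b⟩ => ⟨a, 0, b⟩
  refine ⟨{U \ W}, by simp, ?_, ?_⟩
  · intro C hC
    rw [Finset.mem_singleton] at hC
    subst hC
    refine ⟨Finset.sdiff_subset, ?_⟩
    have h3 := Finset.card_sdiff_add_card_eq_card
      (Finset.filter_subset (fun u => ∃ i ∈ J, u ∈ Q i 0) U)
    rw [← hW] at h3
    have h4 := h.big
    have h5 : c * (J.card * y) ≤ k * W.card := Nat.mul_le_mul hk hcard
    nlinarith
  · rintro S ⟨hS, hS'⟩
    refine ⟨_, Finset.mem_singleton_self _, ?_⟩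
    intro u hu
    simp only [hW, Finset.mem_sdiff, Finset.mem_filter, not_and, not_exists]
    refine ⟨hS hu, fun _ i hi hui => ?_⟩
    obtain ⟨j, hj⟩ := hS' i hi
    rw [Subsingleton.elim j 0] at hj
    exact Finset.disjoint_left.1 hj hu hui

/-- As long as the tuples `Q'` indexed by `J'` are too few, at least half of the tuples in `J` are
good: they have not been used in `J'`, and each of their last `r` blocks (of size `2 * y`) keeps
`y` unsaturated vertices. A vertex is saturated when its degree in `J'` has reached `D'`; double
counting shows that few vertices are saturated, hence few blocks are mostly saturated. -/
theorem card_good {U : Finset V} {r D D' y c : ℕ} {J J' : Finset ι}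
    {Q : ι → Fin (r + 1) → Finset V} {Q' : ι → Fin r → Finset V} (hr : r ≤ 3) (hD : D' ≤ D)
    (hD' : 0 < D') (hy : 0 < y) (hc : 0 < c)
    (h : BlockSys U (r + 1) D (2 * y) c J Q)
    (hcard : ∀ i ∈ J', ∀ j, (Q' i j).card = y)
    (hfin : ¬ U.card * D' ≤ 16 * c * J'.card * y) :
    J.card ≤ 2 * (J.filter fun i => i ∉ J' ∧ ∀ j : Fin r, y ≤ (Q i j.succ \
      (U.filter fun u => D' ≤ (J'.filter fun i => ∃ j, u ∈ Q' i j).card)).card).card := by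
  set sat := U.filter fun u => D' ≤ (J'.filter fun i => ∃ j, u ∈ Q' i j).card with hsat
  set good := J.filter fun i => i ∉ J' ∧ ∀ j : Fin r, y ≤ (Q i j.succ \ sat).card with hgood
  set bad := J.filter fun i => ∃ j : Fin r, (Q i j.succ \ sat).card < y with hbad
  have hsplit : J.card ≤ good.card + J'.card + bad.card := by
    refine le_trans (Finset.card_le_card (t := (good ∪ J') ∪ bad) ?_)
      ((Finset.card_union_le _ _).trans (Nat.add_le_add_right (Finset.card_union_le _ _) _))
    intro i hi
    simp only [hgood, hbad, Finset.mem_union, Finset.mem_filter]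
    by_cases h1 : i ∈ J'
    · tauto
    · by_cases h2 : ∃ j : Fin r, (Q i j.succ \ sat).card < y
      · tauto
      · left; left
        push Not at h2
        exact ⟨hi, h1, h2⟩
  have hsatc : sat.card * D' ≤ J'.card * (r * y) := by
    calc sat.card * D' ≤ ∑ u ∈ sat, (J'.filter fun i => ∃ j, u ∈ Q' i j).card := by
          rw [← smul_eq_mul]
          exact Finset.card_nsmul_le_sum _ _ _ fun u hu => (Finset.mem_filter.1 hu).2
      _ = ∑ i ∈ J', (sat.filter fun u => ∃ j, u ∈ Q' i j).card :=
          (double_count sat J' (fun i u => ∃ j, u ∈ Q' i j)).symm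
      _ ≤ J'.card * (r * y) := by
          rw [← smul_eq_mul]
          refine Finset.sum_le_card_nsmul _ _ _ fun i hi => ?_
          calc _ ≤ (Finset.univ.biUnion fun j => Q' i j).card := by
                apply Finset.card_le_card
                intro u
                simp
            _ ≤ _ := Finset.card_biUnion_le
            _ = r * y := by simp [hcard i hi]
  have hbadc : bad.card * y ≤ sat.card * D := by
    calc bad.card * y ≤ ∑ i ∈ bad, (sat.filter fun u => ∃ j, u ∈ Q i j).card := by
          rw [← smul_eq_mul]
          refine Finset.card_nsmul_le_sum _ _ _ fun i hi => ?_
          obtain ⟨hi, j, hj⟩ := Finset.mem_filter.1 hi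
          have h1 := Finset.card_inter_add_card_sdiff (Q i j.succ) sat
          have h2 := h.card i hi j.succ
          have h3 : (Q i j.succ ∩ sat).card ≤ (sat.filter fun u => ∃ j, u ∈ Q i j).card := by
            apply Finset.card_le_card
            intro u hu
            rw [Finset.mem_inter] at hu
            exact Finset.mem_filter.2 ⟨hu.2, _, hu.1⟩
          omega
      _ = ∑ u ∈ sat, (bad.filter fun i => ∃ j, u ∈ Q i j).card :=
          double_count sat bad (fun i u => ∃ j, u ∈ Q i j)
      _ ≤ sat.card * D := by
          rw [← smul_eq_mul]
          refine Finset.sum_le_card_nsmul _ _ _ fun u _ => ?_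
          refine le_trans (Finset.card_le_card ?_) (h.deg u)
          exact Finset.filter_subset_filter _ (Finset.filter_subset _ _)
  have hbig := h.big
  push Not at hfin
  -- Everything is compared with `|U| * D`
  have e1 : 16 * c * J'.card * y ≤ U.card * D :=
    hfin.le.trans (Nat.mul_le_mul_left _ hD)
  have e2 : 16 * c * sat.card ≤ 3 * U.card := by
    have : 16 * c * sat.card * D' ≤ 3 * U.card * D' := by
      calc 16 * c * sat.card * D' = 16 * c * (sat.card * D') := by ring
        _ ≤ 16 * c * (J'.card * (3 * y)) := Nat.mul_le_mul_left _ (hsatc.trans (by gcongr))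
        _ = 3 * (16 * c * J'.card * y) := by ring
        _ ≤ 3 * (U.card * D') := by gcongr
        _ = _ := by ring
    exact Nat.le_of_mul_le_mul_right this hD'
  have e3 : 16 * c * (bad.card * y) ≤ 3 * (U.card * D) := by
    calc _ ≤ 16 * c * (sat.card * D) := by gcongr
      _ = (16 * c * sat.card) * D := by ring
      _ ≤ (3 * U.card) * D := by gcongr
      _ = _ := by ring
  have e4 : c * y * (J'.card + bad.card) * 2 ≤ c * y * J.card := by nlinarith
  have e5 : (J'.card + bad.card) * 2 ≤ J.card := by
    have : c * y * ((J'.card + bad.card) * 2) ≤ c * y * J.card := by linarith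
    exact Nat.le_of_mul_le_mul_left this (by positivity)
  omega

/-- Reduction from `(r + 1)`-tuples to `r`-tuples. For an independent set `S` one collects a family
`J'` of tuples whose first block meets `S`, the other blocks being trimmed to `y` vertices of degree
at most `D'`; `S` must miss one of the trimmed blocks of each tuple in `J'`. Let `H` be the set of
vertices lying in the first block of at least `D / (4 * c)` good tuples; it has at least
`|U| / (4 * c)` elements. Either `S` is disjoint from `H` and lies in the small container `U \ H`,
or `S` contains a vertex of `H`, whose good tuples are added to `J'`. After at most `s` vertices the
family is large enough to use the case of `r`-tuples. -/
theorem covered_step {U : Finset V} {r D D' y c k s N : ℕ} {J : Finset ι}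
    {Q : ι → Fin (r + 1) → Finset V} (hr : r ≤ 3) (hD : D' ≤ D)
    (hD' : 0 < D') (hy : 0 < y) (hc : 0 < c) (hk : 4 * c ≤ k) (hN : 1 ≤ N)
    (h : BlockSys U (r + 1) D (2 * y) c J Q)
    (hs : U.card * D' ≤ 4 * s * D * y)
    (ih : ∀ (J' : Finset ι) (Q' : ι → Fin r → Finset V), BlockSys U r D' y (16 * c) J' Q' →
      Covered U k N (Misses U J' Q')) :
    Covered U k ((U.card + 1) ^ s * N) (Misses U J Q) := by
  -- The last hypothesis on `J'` says that `s` further vertices make it large enough.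
  suffices H : ∀ (s : ℕ) (J' : Finset ι) (Q' : ι → Fin r → Finset V), J' ⊆ J →
      (∀ i ∈ J', ∀ j, Q' i j ⊆ Q i j.succ) → (∀ i ∈ J', ∀ j, (Q' i j).card = y) →
      (∀ u, (J'.filter fun i => ∃ j, u ∈ Q' i j).card ≤ D') →
      4 * c * (U.card * D') ≤ 16 * c * y * (4 * c * J'.card + s * D) →
      Covered U k ((U.card + 1) ^ s * N)
        (fun S => Misses U J Q S ∧ ∀ i ∈ J', ¬ Disjoint S (Q i 0)) by
    obtain ⟨𝒞, h1, h2, h3⟩ := H s ∅ (fun _ _ => ∅) (by simp) (by simp) (by simp) (by simp)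
      (by simp only [Finset.card_empty]; nlinarith)
    exact ⟨𝒞, h1, h2, fun S hS => h3 S ⟨hS, by simp⟩⟩
  intro s
  clear hs
  induction s with
  | zero =>
    intro J' Q' hJ hQ hcard hdeg hinv
    have hfin : U.card * D' ≤ 16 * c * J'.card * y := by
      have : 4 * c * (U.card * D') ≤ 4 * c * (16 * c * J'.card * y) := by nlinarith
      exact Nat.le_of_mul_le_mul_left this (by positivity)
    obtain ⟨𝒞, h1, h2, h3⟩ := ih J' Q' ⟨fun i hi j => (hQ i hi j).trans (h.sub i (hJ hi) _), hcard,
      fun i hi j j' hj => (h.disj i (hJ hi) _ _ (by simpa using hj)).mono (hQ i hi j) (hQ i hi j'),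
      hdeg, fun i hi i' hi' u v huv ⟨j, a⟩ ⟨j', b⟩ ⟨j2, a'⟩ ⟨j2', b'⟩ =>
        h.lin i (hJ hi) i' (hJ hi') u v huv ⟨_, hQ i hi _ a⟩ ⟨_, hQ i' hi' _ b⟩ ⟨_, hQ i hi _ a'⟩
          ⟨_, hQ i' hi' _ b'⟩, hfin⟩
    refine ⟨𝒞, by simpa using h1, h2, ?_⟩
    rintro S ⟨⟨hS, hS1⟩, hS2⟩
    refine h3 S ⟨hS, fun i hi => ?_⟩
    obtain ⟨j, hj⟩ := hS1 i (hJ hi)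
    obtain rfl | ⟨j, rfl⟩ := Fin.eq_zero_or_eq_succ j
    · exact absurd hj (hS2 i hi)
    · exact ⟨j, hj.mono_right (hQ i hi j)⟩
  | succ s IH =>
    intro J' Q' hJ hQ hcard hdeg hinv
    by_cases hfin : U.card * D' ≤ 16 * c * J'.card * y
    · obtain ⟨𝒞, h1, h2, h3⟩ := ih J' Q' ⟨fun i hi j => (hQ i hi j).trans (h.sub i (hJ hi) _),
        hcard,
        fun i hi j j' hj =>
          (h.disj i (hJ hi) _ _ (by simpa using hj)).mono (hQ i hi j) (hQ i hi j'),
        hdeg, fun i hi i' hi' u v huv ⟨j, a⟩ ⟨j', b⟩ ⟨j2, a'⟩ ⟨j2', b'⟩ =>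
          h.lin i (hJ hi) i' (hJ hi') u v huv ⟨_, hQ i hi _ a⟩ ⟨_, hQ i' hi' _ b⟩ ⟨_, hQ i hi _ a'⟩
            ⟨_, hQ i' hi' _ b'⟩, hfin⟩
      refine ⟨𝒞, h1.trans (Nat.le_mul_of_pos_left _ (by positivity)), h2, ?_⟩
      rintro S ⟨⟨hS, hS1⟩, hS2⟩
      refine h3 S ⟨hS, fun i hi => ?_⟩
      obtain ⟨j, hj⟩ := hS1 i (hJ hi)
      obtain rfl | ⟨j, rfl⟩ := Fin.eq_zero_or_eq_succ j
      · exact absurd hj (hS2 i hi)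
      · exact ⟨j, hj.mono_right (hQ i hi j)⟩
    -- The vertices in many good first blocks; either `S` avoids them or it contains one of them.
    have hgc := card_good hr hD hD' hy hc h hcard hfin
    set sat := U.filter fun u => D' ≤ (J'.filter fun i => ∃ j, u ∈ Q' i j).card with hsat
    set good := J.filter fun i => i ∉ J' ∧ ∀ j : Fin r, y ≤ (Q i j.succ \ sat).card with hgood
    set g : V → ℕ := fun v => (good.filter fun i => v ∈ Q i 0).card with hg
    set H := U.filter fun v => D ≤ 4 * c * g v with hH
    have hgJ : good ⊆ J := Finset.filter_subset _ _
    have hHU : H ⊆ U := Finset.filter_subset _ _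
    have hgsum : ∑ v ∈ U, g v = good.card * (2 * y) := by
      have h0 : ∑ v ∈ U, g v = ∑ i ∈ good, (U.filter fun v => v ∈ Q i 0).card :=
        (double_count U good (fun i v => v ∈ Q i 0)).symm
      rw [h0, ← smul_eq_mul]
      refine Finset.sum_eq_card_nsmul fun i hi => ?_
      rw [← h.card i (hgJ hi) 0]
      congr 1
      ext u
      simp only [Finset.mem_filter, and_iff_right_iff_imp]
      exact fun hu => h.sub i (hgJ hi) 0 hu
    have hgD : ∀ v, g v ≤ D := fun v => by
      refine le_trans (Finset.card_le_card ?_) (h.deg v)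
      intro i hi
      rw [Finset.mem_filter] at hi ⊢
      exact ⟨hgJ hi.1, 0, hi.2⟩
    have hHc : U.card ≤ 4 * c * H.card := by
      have h1 : ∑ v ∈ U, 4 * c * g v ≤ ∑ v ∈ U, (D + if v ∈ H then 4 * c * D else 0) := by
        refine Finset.sum_le_sum fun v hv => ?_
        by_cases hvH : v ∈ H
        · simp only [hvH, if_true]
          have := Nat.mul_le_mul_left (4 * c) (hgD v)
          omega
        · simp only [hvH, if_false]
          simp only [hH, Finset.mem_filter, not_and, not_le] at hvH
          exact (hvH hv).le
      rw [← Finset.mul_sum, hgsum, Finset.sum_add_distrib, ← Finset.sum_filter,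
        Finset.filter_mem_eq_inter, Finset.inter_eq_right.2 hHU, Finset.sum_const, Finset.sum_const,
        smul_eq_mul, smul_eq_mul] at h1
      have h2 := h.big
      have h2' : c * J.card * (2 * y) ≤ c * (2 * good.card) * (2 * y) := by gcongr
      have h3 : U.card * D ≤ (4 * c * H.card) * D := by linarith
      exact Nat.le_of_mul_le_mul_right h3 (by omega)
    -- The tuples of `good` through `v` have pairwise no further vertex in common, so adding them
    -- raises the degree of an unsaturated vertex by at most one.
    have hstep : ∀ v ∈ H, Covered U k ((U.card + 1) ^ s * N)
        (fun S => Misses U J Q S ∧ (∀ i ∈ J', ¬ Disjoint S (Q i 0)) ∧ v ∈ S) := by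
      intro v hv
      have hvU := hHU hv
      have hch : ∀ i j, ∃ T : Finset V, i ∈ good → T ⊆ Q i (Fin.succ j) \ sat ∧ T.card = y := by
        intro i j
        by_cases hi : i ∈ good
        · obtain ⟨T, hT⟩ := Finset.exists_subset_card_eq ((Finset.mem_filter.1 hi).2.2 j)
          exact ⟨T, fun _ => hT⟩
        · exact ⟨∅, fun h => absurd h hi⟩
      choose T hT using hch
      set new := good.filter fun i => v ∈ Q i 0 with hnew
      have hnJ : ∀ i ∈ new, i ∈ good ∧ i ∉ J' ∧ i ∈ J ∧ v ∈ Q i 0 := fun i hi => by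
        have h1 := Finset.mem_filter.1 hi
        have h2 := Finset.mem_filter.1 h1.1
        exact ⟨h1.1, h2.2.1, h2.1, h1.2⟩
      obtain ⟨𝒞, h1, h2, h3⟩ := IH (J' ∪ new) (fun i j => if i ∈ J' then Q' i j else T i j)
        (Finset.union_subset hJ ((Finset.filter_subset _ _).trans hgJ))
        (by
          intro i hi j
          by_cases hi' : i ∈ J'
          · simpa [hi'] using hQ i hi' j
          · have hi2 : i ∈ new := by simpa [hi'] using hi
            simp only [hi', if_false]
            exact (hT i j (hnJ i hi2).1).1.trans Finset.sdiff_subset)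
        (by
          intro i hi j
          by_cases hi' : i ∈ J'
          · simpa [hi'] using hcard i hi' j
          · have hi2 : i ∈ new := by simpa [hi'] using hi
            simp only [hi', if_false]
            exact (hT i j (hnJ i hi2).1).2)
        (by
          intro u
          rw [Finset.filter_union]
          refine (Finset.card_union_le _ _).trans ?_
          have a1 : (J'.filter fun i => ∃ j, u ∈ (if i ∈ J' then Q' i j else T i j)).card =
              (J'.filter fun i => ∃ j, u ∈ Q' i j).card := by
            congr 1
            refine Finset.filter_congr fun i hi => ?_
            simp [hi]
          rw [a1]
          rcases Finset.eq_empty_or_nonempty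
            (new.filter fun i => ∃ j, u ∈ (if i ∈ J' then Q' i j else T i j)) with he | ⟨i, hi⟩
          · rw [he]; simpa using hdeg u
          · obtain ⟨hi, j, hj⟩ := Finset.mem_filter.1 hi
            obtain ⟨b1, b2, b3, b4⟩ := hnJ i hi
            simp only [b2, if_false] at hj
            have hj' := Finset.mem_sdiff.1 ((hT i j b1).1 hj)
            have hu : (J'.filter fun i => ∃ j, u ∈ Q' i j).card < D' := by
              by_contra hcon
              exact hj'.2 (Finset.mem_filter.2 ⟨h.sub i b3 _ hj'.1, not_lt.1 hcon⟩)
            have huv : u ≠ v := by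
              rintro rfl
              exact Finset.disjoint_left.1 (h.disj i b3 _ _ (Fin.succ_ne_zero j)) hj'.1 b4
            have hone : (new.filter fun i => ∃ j, u ∈ (if i ∈ J' then Q' i j else T i j)).card
                ≤ 1 := by
              rw [Finset.card_le_one]
              intro i₁ hi₁ i₂ hi₂
              obtain ⟨hi₁, j₁, hj₁⟩ := Finset.mem_filter.1 hi₁
              obtain ⟨hi₂, j₂, hj₂⟩ := Finset.mem_filter.1 hi₂
              obtain ⟨c1, c2, c3, c4⟩ := hnJ i₁ hi₁
              obtain ⟨d1, d2, d3, d4⟩ := hnJ i₂ hi₂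
              simp only [c2, if_false] at hj₁
              simp only [d2, if_false] at hj₂
              exact h.lin i₁ c3 i₂ d3 u v huv
                ⟨_, (Finset.mem_sdiff.1 ((hT i₁ j₁ c1).1 hj₁)).1⟩
                ⟨_, (Finset.mem_sdiff.1 ((hT i₂ j₂ d1).1 hj₂)).1⟩ ⟨_, c4⟩ ⟨_, d4⟩
            omega)
        (by
          have hdisj : Disjoint J' new := Finset.disjoint_right.2 fun i hi => (hnJ i hi).2.1
          rw [Finset.card_union_of_disjoint hdisj]
          have hv' : D ≤ 4 * c * new.card := (Finset.mem_filter.1 hv).2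
          refine hinv.trans (Nat.mul_le_mul_left _ ?_)
          nlinarith)
      refine ⟨𝒞, h1, h2, ?_⟩
      rintro S ⟨hS, hS1, hvS⟩
      refine h3 S ⟨hS, fun i hi => ?_⟩
      rcases Finset.mem_union.1 hi with hi | hi
      · exact hS1 i hi
      · exact Finset.not_disjoint_iff.2 ⟨v, hvS, (hnJ i hi).2.2.2⟩
    choose! 𝒞 hC1 hC2 hC3 using hstep
    refine ⟨insert (U \ H) (H.biUnion 𝒞), ?_, ?_, ?_⟩
    · refine (Finset.card_insert_le _ _).trans ?_
      have h1 : (H.biUnion 𝒞).card ≤ U.card * ((U.card + 1) ^ s * N) := by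
        refine (Finset.card_biUnion_le_card_mul _ _ _ hC1).trans ?_
        exact Nat.mul_le_mul_right _ (Finset.card_le_card hHU)
      have h2 : 1 ≤ (U.card + 1) ^ s * N := Nat.mul_pos (by positivity) hN
      calc _ ≤ U.card * ((U.card + 1) ^ s * N) + (U.card + 1) ^ s * N := by omega
        _ = _ := by ring
    · intro C hC
      rcases Finset.mem_insert.1 hC with rfl | hC
      · refine ⟨Finset.sdiff_subset, ?_⟩
        have h3 := Finset.card_sdiff_add_card_eq_card hHU
        have h4 : 4 * c * H.card ≤ k * H.card := Nat.mul_le_mul_right _ hk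
        nlinarith
      · obtain ⟨v, hv, hC⟩ := Finset.mem_biUnion.1 hC
        exact hC2 v hv C hC
    · rintro S ⟨hS, hS2⟩
      by_cases hd : Disjoint S H
      · refine ⟨_, Finset.mem_insert_self _ _, ?_⟩
        exact Finset.subset_sdiff.2 ⟨hS.1, hd⟩
      · obtain ⟨v, hvS, hvH⟩ := Finset.not_disjoint_iff.1 hd
        obtain ⟨C, hC, hSC⟩ := hC3 v hvH S ⟨hS, hS2, hvS⟩
        exact ⟨C, Finset.mem_insert_of_mem (Finset.mem_biUnion.2 ⟨v, hvH, hC⟩), hSC⟩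

/-- Three applications of the reduction, lowering the degree along `3 * e ^ 3, e ^ 2, e, 1`, handle
`4`-tuples at the cost of `3 * s` chosen vertices. -/
theorem covered_four {U : Finset V} {e z c k s : ℕ} {J : Finset ι}
    {Q : ι → Fin 4 → Finset V} (he : 0 < e) (hz : 0 < z) (hc : 0 < c) (hk : 4096 * c ≤ k)
    (h : BlockSys U 4 (3 * e ^ 3) (8 * z) c J Q) (hs : U.card ≤ 4 * s * e * z) :
    Covered U k ((U.card + 1) ^ (3 * s)) (Misses U J Q) := by
  have key : ∀ a b : ℕ, (U.card + 1) ^ s * (U.card + 1) ^ a = (U.card + 1) ^ (s + a) := fun a b =>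
    (pow_add _ _ _).symm
  have h3 : ∀ (J : Finset ι) (Q : ι → Fin 2 → Finset V), BlockSys U 2 e (2 * z) (256 * c) J Q →
      Covered U k ((U.card + 1) ^ s * 1) (Misses U J Q) := by
    intro J Q h
    refine covered_step (by omega) he (D' := 1) (by omega) hz (c := 256 * c) (by omega) (by omega)
      le_rfl h (by linarith) fun J' Q' h' => covered_base h' (by omega)
  have h2 : ∀ (J : Finset ι) (Q : ι → Fin 3 → Finset V),
      BlockSys U 3 (e ^ 2) (2 * (2 * z)) (16 * c) J Q →
      Covered U k ((U.card + 1) ^ s * ((U.card + 1) ^ s * 1)) (Misses U J Q) := by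
    intro J Q h
    refine covered_step (by omega) (D' := e) (by nlinarith) he (by omega) (by omega) (by omega)
      (Nat.mul_pos (by positivity) one_pos) h (by nlinarith) fun J' Q' h' => h3 J' Q' ?_
    rwa [← mul_assoc] at h'
  have h1 : Covered U k ((U.card + 1) ^ s * ((U.card + 1) ^ s * ((U.card + 1) ^ s * 1)))
      (Misses U J Q) := by
    rw [show 8 * z = 2 * (2 * (2 * z)) by ring] at h
    refine covered_step (by omega) (D' := e ^ 2) ?_ (by positivity) (by omega) hc (by omega)
      (Nat.mul_pos (by positivity) (Nat.mul_pos (by positivity) one_pos)) h ?_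
      fun J' Q' h' => h2 J' Q' h'
    · have : e ^ 2 * 1 ≤ e ^ 2 * (3 * e) := Nat.mul_le_mul_left _ (by omega)
      calc _ = e ^ 2 * 1 := by ring
        _ ≤ _ := this
        _ = _ := by ring
    · calc U.card * e ^ 2 ≤ (4 * s * e * z) * e ^ 2 := Nat.mul_le_mul_right _ hs
        _ = 4 * s * e ^ 3 * z * 1 := by ring
        _ ≤ 4 * s * e ^ 3 * z * 12 := Nat.mul_le_mul_left _ (by omega)
        _ = _ := by ring
  convert h1 using 1
  ring

end containers

section final
open scoped Classical

/-! ### A random colouring of the incidences -/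

/-- A Chernoff bound: a uniformly random `f` agrees with `s` on at most an eighth of `E` with
probability at most `(3 / 4) ^ |E|`. The moment used is `E[(1 / 4) ^ agreements] = (5 / 8) ^ |E|`,
and `4 ≤ (6 / 5) ^ 8`. -/
theorem tail_bound {X : Type} [Fintype X] (E : Finset X) (s : X → Bool) :
    ((Finset.univ.filter fun f : X → Bool =>
      8 * (E.filter fun x => f x = s x).card ≤ E.card).card : ℝ) ≤
      2 ^ Fintype.card X * (3 / 4) ^ E.card := by
  have h1 : ∑ f : X → Bool, ((1 : ℝ) / 4) ^ (E.filter fun x => f x = s x).card =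
      2 ^ Fintype.card X * (5 / 8) ^ E.card := by
    have h2 : ∀ f : X → Bool, ((1 : ℝ) / 4) ^ (E.filter fun x => f x = s x).card =
        ∏ x, (if x ∈ E then (if f x = s x then 1 / 4 else 1) else 1) := by
      intro f
      rw [← Finset.prod_filter, Finset.filter_mem_eq_inter, Finset.univ_inter,
        ← Finset.prod_filter, Finset.prod_const]
    simp_rw [h2]
    rw [← Fintype.piFinset_univ, Finset.sum_prod_piFinset Finset.univ
      (fun x b => (if x ∈ E then (if b = s x then (1 : ℝ) / 4 else 1) else 1))]
    have h3 : ∀ x, ∑ b : Bool, (if x ∈ E then (if b = s x then (1 : ℝ) / 4 else 1) else 1) =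
        2 * (if x ∈ E then 5 / 8 else 1) := by
      intro x
      by_cases hx : x ∈ E
      · cases s x <;> simp [hx] <;> norm_num
      · simp [hx]
    simp_rw [h3]
    rw [Finset.prod_mul_distrib, ← Finset.prod_filter, Finset.filter_mem_eq_inter,
      Finset.univ_inter, Finset.prod_const, Finset.prod_const, Finset.card_univ]
  have h4 : ((Finset.univ.filter fun f : X → Bool =>
      8 * (E.filter fun x => f x = s x).card ≤ E.card).card : ℝ) ≤
      ∑ f : X → Bool, (6 / 5) ^ E.card * ((1 : ℝ) / 4) ^ (E.filter fun x => f x = s x).card := by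
    rw [Finset.card_filter, Nat.cast_sum]
    refine Finset.sum_le_sum fun f _ => ?_
    split_ifs with hf
    · set k := (E.filter fun x => f x = s x).card
      have h5 : (4 : ℝ) ^ k ≤ (6 / 5) ^ E.card :=
        calc (4 : ℝ) ^ k ≤ ((6 / 5) ^ 8) ^ k := by gcongr; norm_num
          _ = (6 / 5) ^ (8 * k) := (pow_mul _ _ _).symm
          _ ≤ _ := pow_le_pow_right₀ (by norm_num) hf
      calc ((1 : ℕ) : ℝ) = 4 ^ k * (1 / 4) ^ k := by rw [← mul_pow]; norm_num
        _ ≤ _ := by gcongr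
    · simp only [Nat.cast_zero]; positivity
  refine h4.trans (le_of_eq ?_)
  rw [← Finset.mul_sum, h1, mul_left_comm, ← mul_pow]
  norm_num

/-- Union bound over all large sets of lines `U` and all prescriptions `s` of a colour at each point:
for some 2-colouring of the (line, point) pairs, every such `s` agrees with the colouring on more
than `q * |U| / 8` of the incidences on `U`. -/
theorem exists_coloring {q : ℕ} {V P : Type} [Fintype V] [Fintype P] {I : V → P → Prop}
    (h : UnitalLike q I) (hq0 : 0 < q) (hq : ((7 : ℝ) / 8) ^ q * q ^ 4 ≤ 1) :
    ∃ f : V × P → Bool, ∀ U : Finset V, 256 * q ^ 2 ≤ U.card → ∀ s : P → Bool,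
      q * U.card < 8 * ((U ×ˢ Finset.univ).filter fun x => I x.1 x.2 ∧ f x = s x.2).card := by
  by_contra hcon
  push Not at hcon
  set bad : Finset V × (P → Bool) → Finset (V × P → Bool) := fun w =>
    Finset.univ.filter fun f => 8 * ((((w.1 ×ˢ Finset.univ).filter fun x => I x.1 x.2)).filter
      fun x => f x = w.2 x.2).card ≤ ((w.1 ×ˢ Finset.univ).filter fun x => I x.1 x.2).card with hbad
  have hE : ∀ U : Finset V, q * U.card ≤ ((U ×ˢ Finset.univ).filter fun x : V × P => I x.1 x.2).card
      := by
    intro U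
    rw [Finset.card_filter, Finset.sum_product, mul_comm, ← smul_eq_mul]
    refine Finset.card_nsmul_le_sum _ _ _ fun v _ => ?_
    rw [← Finset.card_filter]
    exact h.deg_ge v
  set Us : Finset (Finset V) := Finset.univ.filter fun U => 256 * q ^ 2 ≤ U.card with hUs
  have hcov : (Finset.univ : Finset (V × P → Bool)) ⊆ (Us ×ˢ Finset.univ).biUnion bad := by
    intro f _
    obtain ⟨U, hU, s, hs⟩ := hcon f
    refine Finset.mem_biUnion.2 ⟨(U, s), by simp [hUs, hU], ?_⟩
    simp only [hbad, Finset.mem_filter, Finset.mem_univ, true_and, Finset.filter_filter]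
    exact hs.trans (hE U)
  have hb : ∀ w ∈ Us ×ˢ (Finset.univ : Finset (P → Bool)), ((bad w).card : ℝ) ≤
      2 ^ Fintype.card (V × P) * ((7 / 8) ^ (2 * (q * w.1.card))) := by
    intro w _
    have ht := tail_bound ((w.1 ×ˢ Finset.univ).filter fun x : V × P => I x.1 x.2)
      (fun x => w.2 x.2)
    have ht' : ((bad w).card : ℝ) ≤ 2 ^ Fintype.card (V × P) *
        (3 / 4) ^ ((w.1 ×ˢ Finset.univ).filter fun x : V × P => I x.1 x.2).card := by
      simp only [hbad]
      convert ht
    refine ht'.trans (mul_le_mul_of_nonneg_left ?_ (by positivity))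
    calc ((3 : ℝ) / 4) ^ ((w.1 ×ˢ Finset.univ).filter fun x : V × P => I x.1 x.2).card
        ≤ (3 / 4) ^ (q * w.1.card) := pow_le_pow_of_le_one (by norm_num) (by norm_num) (hE _)
      _ ≤ ((7 / 8) ^ 2) ^ (q * w.1.card) := by gcongr; norm_num
      _ = _ := (pow_mul _ _ _).symm
  have h1 : ((2 : ℝ) ^ Fintype.card (V × P)) ≤ ∑ w ∈ Us ×ˢ (Finset.univ : Finset (P → Bool)),
      2 ^ Fintype.card (V × P) * ((7 / 8) ^ (2 * (q * w.1.card))) := by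
    calc ((2 : ℝ) ^ Fintype.card (V × P)) = ((Finset.univ : Finset (V × P → Bool)).card : ℝ) := by
          rw [Finset.card_univ, Fintype.card_fun, Fintype.card_bool]; push_cast; rfl
      _ ≤ (((Us ×ˢ (Finset.univ : Finset (P → Bool))).biUnion bad).card : ℝ) := by
          exact_mod_cast Finset.card_le_card hcov
      _ ≤ ∑ w ∈ Us ×ˢ (Finset.univ : Finset (P → Bool)), ((bad w).card : ℝ) := by
          exact_mod_cast Finset.card_biUnion_le
      _ ≤ _ := Finset.sum_le_sum hb
  rw [← Finset.mul_sum] at h1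
  have h2 : (1 : ℝ) ≤ ∑ w ∈ Us ×ˢ (Finset.univ : Finset (P → Bool)),
      ((7 / 8) ^ (2 * (q * w.1.card))) := by
    have : (0 : ℝ) < 2 ^ Fintype.card (V × P) := by positivity
    by_contra hlt
    push Not at hlt
    nlinarith
  rw [Finset.sum_product] at h2
  simp only [Finset.sum_const, Finset.card_univ, Fintype.card_fun, Fintype.card_bool,
    nsmul_eq_mul] at h2
  have h3 : ∀ U ∈ Us, ((2 ^ Fintype.card P : ℕ) : ℝ) * (7 / 8) ^ (2 * (q * U.card)) ≤
      1 / 4 * ((7 / 8) ^ q) ^ U.card := by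
    intro U hU
    have hU' := (Finset.mem_filter.1 hU).2
    have h4 : 256 * q ^ 3 ≤ q * U.card := by
      calc _ = q * (256 * q ^ 2) := by ring
        _ ≤ _ := by gcongr
    have h5 : (2 : ℝ) ^ (Fintype.card P) * (7 / 8) ^ (q * U.card) ≤ 1 / 4 := by
      calc (2 : ℝ) ^ (Fintype.card P) * (7 / 8) ^ (q * U.card)
          ≤ 2 ^ (q ^ 3) * (7 / 8) ^ (256 * q ^ 3) := by
            gcongr ?_ * ?_
            · exact pow_le_pow_right₀ (by norm_num) h.card_points
            · exact pow_le_pow_of_le_one (by norm_num) (by norm_num) h4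
        _ = (2 * (7 / 8) ^ 256) ^ (q ^ 3) := by rw [mul_pow, pow_mul]
        _ ≤ (1 / 4) ^ (q ^ 3) := by gcongr; norm_num
        _ ≤ (1 / 4) ^ 1 := pow_le_pow_of_le_one (by norm_num) (by norm_num)
            (Nat.one_le_pow _ _ hq0)
        _ = 1 / 4 := by norm_num
    push_cast
    rw [two_mul, pow_add, ← mul_assoc, ← pow_mul]
    gcongr
  have h6 : ∑ U ∈ Us, (1 / 4 : ℝ) * ((7 / 8) ^ q) ^ U.card ≤
      1 / 4 * ((7 / 8) ^ q + 1) ^ Fintype.card V := by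
    rw [← Finset.mul_sum]
    gcongr
    rw [← Fintype.sum_pow_mul_eq_add_pow]
    simp only [one_pow, mul_one]
    exact Finset.sum_le_sum_of_subset_of_nonneg (Finset.subset_univ _) fun _ _ _ => by positivity
  have h7 : ((7 / 8 : ℝ) ^ q + 1) ^ Fintype.card V ≤ Real.exp 1 := by
    calc ((7 / 8 : ℝ) ^ q + 1) ^ Fintype.card V ≤ (Real.exp ((7 / 8) ^ q)) ^ Fintype.card V := by
          gcongr; exact Real.add_one_le_exp _
      _ = Real.exp (Fintype.card V * (7 / 8) ^ q) := (Real.exp_nat_mul _ _).symm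
      _ ≤ Real.exp 1 := by
          gcongr
          refine le_trans ?_ hq
          rw [mul_comm]
          gcongr
          exact_mod_cast h.card_lines_le
  have h8 := h2.trans ((Finset.sum_le_sum h3).trans h6)
  have h9 := Real.exp_one_lt_d9
  linarith

/-! ### Containers for sets of lines without a 4-cycle -/

theorem exists_pieces {V : Type} (w h : ℕ) (A : Finset V) (hA : h * w ≤ A.card) :
    ∃ R : ℕ → Finset V, (∀ k < h, R k ⊆ A ∧ (R k).card = w) ∧
      ∀ k < h, ∀ k' < h, k ≠ k' → Disjoint (R k) (R k') := by
  induction h generalizing A with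
  | zero => exact ⟨fun _ => ∅, by simp, by simp⟩
  | succ h ih =>
    rw [Nat.succ_mul] at hA
    obtain ⟨B, hBA, hB⟩ := Finset.exists_subset_card_eq (show w ≤ A.card by omega)
    obtain ⟨R, hR, hd⟩ := ih (A \ B) (by rw [Finset.card_sdiff_of_subset hBA]; omega)
    have hBR : ∀ k < h, Disjoint B (R k) := fun k hk =>
      Finset.disjoint_sdiff.mono_right (hR k hk).1
    refine ⟨fun k => Nat.casesOn k B R, ?_, ?_⟩
    · rintro (_ | k) hk
      · exact ⟨hBA, hB⟩
      · exact ⟨(hR k (by omega)).1.trans Finset.sdiff_subset, (hR k (by omega)).2⟩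
    · rintro (_ | k) hk (_ | k') hk' hne
      · exact absurd rfl hne
      · exact hBR k' (by omega)
      · exact (hBR k (by omega)).symm
      · exact hd k (by omega) k' (by omega) (by omega)

/-- No point carries two lines of `S` coloured `true` and two lines of `S` coloured `false`;
such four lines would form a 4-cycle in the coloured intersection graph. -/
def NoC4 {V P : Type} (I : V → P → Prop) (f : V × P → Bool) (S : Finset V) : Prop :=
  ∀ p, ∀ a ∈ S, ∀ a' ∈ S, ∀ b ∈ S, ∀ b' ∈ S, a ≠ a' → b ≠ b' → I a p → I a' p → I b p → I b' p →
    f (a, p) = true → f (a', p) = true → f (b, p) = false → f (b', p) = false → False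

/-- One container step for sets of lines without monochromatic pairs of both colours at a point.
With `z` of order `|U| / q ^ 2`, the lines of `U` of either colour at a point are cut into pieces
of size `8 * z`, and two pieces of each colour form a `4`-tuple of blocks. The colouring property,
applied to the minority colour at each point, shows that there are enough tuples. -/
theorem covered_noC4 {q e : ℕ} {V P : Type} [Fintype V] [Fintype P] {I : V → P → Prop}
    {f : V × P → Bool} (h : UnitalLike q I) (he : 0 < e) (hq : e ^ 3 < q) (hq2 : q ≤ 2 * e ^ 3)
    {U : Finset V} (hU : 256 * q ^ 2 ≤ U.card)
    (hf : ∀ s : P → Bool,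
      q * U.card < 8 * ((U ×ˢ Finset.univ).filter fun x => I x.1 x.2 ∧ f x = s x.2).card) :
    Covered U 393216 ((U.card + 1) ^ (3 * (512 * e ^ 5))) (fun S => S ⊆ U ∧ NoC4 I f S) := by
  have he3 : 0 < e ^ 3 := by positivity
  have hq0 : 0 < 256 * q ^ 2 := by have : 0 < q := by omega
                                   positivity
  obtain ⟨z, hzdef⟩ : ∃ z, z = U.card / (256 * q ^ 2) := ⟨_, rfl⟩
  have hz : 0 < z := hzdef ▸ Nat.div_pos hU hq0
  have hz1 : 256 * q ^ 2 * z ≤ U.card := hzdef ▸ Nat.mul_div_le _ _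
  have hz2 : U.card ≤ 512 * q ^ 2 * z := by
    have h1 : U.card < 256 * q ^ 2 * (z + 1) := hzdef ▸ Nat.lt_mul_div_succ _ hq0
    nlinarith
  let A : P → Bool → Finset V := fun p c => U.filter fun v => I v p ∧ f (v, p) = c
  let m : P → ℕ := fun p => min (A p true).card (A p false).card / (16 * z)
  have hmA : ∀ p c, 2 * m p * (8 * z) ≤ (A p c).card := by
    intro p c
    have h1 : min (A p true).card (A p false).card / (16 * z) * (16 * z) ≤
      min (A p true).card (A p false).card := Nat.div_mul_le_self _ _
    have h2 : min (A p true).card (A p false).card ≤ (A p c).card := by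
      cases c
      · exact min_le_right _ _
      · exact min_le_left _ _
    calc 2 * m p * (8 * z) = min (A p true).card (A p false).card / (16 * z) * (16 * z) := by
          simp only [m]; ring
      _ ≤ _ := h1.trans h2
  choose R hR hRd using fun p c => exists_pieces (8 * z) (2 * m p) (A p c) (hmA p c)
  let J : Finset (Σ _ : P, ℕ) := Finset.univ.sigma fun p => Finset.range (m p)
  let Q : (Σ _ : P, ℕ) → Fin 4 → Finset V := fun i j =>
    R i.1 (decide (j.val < 2)) (2 * i.2 + j.val % 2)
  have hidx : ∀ i ∈ J, ∀ j : Fin 4, 2 * i.2 + j.val % 2 < 2 * m i.1 := by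
    intro i hi j
    have := (Finset.mem_sigma.1 hi).2
    rw [Finset.mem_range] at this
    omega
  have hQA : ∀ i ∈ J, ∀ j, Q i j ⊆ A i.1 (decide (j.val < 2)) := fun i hi j =>
    (hR _ _ _ (hidx i hi j)).1
  have hmem : ∀ i ∈ J, ∀ j, ∀ u ∈ Q i j,
      u ∈ U ∧ I u i.1 ∧ f (u, i.1) = decide (j.val < 2) := fun i hi j u hu =>
    Finset.mem_filter.1 (hQA i hi j hu)
  have hkey : ∀ p k k' j j' u, (⟨p, k⟩ : Σ _ : P, ℕ) ∈ J → (⟨p, k'⟩ : Σ _ : P, ℕ) ∈ J →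
      u ∈ Q ⟨p, k⟩ j → u ∈ Q ⟨p, k'⟩ j' → j = j' ∧ k = k' := by
    intro p k k' j j' u hk hk' hu hu'
    have h1 := (hmem _ hk _ _ hu).2.2
    have h2 := (hmem _ hk' _ _ hu').2.2
    have h3 : decide (j.val < 2) = decide (j'.val < 2) := h1.symm.trans h2
    have h4 : 2 * k + j.val % 2 = 2 * k' + j'.val % 2 := by
      by_contra hne
      have h5 := hRd p (decide (j.val < 2)) _ (hidx _ hk j) _ (hidx _ hk' j') hne
      simp only [Q] at hu hu'
      rw [← h3] at hu'
      exact Finset.disjoint_left.1 h5 hu hu'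
    rw [decide_eq_decide] at h3
    have := j.isLt
    have := j'.isLt
    refine ⟨Fin.ext ?_, ?_⟩ <;> omega
  have hsame : ∀ i ∈ J, ∀ i' ∈ J, i.1 = i'.1 → ∀ u, (∃ j, u ∈ Q i j) → (∃ j, u ∈ Q i' j) →
      i = i' := by
    rintro ⟨p, k⟩ hi ⟨p', k'⟩ hi' hp u ⟨j, hj⟩ ⟨j', hj'⟩
    obtain rfl : p = p' := hp
    rw [(hkey p k k' j j' u hi hi' hj hj').2]
  have hblock : BlockSys U 4 (3 * e ^ 3) (8 * z) 96 J Q := by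
    refine ⟨fun i hi j u hu => (hmem i hi j u hu).1, fun i hi j => (hR _ _ _ (hidx i hi j)).2,
      ?_, ?_, ?_, ?_⟩
    · rintro ⟨p, k⟩ hi j j' hne
      exact Finset.disjoint_left.2 fun u hu hu' => hne (hkey p k k j j' u hi hi hu hu').1
    · intro u
      refine le_trans ?_ ((h.deg_le u).trans (by omega))
      refine Finset.card_le_card_of_injOn Sigma.fst ?_ ?_
      · intro i hi
        obtain ⟨hi, j, hj⟩ := Finset.mem_filter.1 hi
        exact Finset.mem_filter.2 ⟨Finset.mem_univ _, (hmem i hi j u hj).2.1⟩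
      · intro i hi i' hi' hii
        obtain ⟨hi, hj⟩ := Finset.mem_filter.1 hi
        obtain ⟨hi', hj'⟩ := Finset.mem_filter.1 hi'
        exact hsame i hi i' hi' hii u hj hj'
    · rintro i hi i' hi' u v huv hu hu' ⟨j, hv⟩ ⟨j', hv'⟩
      refine hsame i hi i' hi' ?_ u hu hu'
      obtain ⟨j₁, hu⟩ := hu
      obtain ⟨j₂, hu'⟩ := hu'
      exact h.linear huv (hmem i hi _ _ hu).2.1 (hmem i hi _ _ hv).2.1 (hmem i' hi' _ _ hu').2.1
        (hmem i' hi' _ _ hv').2.1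
    · -- The colour class at `p` in the minority gives the number of blocks at `p`.
      have h1 := hf fun p => decide ((A p true).card ≤ (A p false).card)
      have h2 : ((U ×ˢ Finset.univ).filter fun x : V × P => I x.1 x.2 ∧
          f x = decide ((A x.2 true).card ≤ (A x.2 false).card)).card =
          ∑ p, min (A p true).card (A p false).card := by
        rw [Finset.card_filter, Finset.sum_product_right]
        refine Finset.sum_congr rfl fun p _ => ?_
        rw [← Finset.card_filter]
        by_cases hc : (A p true).card ≤ (A p false).card
        · rw [min_eq_left hc]; simp only [hc, A, decide_true]
        · rw [min_eq_right (not_le.1 hc).le]; simp only [hc, A, decide_false]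
      have h3 : ∑ p, min (A p true).card (A p false).card ≤ 16 * z * (J.card + q ^ 3) := by
        have : J.card = ∑ p, m p := by simp [J]
        calc ∑ p, min (A p true).card (A p false).card ≤ ∑ p, 16 * z * (m p + 1) :=
              Finset.sum_le_sum fun p _ => (Nat.lt_mul_div_succ _ (by omega)).le
          _ = 16 * z * (J.card + Fintype.card P) := by
              rw [← Finset.mul_sum, Finset.sum_add_distrib, this]; simp
          _ ≤ _ := by gcongr; exact h.card_points
      rw [h2] at h1
      have h4 : q * (256 * q ^ 2 * z) ≤ q * U.card := Nat.mul_le_mul_left _ hz1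
      have h5 : q * U.card ≤ 256 * z * J.card := by nlinarith
      calc U.card * (3 * e ^ 3) ≤ U.card * (3 * q) := by gcongr
        _ = 3 * (q * U.card) := by ring
        _ ≤ 3 * (256 * z * J.card) := by gcongr
        _ = _ := by ring
  have hs : U.card ≤ 4 * (512 * e ^ 5) * e * z :=
    calc U.card ≤ 512 * q ^ 2 * z := hz2
      _ ≤ 512 * (2 * e ^ 3) ^ 2 * z := by gcongr
      _ = _ := by ring
  obtain ⟨𝒞, hc1, hc2, hc3⟩ := covered_four (k := 393216) he hz (by norm_num) (by norm_num) hblock hs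
  refine ⟨𝒞, hc1, hc2, fun S ⟨hSU, hS⟩ => hc3 S ⟨hSU, fun i hi => ?_⟩⟩
  by_contra hcon
  push Not at hcon
  have hx : ∀ j, ∃ x, x ∈ S ∧ x ∈ Q i j := fun j => Finset.not_disjoint_iff.1 (hcon j)
  choose x hxS hxQ using hx
  have hne : ∀ j j', j ≠ j' → x j ≠ x j' := fun j j' hj he =>
    Finset.disjoint_left.1 (hblock.disj i hi j j' hj) (hxQ j) (he ▸ hxQ j')
  have hI := fun j => (hmem i hi j _ (hxQ j)).2
  exact hS i.1 _ (hxS 0) _ (hxS 1) _ (hxS 2) _ (hxS 3) (hne 0 1 (by decide)) (hne 2 3 (by decide))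
    (hI 0).1 (hI 1).1 (hI 2).1 (hI 3).1 (hI 0).2 (hI 1).2 (hI 2).2 (hI 3).2

/-- Iterating a container step `ρ` times on all containers with more than `M` elements. -/
theorem covered_rounds {V : Type} [Fintype V] {κ T M : ℕ} {𝒮 : Finset V → Prop}
    (hcov : ∀ U : Finset V, M ≤ U.card →
      Covered U (κ + 1) ((U.card + 1) ^ T) (fun S => S ⊆ U ∧ 𝒮 S)) (ρ : ℕ) :
    ∃ 𝒞 : Finset (Finset V), 𝒞.card ≤ ((Fintype.card V + 1) ^ T) ^ ρ ∧
      (∀ C ∈ 𝒞, C.card ≤ M ∨ (κ + 1) ^ ρ * C.card ≤ κ ^ ρ * Fintype.card V) ∧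
      ∀ S, 𝒮 S → ∃ C ∈ 𝒞, S ⊆ C := by
  induction ρ with
  | zero =>
    refine ⟨{Finset.univ}, by simp, ?_, fun S _ => ⟨_, Finset.mem_singleton_self _,
      Finset.subset_univ _⟩⟩
    intro C hC
    rw [Finset.mem_singleton.1 hC]
    right
    simp
  | succ ρ ih =>
    obtain ⟨𝒞, h1, h2, h3⟩ := ih
    have hstep : ∀ U : Finset V, ∃ 𝒟 : Finset (Finset V), 𝒟.card ≤ (Fintype.card V + 1) ^ T ∧
        (∀ D ∈ 𝒟, D.card ≤ M ∨ (κ + 1) * D.card ≤ κ * U.card) ∧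
        ∀ S, S ⊆ U → 𝒮 S → ∃ D ∈ 𝒟, S ⊆ D := by
      intro U
      by_cases hU : M ≤ U.card
      · obtain ⟨𝒟, d1, d2, d3⟩ := hcov U hU
        refine ⟨𝒟, d1.trans (Nat.pow_le_pow_left (by gcongr; exact Finset.card_le_univ _) _),
          fun D hD => Or.inr ?_, fun S hS hS' => d3 S ⟨hS, hS'⟩⟩
        have := (d2 D hD).2
        linarith
      · refine ⟨{U}, ?_, ?_, fun S hS _ => ⟨U, Finset.mem_singleton_self _, hS⟩⟩
        · rw [Finset.card_singleton]
          exact Nat.one_le_pow _ _ (Nat.succ_pos _)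
        · intro D hD
          rw [Finset.mem_singleton.1 hD]
          left
          omega
    choose 𝒟 d1 d2 d3 using hstep
    refine ⟨𝒞.biUnion 𝒟, ?_, ?_, ?_⟩
    · calc _ ≤ 𝒞.card * (Fintype.card V + 1) ^ T :=
            Finset.card_biUnion_le_card_mul _ _ _ fun U _ => d1 U
        _ ≤ _ := by rw [pow_succ _ ρ]; gcongr
    · intro D hD
      obtain ⟨U, hU, hDU⟩ := Finset.mem_biUnion.1 hD
      rcases d2 U D hDU with h | h
      · exact Or.inl h
      · rcases h2 U hU with h' | h'
        · left
          by_contra hlt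
          push Not at hlt
          nlinarith
        · right
          calc (κ + 1) ^ (ρ + 1) * D.card = (κ + 1) ^ ρ * ((κ + 1) * D.card) := by ring
            _ ≤ (κ + 1) ^ ρ * (κ * U.card) := by gcongr
            _ = κ * ((κ + 1) ^ ρ * U.card) := by ring
            _ ≤ κ * (κ ^ ρ * Fintype.card V) := by gcongr
            _ = _ := by ring
    · intro S hS
      obtain ⟨U, hU, hSU⟩ := h3 S hS
      obtain ⟨D, hD, hSD⟩ := d3 U S hSU hS
      exact ⟨D, Finset.mem_biUnion.2 ⟨U, hU, hD⟩, hSD⟩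

/-- Bernoulli's inequality for `(1 + 1 / κ) ^ κ`. -/
theorem two_mul_pow_le (κ : ℕ) (hκ : 0 < κ) : 2 * κ ^ κ ≤ (κ + 1) ^ κ := by
  have hκ' : (0 : ℝ) < κ := by exact_mod_cast hκ
  have h1 : (2 : ℝ) ≤ (1 + 1 / κ) ^ κ := by
    have := one_add_mul_le_pow (a := (1 : ℝ) / κ) (by linarith [show (0 : ℝ) < 1 / κ by positivity]) κ
    rw [mul_one_div_cancel hκ'.ne'] at this
    linarith
  have h2 : (2 : ℝ) * κ ^ κ ≤ (κ + 1) ^ κ := by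
    calc (2 : ℝ) * κ ^ κ ≤ (1 + 1 / κ) ^ κ * κ ^ κ := by gcongr
      _ = (κ + 1) ^ κ := by
        rw [← mul_pow]; congr 1; field_simp
  exact_mod_cast h2

/-- After `393215 * L` rounds the bound `(1 - 1 / 393216) ^ ρ * |V|` is below one, so all containers
have at most `256 * q ^ 2` elements. The exponent is `3 * 512 * 393215 * e ^ 5 * L ^ 2`. -/
theorem containers {q e L : ℕ} {V P : Type} [Fintype V] [Fintype P] {I : V → P → Prop}
    {f : V × P → Bool} (h : UnitalLike q I) (he : 0 < e) (hq : e ^ 3 < q) (hq2 : q ≤ 2 * e ^ 3)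
    (hL : Fintype.card V < 2 ^ L)
    (hf : ∀ U : Finset V, 256 * q ^ 2 ≤ U.card → ∀ s : P → Bool,
      q * U.card < 8 * ((U ×ˢ Finset.univ).filter fun x => I x.1 x.2 ∧ f x = s x.2).card) :
    ∃ 𝒞 : Finset (Finset V), 𝒞.card ≤ 2 ^ (603978240 * e ^ 5 * L ^ 2) ∧
      (∀ C ∈ 𝒞, C.card ≤ 256 * q ^ 2) ∧ ∀ S, NoC4 I f S → ∃ C ∈ 𝒞, S ⊆ C := by
  obtain ⟨𝒞, h1, h2, h3⟩ := covered_rounds (κ := 393215) (𝒮 := NoC4 I f)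
    (fun U hU => covered_noC4 h he hq hq2 hU (hf U hU)) (393215 * L)
  refine ⟨𝒞, h1.trans ?_, ?_, h3⟩
  · calc _ ≤ ((2 ^ L) ^ (3 * (512 * e ^ 5))) ^ (393215 * L) := by gcongr; omega
      _ = 2 ^ (603978240 * e ^ 5 * L ^ 2) := by
        rw [← pow_mul, ← pow_mul]; congr 1; ring
  · intro C hC
    rcases h2 C hC with h | h
    · exact h
    · have h4 : 2 ^ L * 393215 ^ (393215 * L) ≤ (393215 + 1) ^ (393215 * L) := by
        have h5 : ∀ κ : ℕ, 0 < κ → 2 ^ L * κ ^ (κ * L) ≤ (κ + 1) ^ (κ * L) := by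
          intro κ hκ
          rw [pow_mul, pow_mul, ← mul_pow]
          exact Nat.pow_le_pow_left (two_mul_pow_le _ hκ) _
        exact h5 _ (by norm_num)
      have h5 : C.card = 0 := by
        by_contra hne
        have h6 : 0 < C.card := Nat.pos_of_ne_zero hne
        have h7 : 0 < 393215 ^ (393215 * L) := Nat.pow_pos (by norm_num)
        generalize 393215 ^ (393215 * L) = a at *
        generalize (393215 + 1) ^ (393215 * L) = b at *
        nlinarith
      omega

/-! ### The graph and the random map -/

/-- A random map `φ : Fin n → V` sends no `t`-set into a container: the expected number of failures
is at most `choose n t * |𝒞| * (M / |V|) ^ t < 1`. -/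
theorem exists_map {V : Type} [Fintype V] {n t M : ℕ} {𝒞 : Finset (Finset V)}
    (hC : ∀ C ∈ 𝒞, C.card ≤ M) (h1 : 𝒞.card < 2 ^ t) (ht : 0 < t)
    (h2 : 6 * n * M ≤ t * Fintype.card V) (hV : 0 < Fintype.card V) :
    ∃ φ : Fin n → V, ∀ S : Finset (Fin n), S.card = t → ∀ C ∈ 𝒞, ∃ i ∈ S, φ i ∉ C := by
  by_contra hcon
  push Not at hcon
  set v := Fintype.card V with hv
  let bad : Finset (Fin n) × Finset V → Finset (Fin n → V) := fun w =>
    Fintype.piFinset fun i => if i ∈ w.1 then w.2 else Finset.univ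
  let W := Finset.powersetCard t (Finset.univ : Finset (Fin n)) ×ˢ 𝒞
  have hcov : (Finset.univ : Finset (Fin n → V)) ⊆ W.biUnion bad := by
    intro φ _
    obtain ⟨S, hS, C, hCC, hSC⟩ := hcon φ
    refine Finset.mem_biUnion.2 ⟨(S, C), Finset.mem_product.2 ⟨Finset.mem_powersetCard_univ.2 hS,
      hCC⟩, Fintype.mem_piFinset.2 fun i => ?_⟩
    by_cases hi : i ∈ S
    · simp [hi, hSC i hi]
    · simp [hi]
  obtain ⟨S₀, hS₀, -⟩ := hcon fun _ => (Fintype.card_pos_iff.1 hV).some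
  have htn : t ≤ n := by
    rw [← hS₀]; exact (Finset.card_le_univ _).trans_eq (Fintype.card_fin n)
  have hbad : ∀ w ∈ W, (bad w).card ≤ M ^ t * v ^ (n - t) := by
    rintro ⟨S, C⟩ hw
    obtain ⟨hS, hCC⟩ := Finset.mem_product.1 hw
    have hS : S.card = t := Finset.mem_powersetCard_univ.1 hS
    have hCC : C ∈ 𝒞 := hCC
    have h3 : ∀ i, (if i ∈ S then C else Finset.univ).card = if i ∈ S then C.card else v := by
      intro i; split_ifs <;> simp [hv]
    have h4 : (Finset.univ.filter fun i => i ∉ S).card = n - t := by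
      have : (Finset.univ.filter fun i => i ∉ S) = Sᶜ := by ext; simp
      rw [this, Finset.card_compl, hS, Fintype.card_fin]
    simp only [bad, Fintype.card_piFinset, h3]
    rw [Finset.prod_ite, Finset.prod_const, Finset.prod_const, h4, Finset.filter_mem_eq_inter,
      Finset.univ_inter, hS]
    gcongr
    exact hC C hCC
  have h5 : v ^ n ≤ n.choose t * 𝒞.card * (M ^ t * v ^ (n - t)) := by
    calc v ^ n = (Finset.univ : Finset (Fin n → V)).card := by simp [hv]
      _ ≤ (W.biUnion bad).card := Finset.card_le_card hcov
      _ ≤ W.card * (M ^ t * v ^ (n - t)) := Finset.card_biUnion_le_card_mul _ _ _ hbad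
      _ = _ := by simp [W]
  have h6 : v ^ t ≤ n.choose t * 𝒞.card * M ^ t := by
    have : v ^ t * v ^ (n - t) ≤ n.choose t * 𝒞.card * M ^ t * v ^ (n - t) := by
      rw [← pow_add, Nat.add_sub_cancel' htn, mul_assoc _ (M ^ t)]; exact h5
    exact Nat.le_of_mul_le_mul_right this (Nat.pow_pos hV)
  -- The estimate `choose n t ≤ n ^ t / t! ≤ (3 * n / t) ^ t`.
  have ht' : (0 : ℝ) < t := by exact_mod_cast ht
  have h7 : (n.choose t : ℝ) * M ^ t ≤ ((v : ℝ) / 2) ^ t := by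
    have h8 : (t : ℝ) ^ t / t.factorial ≤ 3 ^ t := by
      refine (Real.pow_div_factorial_le_exp _ ht'.le t).trans ?_
      rw [← Real.exp_one_pow]
      gcongr
      linarith [Real.exp_one_lt_d9]
    have hnM : 3 * (n : ℝ) * M ≤ t * (v / 2) := by
      have : (6 : ℝ) * n * M ≤ t * v := by exact_mod_cast h2
      linarith
    have hf : (0 : ℝ) < t.factorial := by positivity
    have h9 : (t : ℝ) ^ t * (n.choose t * M ^ t) ≤ t ^ t * ((v : ℝ) / 2) ^ t :=
      calc (t : ℝ) ^ t * (n.choose t * M ^ t) ≤ t ^ t * ((n : ℝ) ^ t / t.factorial * M ^ t) := by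
            gcongr; exact Nat.choose_le_pow_div t n
        _ = t ^ t / t.factorial * (n * M) ^ t := by rw [mul_pow]; ring
        _ ≤ 3 ^ t * (n * M) ^ t := by gcongr
        _ = (3 * n * M) ^ t := by rw [← mul_pow]; ring
        _ ≤ (t * (v / 2)) ^ t := by gcongr
        _ = _ := mul_pow _ _ _
    exact le_of_mul_le_mul_left h9 (by positivity)
  have h10 : (v : ℝ) ^ t ≤ n.choose t * 𝒞.card * M ^ t := by exact_mod_cast h6
  have h11 : (𝒞.card : ℝ) < 2 ^ t := by exact_mod_cast h1
  have hv2 : (0 : ℝ) < (v / 2) ^ t := by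
    have : (0 : ℝ) < v := by exact_mod_cast hV
    positivity
  have h12 : (v : ℝ) ^ t < v ^ t :=
    calc (v : ℝ) ^ t ≤ 𝒞.card * (n.choose t * M ^ t) := by linarith
      _ ≤ 𝒞.card * (v / 2) ^ t := by gcongr
      _ < 2 ^ t * (v / 2) ^ t := by gcongr
      _ = v ^ t := by rw [← mul_pow]; congr 1; ring
  exact lt_irrefl _ h12

/-- The graph on the lines in which two lines are adjacent when they meet at a point where the
colouring `f` gives them different colours. -/
def colGraph {V P : Type} (I : V → P → Prop) (f : V × P → Bool) : SimpleGraph V where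
  Adj v w := ∃ p, I v p ∧ I w p ∧ f (v, p) ≠ f (w, p)
  symm := ⟨fun _ _ ⟨p, hv, hw, h⟩ => ⟨p, hw, hv, h.symm⟩⟩
  loopless := ⟨fun _ ⟨_, _, _, h⟩ => h rfl⟩

/-- Two colours cannot separate three concurrent lines. -/
theorem no_concurrent_triangle {q : ℕ} {V P : Type} [Fintype V] [Fintype P] {I : V → P → Prop}
    {f : V × P → Bool} (h : UnitalLike q I) {a b c : V} {p : P} (hab : (colGraph I f).Adj a b)
    (hac : (colGraph I f).Adj a c) (hbc : (colGraph I f).Adj b c) (ha : I a p) (hb : I b p)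
    (hc : I c p) : False := by
  have hcol : ∀ {x y}, (colGraph I f).Adj x y → I x p → I y p → f (x, p) ≠ f (y, p) := by
    intro x y hxy hx hy
    have hne := hxy.ne
    obtain ⟨p', hx', hy', hf⟩ := hxy
    rwa [h.linear hne hx hy hx' hy']
  have h1 := hcol hab ha hb
  have h2 := hcol hac ha hc
  have h3 := hcol hbc hb hc
  revert h1 h2 h3
  cases f (a, p) <;> cases f (b, p) <;> cases f (c, p) <;> simp

/-- The four lines of a `K₄` would meet in six distinct points, against `UnitalLike.onan`. -/
theorem colGraph_K4_free {q : ℕ} {V P : Type} [Fintype V] [Fintype P] {I : V → P → Prop}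
    {f : V × P → Bool} (h : UnitalLike q I) (x : Fin 4 → V)
    (hx : ∀ i j, i ≠ j → (colGraph I f).Adj (x i) (x j)) : False := by
  have tri := fun i j k p (hij : i ≠ j) (hik : i ≠ k) (hjk : j ≠ k) =>
    no_concurrent_triangle (p := p) h (hx i j hij) (hx i k hik) (hx j k hjk)
  obtain ⟨P, hP0, hP1, -⟩ := hx 0 1 (by decide)
  obtain ⟨Q, hQ0, hQ2, -⟩ := hx 0 2 (by decide)
  obtain ⟨S, hS1, hS2, -⟩ := hx 1 2 (by decide)
  obtain ⟨R₁, hR10, hR13, -⟩ := hx 0 3 (by decide)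
  obtain ⟨R₂, hR21, hR23, -⟩ := hx 1 3 (by decide)
  obtain ⟨R₃, hR32, hR33, -⟩ := hx 2 3 (by decide)
  exact h.onan hP0 hP1 hQ0 hQ2 hS1 hS2 hR10 hR13 hR21 hR23 hR32 hR33
    (tri 0 1 3 P (by decide) (by decide) (by decide) hP0 hP1)
    (tri 0 2 3 Q (by decide) (by decide) (by decide) hQ0 hQ2)
    (tri 1 2 3 S (by decide) (by decide) (by decide) hS1 hS2)
    (fun hS0 => tri 0 1 2 S (by decide) (by decide) (by decide) hS0 hS1 hS2)
    (fun hPQ => tri 0 1 2 P (by decide) (by decide) (by decide) hP0 hP1 (hPQ ▸ hQ2))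

/-- Two `true` and two `false` lines through a point span a 4-cycle `a b a' b'`, also in the
pullback along `φ`. -/
theorem noC4_of_free {V P : Type} {I : V → P → Prop} {f : V × P → Bool} {n : ℕ} {φ : Fin n → V}
    {S : Finset (Fin n)} (hS : ¬ ContainsCopy (SimpleGraph.cycleGraph 4)
      (((colGraph I f).comap φ).induce (S : Set (Fin n)))) : NoC4 I f (S.image φ) := by
  intro p a ha a' ha' b hb b' hb' haa hbb hIa hIa' hIb hIb' hfa hfa' hfb hfb'
  obtain ⟨i, hi, rfl⟩ := Finset.mem_image.1 ha
  obtain ⟨i', hi', rfl⟩ := Finset.mem_image.1 ha'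
  obtain ⟨j, hj, rfl⟩ := Finset.mem_image.1 hb
  obtain ⟨j', hj', rfl⟩ := Finset.mem_image.1 hb'
  have hii : i ≠ i' := fun h => haa (h ▸ rfl)
  have hjj : j ≠ j' := fun h => hbb (h ▸ rfl)
  have hne : ∀ k l, f (φ k, p) = true → f (φ l, p) = false → k ≠ l := by
    rintro k _ h1 h2 rfl
    rw [h1] at h2
    cases h2
  have h1 := hne _ _ hfa hfb
  have h2 := hne _ _ hfa hfb'
  have h3 := hne _ _ hfa' hfb
  have h4 := hne _ _ hfa' hfb'
  have hadj : ∀ k l, f (φ k, p) = true → f (φ l, p) = false → I (φ k) p → I (φ l) p →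
      (colGraph I f).Adj (φ k) (φ l) := fun k l hk hl hIk hIl => ⟨p, hIk, hIl, by simp [hk, hl]⟩
  have a1 := hadj _ _ hfa hfb hIa hIb
  have a2 := hadj _ _ hfa hfb' hIa hIb'
  have a3 := hadj _ _ hfa' hfb hIa' hIb
  have a4 := hadj _ _ hfa' hfb' hIa' hIb'
  refine hS ⟨![⟨i, hi⟩, ⟨j, hj⟩, ⟨i', hi'⟩, ⟨j', hj'⟩], ?_, ?_⟩
  · intro x y hxy
    fin_cases x <;> fin_cases y <;> simp_all
  · intro x y hxy
    have hpar : ∀ x y : Fin 4, x - y = 1 ∨ y - x = 1 → (x.val + y.val) % 2 = 1 := by decide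
    have hxy := hpar x y (SimpleGraph.cycleGraph_adj.1 hxy)
    fin_cases x <;> fin_cases y <;> first | exact absurd hxy (by decide) | skip
    exacts [a1, a2, a1.symm, a3.symm, a3, a4, a2.symm, a4.symm]

/-- The bound in terms of `e` (about `n ^ (1 / 11)`), with a prime `q` of order `e ^ 3` and
`2 ^ L` exceeding the number of lines. -/
theorem minFIndep_le : ∃ K : ℕ, ∀ n e q L : ℕ, 0 < e → q.Prime → e ^ 3 < q → q ≤ 2 * e ^ 3 →
    n ≤ e ^ 11 → q ^ 4 < 2 ^ L → ((7 : ℝ) / 8) ^ q * q ^ 4 ≤ 1 →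
    minFIndep (SimpleGraph.cycleGraph 4) (⊤ : SimpleGraph (Fin 4)) n ≤
      K * e ^ 5 * L ^ 2 + 1 := by
  refine ⟨603978240, fun n e q L he hq hq1 hq2 hn hL hq8 => ?_⟩
  -- The constant is `3 * 512 * 393215`, from the exponent in `containers`.
  obtain ⟨V, P, _, _, I, hI⟩ := exists_unitalLike hq
  obtain ⟨f, hf⟩ := exists_coloring hI hq.pos hq8
  obtain ⟨𝒞, h1, h2, h3⟩ := containers hI he hq1 hq2 (hI.card_lines_le.trans_lt hL) hf
  have hL1 : 1 ≤ L := by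
    rcases Nat.eq_zero_or_pos L with rfl | h
    · have : 0 < q ^ 4 := Nat.pow_pos hq.pos
      omega
    · exact h
  obtain ⟨t, ht⟩ : ∃ t, t = 603978240 * e ^ 5 * L ^ 2 + 1 := ⟨_, rfl⟩
  have hte : 3072 * e ^ 5 ≤ t := by
    have : 603978240 * e ^ 5 * 1 ≤ 603978240 * e ^ 5 * L ^ 2 :=
      Nat.mul_le_mul_left _ (Nat.one_le_pow _ _ hL1)
    omega
  have hbig : 6 * n * (256 * q ^ 2) ≤ t * Fintype.card V := by
    have h4 : (e ^ 3) ^ 2 ≤ q ^ 2 := Nat.pow_le_pow_left hq1.le _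
    have h5 : 2 * (6 * n * (256 * q ^ 2)) ≤ 2 * (t * Fintype.card V) :=
      calc 2 * (6 * n * (256 * q ^ 2)) ≤ 2 * (6 * e ^ 11 * (256 * q ^ 2)) := by gcongr
        _ = 3072 * e ^ 5 * (e ^ 3) ^ 2 * q ^ 2 := by ring
        _ ≤ t * q ^ 2 * q ^ 2 := by gcongr
        _ = t * q ^ 4 := by ring
        _ ≤ t * (2 * Fintype.card V) := by gcongr; exact hI.card_lines_ge
        _ = _ := by ring
    omega
  have hV : 0 < Fintype.card V := by
    have := hI.card_lines_ge
    have : 0 < q ^ 4 := Nat.pow_pos hq.pos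
    omega
  obtain ⟨φ, hφ⟩ := exists_map h2 (t := t) (n := n)
    (h1.trans_lt (Nat.pow_lt_pow_right (by norm_num) (by omega))) (by omega) hbig hV
  rw [← ht]
  have hmem : fIndepNum (SimpleGraph.cycleGraph 4) ((colGraph I f).comap φ) ∈
      {k | ∃ G : SimpleGraph (Fin n), ¬ ContainsCopy (⊤ : SimpleGraph (Fin 4)) G ∧
        fIndepNum (SimpleGraph.cycleGraph 4) G = k} := by
    refine ⟨_, ?_, rfl⟩
    rintro ⟨g, -, hg⟩
    exact colGraph_K4_free hI (fun i => φ (g i)) fun i j hij => hg hij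
  refine (Nat.sInf_le hmem).trans (csSup_le' ?_)
  rintro k ⟨S, rfl, hS⟩
  by_contra hlt
  push Not at hlt
  obtain ⟨T, hTS, hT⟩ := Finset.exists_subset_card_eq hlt.le
  have hN : NoC4 I f (T.image φ) := by
    have := noC4_of_free hS
    intro p a ha a' ha' b hb b' hb'
    have hsub := Finset.image_subset_image (f := φ) hTS
    exact this p a (hsub ha) a' (hsub ha') b (hsub hb) b' (hsub hb')
  obtain ⟨C, hC, hTC⟩ := h3 _ hN
  obtain ⟨i, hi, hiC⟩ := hφ T hT C hC
  exact hiC (hTC (Finset.mem_image_of_mem φ hi))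

theorem eventually_small : ∃ N₀ : ℕ, ∀ q : ℕ, N₀ ≤ q → ((7 : ℝ) / 8) ^ q * q ^ 4 ≤ 1 := by
  have h := tendsto_pow_const_mul_const_pow_of_abs_lt_one 4 (r := (7 : ℝ) / 8)
    (by rw [abs_of_pos] <;> norm_num)
  obtain ⟨N₀, hN⟩ := Filter.eventually_atTop.1 (h.eventually (eventually_le_nhds one_pos))
  exact ⟨N₀, fun q hq => by rw [mul_comm]; exact hN q hq⟩

end final

/-! ### Choice of parameters -/

theorem stmt7 :
    ∃ (C : ℝ) (N : ℕ), 0 < C ∧ ∀ n : ℕ, n > N →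
      (minFIndep (SimpleGraph.cycleGraph 4) (⊤ : SimpleGraph (Fin 4)) n : ℝ) ≤
        C * (n : ℝ) ^ ((5 : ℝ) / 11) * Real.log n ^ 3 := by
  obtain ⟨N₀, hN₀⟩ := eventually_small
  obtain ⟨K, hK⟩ := minFIndep_le
  refine ⟨K * 32 * 1024 + 1, N₀ ^ 11 + 3, by positivity, fun n hn => ?_⟩
  have hn3 : (3 : ℝ) ≤ n := by exact_mod_cast (show 3 ≤ n by omega)
  have hn0 : (0 : ℝ) ≤ n := by linarith
  -- Parameters: `e = ⌈n ^ (1 / 11)⌉` and a prime `q` between `e ^ 3` and `2 * e ^ 3`.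
  obtain ⟨x, hx⟩ : ∃ x, x = (n : ℝ) ^ ((1 : ℝ) / 11) := ⟨_, rfl⟩
  have hx11 : x ^ 11 = n := by
    rw [hx, ← Real.rpow_natCast, ← Real.rpow_mul hn0]; norm_num
  have hx5 : x ^ 5 = (n : ℝ) ^ ((5 : ℝ) / 11) := by
    rw [hx, ← Real.rpow_natCast, ← Real.rpow_mul hn0]; norm_num
  have hx1 : 1 ≤ x := hx ▸ Real.one_le_rpow (by linarith) (by norm_num)
  have hx0 : 0 ≤ x := by linarith
  obtain ⟨e, he⟩ : ∃ e, e = ⌈x⌉₊ := ⟨_, rfl⟩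
  have hxe : x ≤ e := he ▸ Nat.le_ceil x
  have hex : (e : ℝ) ≤ 2 * x := by
    have := Nat.ceil_lt_add_one hx0
    rw [← he] at this
    linarith
  have he0 : 0 < e := by
    have : (0 : ℝ) < e := by linarith
    exact_mod_cast this
  have hne : n ≤ e ^ 11 := by
    have : (n : ℝ) ≤ (e : ℝ) ^ 11 := by rw [← hx11]; gcongr
    exact_mod_cast this
  obtain ⟨q, hq, hq1, hq2⟩ := Nat.exists_prime_lt_and_le_two_mul (e ^ 3) (by positivity)
  have hq8 : ((7 : ℝ) / 8) ^ q * q ^ 4 ≤ 1 := by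
    apply hN₀
    have h1 : N₀ ≤ e := by
      by_contra hlt
      push Not at hlt
      have : e ^ 11 ≤ N₀ ^ 11 := Nat.pow_le_pow_left hlt.le _
      omega
    have h2 : e ≤ e ^ 3 := Nat.le_self_pow (by norm_num) e
    omega
  have hL : q ^ 4 < 2 ^ (2 * Nat.log 2 n + 28) := by
    have h1 : e ^ 11 ≤ 2 ^ 11 * n := by
      have : (e : ℝ) ^ 11 ≤ 2 ^ 11 * n := by rw [← hx11, ← mul_pow]; gcongr
      exact_mod_cast this
    have h2 : n < 2 ^ (Nat.log 2 n + 1) := Nat.lt_pow_succ_log_self (by norm_num) n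
    calc q ^ 4 ≤ (2 * e ^ 3) ^ 4 := by gcongr
      _ = 2 ^ 4 * e ^ 12 := by ring
      _ ≤ 2 ^ 4 * e ^ 22 := by gcongr; omega
      _ = 2 ^ 4 * (e ^ 11) ^ 2 := by ring
      _ ≤ 2 ^ 4 * (2 ^ 11 * n) ^ 2 := by gcongr
      _ < 2 ^ 4 * (2 ^ 11 * 2 ^ (Nat.log 2 n + 1)) ^ 2 := by gcongr
      _ = _ := by ring
  have hlog1 : 1 ≤ Real.log n := by
    rw [Real.le_log_iff_exp_le (by linarith)]
    linarith [Real.exp_one_lt_d9]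
  have hlog2 : (Nat.log 2 n : ℝ) ≤ 2 * Real.log n := by
    have h1 : (2 : ℝ) ^ Nat.log 2 n ≤ n := by exact_mod_cast Nat.pow_log_le_self 2 (by omega)
    have h2 := Real.log_le_log (by positivity) h1
    rw [Real.log_pow] at h2
    have h3 : 1 / 2 ≤ Real.log 2 := by linarith [Real.log_two_gt_d9]
    have h4 := mul_le_mul_of_nonneg_left h3 (Nat.cast_nonneg (α := ℝ) (Nat.log 2 n))
    linarith
  have hmain := hK n e q _ he0 hq hq1 hq2 hne hL hq8
  have hlog3 : Real.log n ^ 2 ≤ Real.log n ^ 3 := pow_le_pow_right₀ hlog1 (by norm_num)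
  rw [← hx5]
  generalize minFIndep (SimpleGraph.cycleGraph 4) (⊤ : SimpleGraph (Fin 4)) n = m at hmain ⊢
  generalize Nat.log 2 n = l at hmain hlog2
  have hmain' : (m : ℝ) ≤ K * (e : ℝ) ^ 5 * (2 * (l : ℝ) + 28) ^ 2 + 1 := by exact_mod_cast hmain
  -- The hypotheses with large numerical powers are dropped, since `gcongr` would unfold them.
  have hl : 2 * (l : ℝ) + 28 ≤ 32 * Real.log n := by linarith
  clear hL hq8 hne hn hq1 hq2 hmain hK hN₀
  calc (m : ℝ) ≤ K * (e : ℝ) ^ 5 * (2 * (l : ℝ) + 28) ^ 2 + 1 := hmain'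
    _ ≤ K * (2 * x) ^ 5 * (32 * Real.log n) ^ 2 + 1 := by gcongr
    _ = K * 32 * 1024 * x ^ 5 * Real.log n ^ 2 + 1 := by ring
    _ ≤ K * 32 * 1024 * x ^ 5 * Real.log n ^ 3 + x ^ 5 * Real.log n ^ 3 := by
        gcongr
        exact one_le_mul_of_one_le_of_one_le (one_le_pow₀ hx1) (one_le_pow₀ hlog1)
    _ = _ := by ring
end
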